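/- arXiv:2212.01273 — 2 statements merged into one kernel-verified Lean document; each statement's English description precedes it below -/
import Mathlib

section
/- Let g be a finite-dimensional perfect complex Lie algebra with Z(g) = 0, with Levi decomposition g = sl2(C) ⋉ h (the Levi subalgebra is isomorphic to sl2(C)), whose radical h decomposes into 4 simple sl2(C)-modules V_n, V_m, V_p, V_k satisfying the convention, with Z(h) = V_k. If dim_C g < 25, then g is not sympathetic. -/
namespace Symp

variable (g : Type*) [LieRing g] [LieAlgebra ℂ g]

/-- A derivation of `g` is inner if it is given by the adjoint action of some element. -/
def IsInnerDer {g : Type*} [LieRing g] [LieAlgebra ℂ g] (D : LieDerivation ℂ g g) : Prop :=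
  ∃ x : g, ∀ y : g, D y = ⁅x, y⁆

/-- `g` is perfect: `[g,g] = g`. -/
def IsPerfectLie : Prop :=
  ⁅(⊤ : LieIdeal ℂ g), (⊤ : LieIdeal ℂ g)⁆ = ⊤

/-- A sympathetic Lie algebra: trivial centre, perfect, all derivations inner. -/
def IsSympathetic : Prop :=
  LieAlgebra.center ℂ g = ⊥ ∧ IsPerfectLie g ∧
    ∀ D : LieDerivation ℂ g g, IsInnerDer D

/-- `s` is a simple Levi subalgebra of `g`: it is a simple Lie algebra and a vector-space
complement to the radical. -/
def IsSimpleLevi (s : LieSubalgebra ℂ g) : Prop :=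
  LieAlgebra.IsSimple ℂ s ∧
    IsCompl s.toSubmodule (LieAlgebra.radical ℂ g).toSubmodule

/-- `s` is a Levi subalgebra of `g` isomorphic to `sl₂(ℂ)`. -/
def IsSl2Levi (s : LieSubalgebra ℂ g) : Prop :=
  Nonempty (s ≃ₗ⁅ℂ⁆ LieAlgebra.SpecialLinear.sl (Fin 2) ℂ) ∧
    IsCompl s.toSubmodule (LieAlgebra.radical ℂ g).toSubmodule

/-- The subspace spanned by all brackets `⁅x, y⁆` with `x ∈ A`, `y ∈ B`. -/
def lieSpan2 (A B : Submodule ℂ g) : Submodule ℂ g :=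
  Submodule.span ℂ {z : g | ∃ x ∈ A, ∃ y ∈ B, z = ⁅x, y⁆}

/-- A subspace of `g` invariant under the bracket action of the subalgebra `s`. -/
def Invariant (s : LieSubalgebra ℂ g) (W : Submodule ℂ g) : Prop :=
  ∀ x ∈ s, ∀ w ∈ W, ⁅x, w⁆ ∈ W

/-- `V` is an irreducible `s`-submodule of `g`. -/
def IsIrreducibleSMod (s : LieSubalgebra ℂ g) (V : Submodule ℂ g) : Prop :=
  V ≠ ⊥ ∧ Invariant g s V ∧
    ∀ W : Submodule ℂ g, W ≤ V → Invariant g s W → W = ⊥ ∨ W = V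

/-- The family `V` is a decomposition of the radical of `g` into irreducible `s`-modules. -/
def IsDecomp (s : LieSubalgebra ℂ g) {k : ℕ} (V : Fin k → Submodule ℂ g) : Prop :=
  (∀ i, IsIrreducibleSMod g s (V i)) ∧ iSupIndep V ∧
    (⨆ i, V i) = (LieAlgebra.radical ℂ g).toSubmodule

/-- The convention: any nonzero bracket of two of the modules equals one of them,
for a unique index. -/
def Convention {k : ℕ} (V : Fin k → Submodule ℂ g) : Prop :=
  ∀ i j, lieSpan2 g (V i) (V j) ≠ ⊥ → ∃! q, lieSpan2 g (V i) (V j) = V q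

/-- The centre `Z(h)` of the radical `h = Rad(g)`, as a subspace of `g`. -/
def centerRad : Submodule ℂ g where
  carrier := {x | x ∈ LieAlgebra.radical ℂ g ∧ ∀ y ∈ LieAlgebra.radical ℂ g, ⁅x, y⁆ = 0}
  add_mem' := by
    rintro a b ⟨ha, ha'⟩ ⟨hb, hb'⟩
    exact ⟨add_mem ha hb, fun y hy => by rw [add_lie, ha' y hy, hb' y hy, add_zero]⟩
  zero_mem' := ⟨zero_mem _, fun y _ => zero_lie y⟩
  smul_mem' := by
    rintro c a ⟨ha, ha'⟩
    exact ⟨SMulMemClass.smul_mem c ha, fun y hy => by rw [smul_lie, ha' y hy, smul_zero]⟩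

/-- The derived subalgebra `[h,h]` of the radical `h = Rad(g)`, as a subspace of `g`. -/
def derivedRad : Submodule ℂ g :=
  lieSpan2 g (LieAlgebra.radical ℂ g).toSubmodule (LieAlgebra.radical ℂ g).toSubmodule

end Symp

/-!
Perfectness makes the radical `h = ⨁ V i` act nilpotently, so the relations `[V i, V j] = V q` form
a finite table, filtered by the lower central series. Scaling each `V i` by a natural number that is
additive along the table gives a derivation. If it is inner, it is the adjoint action of an element
of `h`, hence nilpotent, hence zero. When all derivations are inner the table therefore carries no
nonzero additive weight, and only three shapes of tables on four summands remain.

In each of them every nonzero bracket is, up to a scalar, the transvectant `V_n × V_m → V_p` of some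
order `r`, with `n + m = p + 2 * r` and `r` odd for a bracket of a summand with itself. The Jacobi
identity evaluated on weight vectors constrains the orders further. An equivariant map from
a summand outside `[h, h]` to the centre of `h` also extends to a derivation, and its being inner
excludes that the summand and the centre have the same nonzero weight unless the remaining summand
is trivial. For `dim g < 25` the weights add up to at most `17`, and none are left.
-/

namespace Symp

open Module

/-! ### Strings and transvectants for `sl₂` -/

section Strings

variable {K L M N P : Type*} [Field K] [LieRing L]
  [AddCommGroup M] [Module K M] [LieRingModule L M]
  [AddCommGroup N] [Module K N] [LieRingModule L N]
  [AddCommGroup P] [Module K P] [LieRingModule L P]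
  {h e f : L} {n m p : ℕ} {v : ℕ → M}

variable (K) in
/-- The standard basis `v i = f ^ i v₀` of the irreducible representation of highest weight `n` of
an `sl₂`-triple `h, e, f`, extended by zero to all `i > n`. -/
structure IsSl2String (h e f : L) (n : ℕ) (v : ℕ → M) : Prop where
  ne_zero : ∀ i ≤ n, v i ≠ 0
  eq_zero : ∀ i, n < i → v i = 0
  lie_h : ∀ i, ⁅h, v i⁆ = ((n : K) - 2 * i) • v i
  lie_e_zero : ⁅e, v 0⁆ = 0
  lie_e_succ : ∀ i, ⁅e, v (i + 1)⁆ = (((i : K) + 1) * ((n : K) - i)) • v i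
  lie_f : ∀ i, ⁅f, v i⁆ = v (i + 1)

theorem IsSl2String.span_range_eq (hv : IsSl2String K h e f n v) :
    Submodule.span K (Set.range v) =
      Submodule.span K (Set.range fun i : Fin (n + 1) ↦ v i) := by
  refine le_antisymm (Submodule.span_le.2 ?_) (Submodule.span_mono ?_)
  · rintro _ ⟨i, rfl⟩
    obtain hi | hi := le_or_gt i n
    · exact Submodule.subset_span ⟨⟨i, Nat.lt_succ_of_le hi⟩, rfl⟩
    · rw [hv.eq_zero i hi]
      exact zero_mem _
  · rintro _ ⟨i, rfl⟩
    exact ⟨i, rfl⟩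

theorem IsSl2String.map (hv : IsSl2String K h e f n v) {φ : M →ₗ⁅K,L⁆ N}
    (hφ : Function.Injective φ) : IsSl2String K h e f n fun i ↦ φ (v i) where
  ne_zero i hi := (map_ne_zero_iff φ hφ).2 (hv.ne_zero i hi)
  eq_zero i hi := by rw [hv.eq_zero i hi, map_zero]
  lie_h i := by rw [← LieModuleHom.map_lie, hv.lie_h, map_smul]
  lie_e_zero := by rw [← LieModuleHom.map_lie, hv.lie_e_zero, map_zero]
  lie_e_succ i := by rw [← LieModuleHom.map_lie, hv.lie_e_succ, map_smul]
  lie_f i := by rw [← LieModuleHom.map_lie, hv.lie_f]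

section

variable [CharZero K] [LieAlgebra K L] [LieModule K L M]

theorem IsSl2String.of_hasPrimitiveVectorWith [IsNoetherian K M] {t : IsSl2Triple h e f} {x : M}
    (hx : t.HasPrimitiveVectorWith x (n : K)) :
    IsSl2String K h e f n fun i ↦ (LieModule.toEnd K L M f ^ i) x where
  ne_zero _ hi := hx.pow_toEnd_f_ne_zero_of_eq_nat rfl hi
  eq_zero i hi := by
    obtain ⟨j, rfl⟩ := Nat.exists_eq_add_of_le hi
    rw [add_comm, pow_add, Module.End.mul_apply]
    exact (congrArg _ (hx.pow_toEnd_f_eq_zero_of_eq_nat rfl)).trans (map_zero _)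
  lie_h := hx.lie_h_pow_toEnd_f
  lie_e_zero := hx.lie_e
  lie_e_succ := hx.lie_e_pow_succ_toEnd_f
  lie_f := hx.lie_f_pow_toEnd_f

namespace IsSl2String

theorem linearIndependent (hv : IsSl2String K h e f n v) :
    LinearIndependent K fun i : Fin (n + 1) ↦ v i := by
  refine End.eigenvectors_linearIndependent' (LieModule.toEnd K L M h)
    (fun i : Fin (n + 1) ↦ (n : K) - 2 * (i : ℕ)) (fun i j hij ↦ ?_) _ fun i ↦ ?_
  · simpa [Fin.val_inj] using hij
  · exact End.hasEigenvector_iff.2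
      ⟨End.mem_eigenspace_iff.2 (hv.lie_h i), hv.ne_zero i (Nat.le_of_lt_succ i.2)⟩

theorem finrank_span (hv : IsSl2String K h e f n v) :
    finrank K (Submodule.span K (Set.range v)) = n + 1 := by
  rw [hv.span_range_eq, finrank_span_eq_card hv.linearIndependent, Fintype.card_fin]

theorem exists_eq_smul_of_lie_h_eq_smul (hv : IsSl2String K h e f n v) {w : M} {μ : K}
    (hw : w ∈ Submodule.span K (Set.range v)) (hμ : ⁅h, w⁆ = μ • w) (hw0 : w ≠ 0) :
    ∃ i ≤ n, μ = (n : K) - 2 * i ∧ ∃ a : K, w = a • v i := by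
  rw [hv.span_range_eq, Submodule.mem_span_range_iff_exists_fun] at hw
  obtain ⟨a, rfl⟩ := hw
  have hzero : ∑ i : Fin (n + 1), (a i * ((n : K) - 2 * (i : ℕ) - μ)) • v i = 0 := by
    rw [← sub_eq_zero.2 hμ, lie_sum, Finset.smul_sum, ← Finset.sum_sub_distrib]
    refine Finset.sum_congr rfl fun i _ ↦ ?_
    rw [lie_smul, hv.lie_h, smul_smul, smul_smul, ← sub_smul]
    congr 1
    ring
  have hcoeff := Fintype.linearIndependent_iff.1 hv.linearIndependent _ hzero
  obtain ⟨i, hi⟩ : ∃ i, a i ≠ 0 := by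
    by_contra! ha
    simp [ha] at hw0
  have hμi : (n : K) - 2 * (i : ℕ) = μ :=
    sub_eq_zero.1 ((mul_eq_zero.1 (hcoeff i)).resolve_left hi)
  refine ⟨i, Nat.le_of_lt_succ i.2, hμi.symm, a i, Finset.sum_eq_single i (fun j _ hji ↦ ?_) ?_⟩
  · have haj : a j = 0 := (mul_eq_zero.1 (hcoeff j)).resolve_right fun hj ↦ hji.symm <| by
      simpa [← hμi, sub_eq_zero, Fin.val_inj] using hj
    rw [haj, zero_smul]
  · simp

end IsSl2String

end

/-- The ratio between the coefficients of `u t` and `u 0` in the pairings `x₀ · y_{r+t}` and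
`x₀ · y_r` of the `r`-th transvectant `V_n × V_m → V_p`; see `IsTransvectant`. -/
def transvectantCoeff (r m p t : ℕ) : ℚ :=
  (r + t).choose t * (m - r).choose t / p.choose t

theorem transvectantCoeff_zero (r m p : ℕ) : transvectantCoeff r m p 0 = 1 := by
  simp [transvectantCoeff]

theorem transvectantCoeff_pos {r m p t : ℕ} (hm : t ≤ m - r) (hp : t ≤ p) :
    0 < transvectantCoeff r m p t := by
  have h₁ := Nat.choose_pos (Nat.le_add_left t r)
  have h₂ := Nat.choose_pos hm
  have h₃ := Nat.choose_pos hp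
  unfold transvectantCoeff
  positivity

theorem transvectantCoeff_succ {r m p t : ℕ} (hm : r + t ≤ m) (hp : t < p) :
    (t + 1) * (p - t) * transvectantCoeff r m p (t + 1) =
      (r + t + 1) * (m - r - t) * transvectantCoeff r m p t := by
  have ht : (t + 1 : ℚ) ≠ 0 := by positivity
  have hpt : (p - t : ℚ) ≠ 0 := sub_ne_zero.2 (by exact_mod_cast hp.ne')
  have hchoose : (p.choose t : ℚ) ≠ 0 := by exact_mod_cast (Nat.choose_pos hp.le).ne'
  have h₁ : ((r + (t + 1)).choose (t + 1) : ℚ) = (r + t).choose t * (r + t + 1) / (t + 1) := by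
    rw [eq_div_iff ht, mul_comm ((r + t).choose t : ℚ)]
    exact_mod_cast (Nat.add_one_mul_choose_eq (r + t) t).symm
  have h₂ : ((m - r).choose (t + 1) : ℚ) = (m - r).choose t * (m - r - t) / (t + 1) := by
    rw [eq_div_iff ht, ← Nat.cast_sub (by omega), ← Nat.cast_sub (by omega)]
    exact_mod_cast Nat.choose_succ_right_eq (m - r) t
  have h₃ : (p.choose (t + 1) : ℚ) = p.choose t * (p - t) / (t + 1) := by
    rw [eq_div_iff ht, ← Nat.cast_sub hp.le]
    exact_mod_cast Nat.choose_succ_right_eq p t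
  rw [transvectantCoeff, transvectantCoeff, h₁, h₂, h₃]
  field_simp

variable (L) in
/-- Equivariance of a bilinear pairing of representations of `L`, without forming tensor products
or internal homs. -/
def IsEquivariant (B : M →ₗ[K] N →ₗ[K] P) : Prop :=
  ∀ (a : L) (x : M) (y : N), ⁅a, B x y⁆ = B ⁅a, x⁆ y + B x ⁅a, y⁆

namespace IsEquivariant

variable {B : M →ₗ[K] N →ₗ[K] P} {x : ℕ → M} {y : ℕ → N} {u : ℕ → P}
  (hB : IsEquivariant L B)
  (hx : IsSl2String K h e f n x) (hy : IsSl2String K h e f m y) (hu : IsSl2String K h e f p u)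
  (hmem : ∀ i j, B (x i) (y j) ∈ Submodule.span K (Set.range u))

include hB hx hy

theorem apply_succ_left (i j : ℕ) :
    B (x (i + 1)) (y j) = ⁅f, B (x i) (y j)⁆ - B (x i) (y (j + 1)) := by
  rw [hB, hx.lie_f, hy.lie_f, add_sub_cancel_right]

theorem lie_h_apply_zero (j : ℕ) :
    ⁅h, B (x 0) (y j)⁆ = ((n : K) + m - 2 * j) • B (x 0) (y j) := by
  rw [hB, hx.lie_h, hy.lie_h, map_smul, LinearMap.smul_apply, map_smul, ← add_smul]
  congr 1
  push_cast
  ring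

theorem lie_e_apply_zero_succ (j : ℕ) :
    ⁅e, B (x 0) (y (j + 1))⁆ = (((j : K) + 1) * (m - j)) • B (x 0) (y j) := by
  rw [hB, hx.lie_e_zero, hy.lie_e_succ, map_zero, LinearMap.zero_apply, zero_add, map_smul]

theorem exists_apply_zero_ne_zero (hne : ∃ i j, B (x i) (y j) ≠ 0) :
    ∃ j, B (x 0) (y j) ≠ 0 := by
  by_contra! hzero
  have hall : ∀ i j, B (x i) (y j) = 0 := by
    intro i
    induction i with
    | zero => exact hzero
    | succ i ih =>
      intro j
      rw [hB.apply_succ_left hx hy, ih, ih, lie_zero, sub_zero]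
  obtain ⟨i, j, hij⟩ := hne
  exact hij (hall i j)

variable [CharZero K] [LieAlgebra K L] [LieModule K L P]
include hu hmem

theorem exists_apply_zero_eq_smul {j : ℕ} (hj : B (x 0) (y j) ≠ 0) :
    ∃ i ≤ p, n + m + 2 * i = p + 2 * j ∧ ∃ a : K, B (x 0) (y j) = a • u i := by
  obtain ⟨i, hi, hweight, a, ha⟩ :=
    hu.exists_eq_smul_of_lie_h_eq_smul (hmem 0 j) (hB.lie_h_apply_zero hx hy j) hj
  refine ⟨i, hi, ?_, a, ha⟩
  have : ((n + m + 2 * i : ℕ) : K) = (p + 2 * j : ℕ) := by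
    push_cast
    linear_combination hweight
  exact_mod_cast this

theorem exists_lowest_apply_zero (hne : ∃ i j, B (x i) (y j) ≠ 0) :
    ∃ r ≤ m, n + m = p + 2 * r ∧ (∀ j < r, B (x 0) (y j) = 0) ∧
      ∃ c : K, c ≠ 0 ∧ B (x 0) (y r) = c • u 0 := by
  classical
  have hex := hB.exists_apply_zero_ne_zero hx hy hne
  obtain ⟨r, hr, hlt⟩ : ∃ r, B (x 0) (y r) ≠ 0 ∧ ∀ j < r, B (x 0) (y j) = 0 :=
    ⟨Nat.find hex, Nat.find_spec hex, fun j hj ↦ not_not.1 (Nat.find_min hex hj)⟩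
  have hrm : r ≤ m := by
    by_contra! hmr
    exact hr (by rw [hy.eq_zero r hmr, map_zero])
  have hlie : ⁅e, B (x 0) (y r)⁆ = 0 := by
    cases r with
    | zero => rw [hB, hx.lie_e_zero, hy.lie_e_zero, map_zero, map_zero, LinearMap.zero_apply,
        add_zero]
    | succ r => rw [hB.lie_e_apply_zero_succ hx hy, hlt r r.lt_succ_self, smul_zero]
  obtain ⟨i, hi, hweight, a, ha⟩ := hB.exists_apply_zero_eq_smul hx hy hu hmem hr
  have ha0 : a ≠ 0 := by
    rintro rfl
    exact hr (by rw [ha, zero_smul])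
  cases i with
  | zero => exact ⟨r, hrm, by omega, hlt, a, ha0, ha⟩
  | succ i =>
    rw [ha, lie_smul, hu.lie_e_succ, smul_smul] at hlie
    have hpi : (p : K) - i ≠ 0 := sub_ne_zero.2 (by exact_mod_cast (by omega : p ≠ i))
    refine absurd hlie (smul_ne_zero ?_ (hu.ne_zero i (by omega)))
    exact mul_ne_zero ha0 (mul_ne_zero (by exact_mod_cast i.succ_ne_zero) hpi)

theorem le_left_of_apply_zero_ne_zero {r : ℕ} (hrm : r ≤ m) (hweight : n + m = p + 2 * r)
    (hr : B (x 0) (y r) ≠ 0) : r ≤ n := by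
  have hadd : ∀ t ≤ m - r, B (x 0) (y (r + t)) ≠ 0 := by
    intro t ht
    induction t with
    | zero => exact hr
    | succ t ih =>
      intro hzero
      have hlie := hB.lie_e_apply_zero_succ hx hy (r + t)
      rw [add_assoc, hzero, lie_zero] at hlie
      have hmt : (m : K) - (r + t : ℕ) ≠ 0 :=
        sub_ne_zero.2 (by exact_mod_cast (by omega : m ≠ r + t))
      exact smul_ne_zero (mul_ne_zero (by exact_mod_cast (r + t).succ_ne_zero) hmt)
        (ih (by omega)) hlie.symm
  obtain ⟨i, hi, hi', -⟩ := hB.exists_apply_zero_eq_smul hx hy hu hmem (hadd (m - r) le_rfl)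
  omega

theorem apply_zero_add {r : ℕ} {c : K} (hrn : r ≤ n) (hweight : n + m = p + 2 * r)
    (hr : B (x 0) (y r) = c • u 0) (t : ℕ) :
    B (x 0) (y (r + t)) = (c * (transvectantCoeff r m p t : K)) • u t := by
  induction t with
  | zero => rw [transvectantCoeff_zero, Rat.cast_one, mul_one, add_zero, hr]
  | succ t ih =>
    obtain ht | ht := le_or_gt m (r + t)
    · have hcoeff : transvectantCoeff r m p (t + 1) = 0 := by
        rw [transvectantCoeff, Nat.choose_eq_zero_of_lt (by omega : m - r < t + 1)]
        simp
      rw [hy.eq_zero _ (by omega), hcoeff, map_zero, Rat.cast_zero, mul_zero, zero_smul]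
    · obtain ⟨a, ha⟩ : ∃ a : K, B (x 0) (y (r + (t + 1))) = a • u (t + 1) := by
        by_cases hzero : B (x 0) (y (r + (t + 1))) = 0
        · exact ⟨0, by rw [hzero, zero_smul]⟩
        · obtain ⟨i, -, hi, h⟩ := hB.exists_apply_zero_eq_smul hx hy hu hmem hzero
          obtain rfl : i = t + 1 := by omega
          exact h
      have hlie := hB.lie_e_apply_zero_succ hx hy (r + t)
      rw [add_assoc, ha, ih, lie_smul, hu.lie_e_succ, smul_smul, smul_smul] at hlie
      have heq := smul_left_injective K (hu.ne_zero t (by omega)) hlie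
      have hcoeff : ((t : K) + 1) * (p - t) * (transvectantCoeff r m p (t + 1) : K) =
          (r + t + 1) * (m - r - t) * (transvectantCoeff r m p t : K) := by
        exact_mod_cast congrArg (Rat.cast : ℚ → K)
          (transvectantCoeff_succ ht.le (by omega : t < p))
      have hpt : (p : K) - t ≠ 0 := sub_ne_zero.2 (by exact_mod_cast (by omega : p ≠ t))
      have ht1 : (t : K) + 1 ≠ 0 := by exact_mod_cast t.succ_ne_zero
      rw [ha]
      congr 1
      refine mul_right_cancel₀ (mul_ne_zero ht1 hpt) ?_
      push_cast at heq
      linear_combination heq - c * hcoeff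

end IsEquivariant

/-- `B` restricts to the `r`-th transvectant `V_n × V_m → V_p`, the essentially unique nonzero
equivariant pairing, with scale `c`. The values of `B` on the standard bases `x`, `y`, `u` are
recorded only where they are needed to evaluate the Jacobi identity at a highest weight. -/
structure IsTransvectant (B : M →ₗ[K] N →ₗ[K] P) (x : ℕ → M) (y : ℕ → N) (u : ℕ → P)
    (n m p r : ℕ) (c : K) : Prop where
  weight_eq : n + m = p + 2 * r
  le_left : r ≤ n
  le_right : r ≤ m
  ne_zero : c ≠ 0
  apply_of_add_lt : ∀ i j, i + j < r → B (x i) (y j) = 0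
  apply_of_add_eq : ∀ i j, i + j = r → B (x i) (y j) = ((-1) ^ i * c) • u 0
  apply_zero : ∀ t, B (x 0) (y (r + t)) = (c * (transvectantCoeff r m p t : K)) • u t
  apply_one : ∀ t, B (x 1) (y (r + t)) =
    (c * (transvectantCoeff r m p t - transvectantCoeff r m p (t + 1) : ℚ)) • u (t + 1)
  apply_top : ∀ i, B (x i) (y m) =
    (c * (transvectantCoeff r m p (m - r) : K)) • u (m - r + i)

theorem IsEquivariant.exists_isTransvectant [CharZero K] [LieAlgebra K L] [LieModule K L P]
    {B : M →ₗ[K] N →ₗ[K] P} {x : ℕ → M} {y : ℕ → N} {u : ℕ → P}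
    (hB : IsEquivariant L B)
    (hx : IsSl2String K h e f n x) (hy : IsSl2String K h e f m y) (hu : IsSl2String K h e f p u)
    (hmem : ∀ i j, B (x i) (y j) ∈ Submodule.span K (Set.range u))
    (hne : ∃ i j, B (x i) (y j) ≠ 0) :
    ∃ r c, IsTransvectant B x y u n m p r c := by
  obtain ⟨r, hrm, hweight, hlt, c, hc, hr⟩ := hB.exists_lowest_apply_zero hx hy hu hmem hne
  have hrn : r ≤ n := hB.le_left_of_apply_zero_ne_zero hx hy hu hmem hrm hweight
    (hr ▸ smul_ne_zero hc (hu.ne_zero 0 p.zero_le))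
  have hadd := hB.apply_zero_add hx hy hu hmem hrn hweight hr
  have hlow : ∀ i j, i + j < r → B (x i) (y j) = 0 := by
    intro i
    induction i with
    | zero => exact fun j hj ↦ hlt j (by omega)
    | succ i ih =>
      intro j hj
      rw [hB.apply_succ_left hx hy, ih j (by omega), ih (j + 1) (by omega), lie_zero, sub_zero]
  refine ⟨r, c, hweight, hrn, hrm, hc, hlow, fun i ↦ ?_, hadd, fun t ↦ ?_, fun i ↦ ?_⟩
  · induction i with
    | zero =>
      rintro j rfl
      rw [pow_zero, one_mul, zero_add] at *
      exact hr
    | succ i ih =>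
      intro j hj
      rw [hB.apply_succ_left hx hy, hlow i j (by omega), ih (j + 1) (by omega), lie_zero, zero_sub,
        ← neg_smul, pow_succ]
      congr 1
      ring
  · rw [← zero_add 1, hB.apply_succ_left hx hy, hadd, add_assoc, hadd, lie_smul, hu.lie_f,
      ← sub_smul]
    push_cast
    ring_nf
  · induction i with
    | zero => simpa [Nat.add_sub_cancel' hrm] using hadd (m - r)
    | succ i ih =>
      rw [hB.apply_succ_left hx hy, ih, hy.eq_zero (m + 1) m.lt_succ_self, map_zero, sub_zero,
        lie_smul, hu.lie_f, add_assoc]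

theorem IsTransvectant.odd_of_skew [CharZero K] {B : M →ₗ[K] M →ₗ[K] P} {x : ℕ → M}
    {u : ℕ → P} {r : ℕ} {c : K}
    (hB : IsTransvectant B x x u n n p r c) (hu : u 0 ≠ 0) (hskew : ∀ y z, B y z = -B z y) :
    Odd r := by
  by_contra heven
  have h := hskew (x 0) (x r)
  rw [hB.apply_of_add_eq 0 r (zero_add r), hB.apply_of_add_eq r 0 (add_zero r),
    (Nat.not_odd_iff_even.1 heven).neg_one_pow, pow_zero, ← neg_smul] at h
  exact hB.ne_zero (self_eq_neg.1 (by simpa using smul_left_injective K hu h))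

section Jacobi

variable [CharZero K] {Q : Type*} [AddCommGroup Q] [Module K Q] {l r₁ r₂ : ℕ} {c₁ c₂ : K}

namespace IsTransvectant

section Symmetric

variable {A : M →ₗ[K] N →ₗ[K] P} {B : M →ₗ[K] P →ₗ[K] Q} {x : ℕ → M} {y : ℕ → N} {z : ℕ → P}
  {q : ℕ → Q} (hA : IsTransvectant A x y z n m p r₁ c₁) (hB : IsTransvectant B x z q n p l r₂ c₂)
  (hq : q 0 ≠ 0) (hcomm : ∀ i j k, B (x i) (A (x j) (y k)) = B (x j) (A (x i) (y k)))

include hA hB hq hcomm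

theorem mul_eq_mul_of_comm (hr : r₁ + r₂ ≤ m + 1) :
    (r₁ + r₂) * (m + 1 - (r₁ + r₂)) = 2 * r₂ * (p + 1 - r₂) := by
  have h := hcomm 1 0 (r₁ + r₂ - 1)
  have hc₁ := hA.ne_zero
  have hc₂ := hB.ne_zero
  rcases r₂ with - | t
  · rcases r₁ with - | r₁
    · simp
    · rw [hA.apply_of_add_lt 0 _ (by omega), hA.apply_of_add_eq 1 _ (by omega), map_zero, map_smul,
        hB.apply_of_add_eq 0 0 rfl] at h
      simp [hc₁, hc₂, hq] at h
  · have htp : t < p := hB.le_right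
    rw [show r₁ + (t + 1) - 1 = r₁ + t by omega, hA.apply_zero, hA.apply_one, map_smul, map_smul,
      hB.apply_of_add_eq 1 t (add_comm 1 t), hB.apply_of_add_eq 0 (t + 1) (zero_add _), smul_smul,
      smul_smul] at h
    have hratio : (transvectantCoeff r₁ m p (t + 1) : K) =
        (2 * transvectantCoeff r₁ m p t : ℚ) := by
      have h := smul_left_injective K hq h
      refine mul_left_cancel₀ (mul_ne_zero hc₁ hc₂) ?_
      push_cast at h ⊢
      linear_combination h
    have hpos := transvectantCoeff_pos (by omega : t ≤ m - r₁) htp.le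
    have hrec := transvectantCoeff_succ (by omega : r₁ + t ≤ m) htp
    rw [Rat.cast_injective hratio] at hrec
    have hℚ : ((r₁ + t + 1) * (m - r₁ - t) : ℚ) = 2 * (t + 1) * (p - t) :=
      mul_right_cancel₀ hpos.ne' (by linear_combination -hrec)
    rw [show m + 1 - (r₁ + (t + 1)) = m - r₁ - t by omega, show p + 1 - (t + 1) = p - t by omega]
    rw [← Nat.cast_sub (by omega), ← Nat.cast_sub (by omega), ← Nat.cast_sub (by omega)] at hℚ
    exact_mod_cast hℚ

theorem even_of_comm (hr : m ≤ r₁ + r₂) : Even (r₁ + r₂ - m) := by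
  by_contra hodd
  have hr₁ := hA.le_right
  have hA₀ := hA.weight_eq
  have hr₁' := hA.le_left
  have h := hcomm (r₁ + r₂ - m) 0 m
  rw [hA.apply_top, hA.apply_top, map_smul, map_smul, hB.apply_of_add_eq _ _ (by omega),
    hB.apply_of_add_eq _ _ (by omega), (Nat.not_even_iff_odd.1 hodd).neg_one_pow, smul_smul,
    smul_smul] at h
  have hpos := transvectantCoeff_pos (r := r₁) (p := p) (le_refl (m - r₁)) (by omega)
  have hcoeff : (transvectantCoeff r₁ m p (m - r₁) : K) ≠ 0 := by exact_mod_cast hpos.ne'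
  have htwo : 2 * (c₁ * (transvectantCoeff r₁ m p (m - r₁) : K) * c₂) = 0 := by
    linear_combination -smul_left_injective K hq h
  simp [hA.ne_zero, hB.ne_zero, hcoeff] at htwo

end Symmetric

section Cyclic

variable {A : M →ₗ[K] M →ₗ[K] P} {B : M →ₗ[K] P →ₗ[K] Q} {x : ℕ → M} {z : ℕ → P} {q : ℕ → Q}
  (hA : IsTransvectant A x x z n n p r₁ c₁) (hB : IsTransvectant B x z q n p l r₂ c₂)
  (hq : q 0 ≠ 0) (hcyc : ∀ i j k,
    B (x i) (A (x j) (x k)) + B (x j) (A (x k) (x i)) + B (x k) (A (x i) (x j)) = 0)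

include hA hB hq hcyc

theorem ne_zero_of_cyclic (hr : 1 < r₁) : r₂ ≠ 0 := by
  rintro rfl
  have h := hcyc (r₁ - 1) 1 0
  rw [hA.apply_of_add_lt 1 0 (by omega), hA.apply_of_add_lt 0 _ (by omega),
    hA.apply_of_add_eq (r₁ - 1) 1 (by omega), map_zero, map_zero, map_smul,
    hB.apply_of_add_eq 0 0 rfl] at h
  simp [hA.ne_zero, hB.ne_zero, hq] at h

theorem even_of_cyclic (hskew : ∀ y z, A y z = -A z y) (hn : Even n) (hr : n ≤ r₁ + r₂) :
    Even (r₁ + r₂ - n) := by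
  by_contra hodd
  have hodd := Nat.not_even_iff_odd.1 hodd
  have hr₁ := hA.le_right
  have hr₂ := hB.le_left
  have hA₀ := hA.weight_eq
  have hpos := transvectantCoeff_pos (r := r₁) (p := p) (le_refl (n - r₁)) (by omega)
  have h := hcyc (r₁ + r₂ - n) 0 n
  rw [hskew (x n), hA.apply_top, hA.apply_top, map_neg, map_smul, map_smul,
    hB.apply_of_add_eq _ _ (by omega), hB.apply_of_add_eq 0 _ (by omega), hodd.neg_one_pow] at h
  obtain hlt | heq := lt_or_eq_of_le hr₂
  · rw [hA.apply_of_add_lt _ 0 (by omega), map_zero] at h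
    have hsum : (c₁ * c₂ * (-2 * transvectantCoeff r₁ n p (n - r₁) : ℚ)) • q 0 = 0 := by
      rw [← h]
      push_cast
      module
    simp [hA.ne_zero, hB.ne_zero, hpos.ne', hq] at hsum
  · rw [hA.apply_of_add_eq _ 0 (by omega), map_smul, hB.apply_of_add_eq n 0 (by omega),
      hodd.neg_one_pow, hn.neg_one_pow] at h
    have hsum : (c₁ * c₂ * (-2 * transvectantCoeff r₁ n p (n - r₁) - 1 : ℚ)) • q 0 = 0 := by
      rw [← h]
      push_cast
      module
    have hne : (-2 * transvectantCoeff r₁ n p (n - r₁) - 1 : ℚ) ≠ 0 := by linarith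
    rw [smul_eq_zero, mul_eq_zero, mul_eq_zero, Rat.cast_eq_zero] at hsum
    exact hsum.elim (·.elim (·.elim hA.ne_zero hB.ne_zero) hne) hq

end Cyclic

end IsTransvectant

end Jacobi

end Strings

/-! ### Representations of `sl₂` -/

section Modules

variable {K L M N : Type*} [Field K] [LieRing L] [LieAlgebra K L]
  [AddCommGroup M] [Module K M] [LieRingModule L M] [LieModule K L M]
  [AddCommGroup N] [Module K N] [LieRingModule L N] [LieModule K L N]
  {h e f : L} {n : ℕ} {v : ℕ → M} {w : ℕ → N}

theorem lie_lie_comm_of_lie_lie_eq_zero {x x' : L} {m : M} (h : ⁅⁅x, x'⁆, m⁆ = 0) :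
    ⁅x, ⁅x', m⁆⁆ = ⁅x', ⁅x, m⁆⁆ := by
  rw [leibniz_lie, h, zero_add]

theorem exists_isSl2Triple_sl_fin_two [CharZero K] :
    ∃ (h e f : LieAlgebra.SpecialLinear.sl (Fin 2) K) (t : IsSl2Triple h e f),
      t.toLieSubalgebra K = ⊤ := by
  let e := LieAlgebra.SpecialLinear.single (0 : Fin 2) 1 zero_ne_one (1 : K)
  let f := LieAlgebra.SpecialLinear.single (1 : Fin 2) 0 one_ne_zero (1 : K)
  let h := LieAlgebra.SpecialLinear.singleSubSingle (0 : Fin 2) 1 (1 : K)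
  have t : IsSl2Triple h e f := by
    refine ⟨fun hh ↦ ?_, ?_, ?_, ?_⟩
    · simpa [h] using congrFun₂ (congrArg Subtype.val hh) 0 0
    all_goals
      ext i j
      fin_cases i <;> fin_cases j <;>
        simp [e, f, h, Ring.lie_def, Matrix.mul_apply, two_smul] <;> ring
  refine ⟨h, e, f, t, eq_top_iff.2 fun x _ ↦ ?_⟩
  rw [IsSl2Triple.mem_toLieSubalgebra_iff, t.lie_e_f]
  have htrace : x.1 0 0 + x.1 1 1 = 0 := by rw [← Matrix.trace_fin_two]; exact x.2
  refine ⟨x.1 0 1, x.1 1 0, x.1 0 0, ?_⟩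
  ext i j
  fin_cases i <;> fin_cases j <;> simp [e, f, h]
  linear_combination htrace

theorem exists_isSl2Triple_toLieSubalgebra_eq_top [CharZero K]
    (φ : L ≃ₗ⁅K⁆ LieAlgebra.SpecialLinear.sl (Fin 2) K) :
    ∃ (h e f : L) (t : IsSl2Triple h e f), t.toLieSubalgebra K = ⊤ := by
  obtain ⟨h, e, f, t, ht⟩ := exists_isSl2Triple_sl_fin_two (K := K)
  have t' : IsSl2Triple (φ.symm h) (φ.symm e) (φ.symm f) := by
    refine ⟨(map_ne_zero_iff φ.symm φ.symm.injective).2 t.h_ne_zero, ?_, ?_, ?_⟩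
    · rw [← LieEquiv.map_lie, t.lie_e_f]
    · rw [← LieEquiv.map_lie, t.lie_h_e_nsmul, map_nsmul]
    · rw [← LieEquiv.map_lie, t.lie_h_f_nsmul, map_neg, map_nsmul]
  refine ⟨_, _, _, t', eq_top_iff.2 fun x _ ↦ ?_⟩
  obtain ⟨a, b, c, hx⟩ := IsSl2Triple.mem_toLieSubalgebra_iff.1 (ht ▸ LieSubalgebra.mem_top (φ x))
  refine IsSl2Triple.mem_toLieSubalgebra_iff.2 ⟨a, b, c, ?_⟩
  rw [← φ.symm_apply_apply x, hx]
  simp only [map_add, map_smul, LieEquiv.map_lie]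

theorem exists_eq_smul_add_smul_add_smul {t : IsSl2Triple h e f}
    (ht : t.toLieSubalgebra K = ⊤) (x : L) : ∃ a b c : K, x = a • e + b • f + c • h := by
  rw [← t.lie_e_f]
  exact IsSl2Triple.mem_toLieSubalgebra_iff.1 (ht ▸ LieSubalgebra.mem_top x)

theorem eq_zero_of_forall_lie_eq_zero [CharZero K] {t : IsSl2Triple h e f}
    (ht : t.toLieSubalgebra K = ⊤) {x : L} (hx : ∀ y : L, ⁅y, x⁆ = 0) : x = 0 := by
  obtain ⟨a, b, c, rfl⟩ := exists_eq_smul_add_smul_add_smul ht x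
  have he : b • h - (2 * c) • e = 0 := by
    rw [← hx e, lie_add, lie_add, lie_smul, lie_smul, lie_smul, lie_self, t.lie_e_f, ← lie_skew e h,
      t.lie_h_e_smul K]
    module
  have hb : b = 0 := by
    have := congrArg (⁅e, ·⁆) he
    simp only [lie_sub, lie_smul, lie_self, lie_zero] at this
    rw [← lie_skew e h, t.lie_h_e_smul K] at this
    simpa [t.e_ne_zero] using this
  have hc : c = 0 := by simpa [hb, t.e_ne_zero] using he
  have ha : a = 0 := by simpa [hb, hc, t.lie_h_e_smul K, t.e_ne_zero] using hx h
  simp [ha, hb, hc]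

theorem three_le_finrank_of_isSl2Triple [CharZero K] [FiniteDimensional K L]
    (t : IsSl2Triple h e f) : 3 ≤ finrank K L := by
  have hprim : t.HasPrimitiveVectorWith e ((2 : ℕ) : K) :=
    ⟨t.e_ne_zero, by rw [Nat.cast_two, t.lie_h_e_smul K], lie_self e⟩
  exact (IsSl2String.of_hasPrimitiveVectorWith hprim).finrank_span.ge.trans
    (Submodule.finrank_le _)

theorem IsSl2String.exists_of_nontrivial [IsAlgClosed K] [CharZero K] [FiniteDimensional K M]
    [Nontrivial M] (t : IsSl2Triple h e f) :
    ∃ (n : ℕ) (v : ℕ → M), IsSl2String K h e f n v := by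
  obtain ⟨μ, m, -, hm⟩ := t.exists_hasPrimitiveVectorWith (R := K) (M := M)
  obtain ⟨n, rfl⟩ := hm.exists_nat
  exact ⟨n, _, IsSl2String.of_hasPrimitiveVectorWith hm⟩

namespace IsSl2String

theorem lie_mem_span_range (hv : IsSl2String K h e f n v) {t : IsSl2Triple h e f}
    (ht : t.toLieSubalgebra K = ⊤) (x : L) {y : M} (hy : y ∈ Submodule.span K (Set.range v)) :
    ⁅x, y⁆ ∈ Submodule.span K (Set.range v) := by
  have mem (i : ℕ) : v i ∈ Submodule.span K (Set.range v) := Submodule.subset_span ⟨i, rfl⟩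
  suffices h : Submodule.span K (Set.range v) ≤
      (Submodule.span K (Set.range v)).comap (LieModule.toEnd K L M x) from h hy
  rw [Submodule.span_le]
  rintro _ ⟨i, rfl⟩
  obtain ⟨a, b, c, rfl⟩ := exists_eq_smul_add_smul_add_smul ht x
  have he : ⁅e, v i⁆ ∈ Submodule.span K (Set.range v) := by
    cases i with
    | zero => simp [hv.lie_e_zero]
    | succ i => simpa [hv.lie_e_succ] using Submodule.smul_mem _ _ (mem i)
  simp only [SetLike.mem_coe, Submodule.mem_comap, LieModule.toEnd_apply_apply, add_lie, smul_lie,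
    hv.lie_f, hv.lie_h]
  exact add_mem (add_mem (Submodule.smul_mem _ a he) (Submodule.smul_mem _ b (mem _)))
    (Submodule.smul_mem _ c (Submodule.smul_mem _ _ (mem i)))

theorem lie_eq_zero (hv : IsSl2String K h e f 0 v) {t : IsSl2Triple h e f}
    (ht : t.toLieSubalgebra K = ⊤) (x : L) {y : M} (hy : y ∈ Submodule.span K (Set.range v)) :
    ⁅x, y⁆ = 0 := by
  suffices h : Submodule.span K (Set.range v) ≤ LinearMap.ker (LieModule.toEnd K L M x) from h hy
  rw [hv.span_range_eq, Submodule.span_le]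
  rintro _ ⟨i, rfl⟩
  obtain ⟨a, b, c, rfl⟩ := exists_eq_smul_add_smul_add_smul ht x
  obtain rfl : i = ⟨0, one_pos⟩ := Fin.ext (by omega)
  simp [hv.lie_e_zero, hv.lie_f, hv.lie_h, hv.eq_zero 1 one_pos]

theorem exists_linearMap [CharZero K] (hv : IsSl2String K h e f n v)
    (hw : IsSl2String K h e f n w) {t : IsSl2Triple h e f} (ht : t.toLieSubalgebra K = ⊤) :
    ∃ θ : M →ₗ[K] N, (∀ i, θ (v i) = w i) ∧
      ∀ x : L, ∀ y ∈ Submodule.span K (Set.range v), θ ⁅x, y⁆ = ⁅x, θ y⁆ := by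
  obtain ⟨θ, hθ⟩ := LinearMap.exists_extend
    ((Basis.span hv.linearIndependent).constr K fun i : Fin (n + 1) ↦ w i)
  have hθv (i : ℕ) : θ (v i) = w i := by
    obtain hi | hi := le_or_gt i n
    · have := LinearMap.congr_fun hθ
        (Basis.span hv.linearIndependent ⟨i, Nat.lt_succ_of_le hi⟩)
      rw [Basis.constr_basis] at this
      simpa [Basis.span_apply] using this
    · rw [hv.eq_zero i hi, hw.eq_zero i hi, map_zero]
  refine ⟨θ, hθv, fun x y hy ↦ ?_⟩
  suffices h : Submodule.span K (Set.range v) ≤ LinearMap.eqLocus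
      (θ ∘ₗ LieModule.toEnd K L M x) (LieModule.toEnd K L N x ∘ₗ θ) from h hy
  rw [Submodule.span_le]
  rintro _ ⟨i, rfl⟩
  have he : θ ⁅e, v i⁆ = ⁅e, w i⁆ := by
    cases i with
    | zero => rw [hv.lie_e_zero, hw.lie_e_zero, map_zero]
    | succ i => rw [hv.lie_e_succ, hw.lie_e_succ, map_smul, hθv]
  obtain ⟨a, b, c, rfl⟩ := exists_eq_smul_add_smul_add_smul ht x
  simp [hθv, he, hv.lie_f, hw.lie_f, hv.lie_h, hw.lie_h]

end IsSl2String

end Modules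

section IndependentFamilies

variable {ι K M N : Type*} [Field K] [AddCommGroup M] [Module K M] [AddCommGroup N] [Module K N]
  {V : ι → Submodule K M}

theorem exists_linearMap_of_iSupIndep (hV : iSupIndep V) (φ : ι → M →ₗ[K] N) :
    ∃ E : M →ₗ[K] N, ∀ i, ∀ y ∈ V i, E y = φ i y := by
  classical
  obtain ⟨π, hπ⟩ := LinearMap.exists_leftInverse_of_injective _
    (LinearMap.ker_eq_bot.2 hV.dfinsupp_lsum_injective)
  refine ⟨DFinsupp.lsum ℕ (fun i ↦ φ i ∘ₗ (V i).subtype) ∘ₗ π, fun i y hy ↦ ?_⟩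
  have hπy : π y = DFinsupp.single i ⟨y, hy⟩ := by
    simpa using LinearMap.congr_fun hπ (DFinsupp.single i ⟨y, hy⟩)
  simp [hπy]

theorem finrank_iSup_of_iSupIndep [Fintype ι] [FiniteDimensional K M] (hV : iSupIndep V) :
    finrank K (⨆ i, V i : Submodule K M) = ∑ i, finrank K (V i) := by
  classical
  rw [Submodule.iSup_eq_range_dfinsupp_lsum, LinearMap.finrank_range_of_inj
    hV.dfinsupp_lsum_injective]
  exact finrank_directSum K fun i ↦ V i

end IndependentFamilies

/-! ### Bracket tables -/

/-- The combinatorial shadow of a decomposition `⨁ V i` of a Lie algebra with centre `V z`, where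
`R i j q` means `[V i, V j] = V q`. -/
structure IsBracketTable {ι : Type*} (R : ι → ι → ι → Prop) (z : ι) : Prop where
  symm : ∀ {i j q}, R i j q → R j i q
  unique : ∀ {i j q q'}, R i j q → R i j q' → q = q'
  not_central : ∀ j q, ¬ R z j q
  exists_of_ne : ∀ i ≠ z, ∃ j q, R i j q
  jacobi : ∀ {i j l m q}, R l m j → R i j q →
    (∃ k, R i m k ∧ R l k q) ∨ ∃ k, R i l k ∧ R m k q

/-- `HasDepth R t q` records that `V q` is contained in the `t`-th term of the lower central
series. -/
inductive HasDepth {ι : Type*} (R : ι → ι → ι → Prop) : ℕ → ι → Prop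
  | zero (q : ι) : HasDepth R 0 q
  | succ {i j q : ι} {t : ℕ} (h : R i j q) (ht : HasDepth R t j) : HasDepth R (t + 1) q

/-- The properties of the function `ℓ` for which `V i` lies in the `ℓ i`-th term of the lower
central series, counted from `1`, and not in the next one. -/
structure IsLevel {ι : Type*} (R : ι → ι → ι → Prop) (ℓ : ι → ℕ) : Prop where
  pos : ∀ i, 0 < ℓ i
  add_le : ∀ {i j q}, R i j q → ℓ i + ℓ j ≤ ℓ q
  exists_of_one_lt : ∀ q, 1 < ℓ q → ∃ i j, R i j q ∧ ℓ i = 1 ∧ ℓ j + 1 = ℓ q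

/-- A table is rigid if it carries no nonzero additive weight, i.e. if the Lie algebra has no
derivation acting by natural numbers on the summands. -/
def IsRigid {ι : Type*} (R : ι → ι → ι → Prop) : Prop :=
  ∀ w : ι → ℕ, (∀ i j q, R i j q → w i + w j = w q) → w = 0

section Level

variable {ι : Type*} {R : ι → ι → ι → Prop} {z : ι}

theorem HasDepth.of_succ {t : ℕ} {q : ι} (h : HasDepth R (t + 1) q) : HasDepth R t q := by
  induction t generalizing q with
  | zero => exact .zero q
  | succ t ih =>
    cases h with
    | succ hR h => exact .succ hR (ih h)

theorem HasDepth.mono {s t : ℕ} (hst : s ≤ t) {q : ι} (h : HasDepth R t q) : HasDepth R s q := by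
  induction t, hst using Nat.le_induction with
  | base => exact h
  | succ t _ ih => exact ih h.of_succ

theorem HasDepth.add (hR : IsBracketTable R z) {a b : ℕ} {i j q : ι} (ha : HasDepth R a i)
    (hb : HasDepth R b j) (hq : R i j q) : HasDepth R (a + b + 1) q := by
  induction ha generalizing b j q with
  | zero i => exact (zero_add b).symm ▸ hb.succ hq
  | @succ _ _ _ a h _ ih =>
    rw [add_right_comm a 1 b]
    obtain ⟨k, hk, hq⟩ | ⟨k, hk, hq⟩ := hR.jacobi h (hR.symm hq)
    · exact (ih hb (hR.symm hk)).succ hq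
    · exact ih (hb.succ (hR.symm hk)) hq

theorem IsBracketTable.exists_isLevel (hR : IsBracketTable R z)
    (hnil : ∃ t, ∀ q, ¬ HasDepth R t q) : ∃ ℓ, IsLevel R ℓ := by
  classical
  obtain ⟨t, ht⟩ := hnil
  have le_t {s q} (h : HasDepth R s q) : s ≤ t := le_of_not_ge fun hts ↦ ht q (h.mono hts)
  let d : ι → ℕ := fun q ↦ Nat.findGreatest (fun s ↦ HasDepth R s q) t
  have le_d {s q} (h : HasDepth R s q) : s ≤ d q := Nat.le_findGreatest (le_t h) h
  have hd (q) : HasDepth R (d q) q :=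
    Nat.findGreatest_spec (P := fun s ↦ HasDepth R s q) (Nat.zero_le t) (.zero q)
  have add_le {i j q} (h : R i j q) : d i + d j + 1 ≤ d q := le_d ((hd i).add hR (hd j) h)
  refine ⟨fun i ↦ d i + 1, fun i ↦ Nat.succ_pos _, fun h ↦ ?_, fun q hq ↦ ?_⟩
  · have := add_le h
    omega
  · generalize hs : d q = s at hq
    have h := hs ▸ hd q
    cases h with
    | zero => exact absurd hq (lt_irrefl 1)
    | @succ i j _ s h hj =>
      have := add_le h
      have := le_d hj
      exact ⟨i, j, h, by omega, by omega⟩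

theorem IsBracketTable.level_lt_central [Finite ι] (hR : IsBracketTable R z) {ℓ : ι → ℕ}
    (hℓ : IsLevel R ℓ) {i : ι} (hi : i ≠ z) : ℓ i < ℓ z := by
  have step {i} (hi : i ≠ z) : ∃ q, ℓ i < ℓ q := by
    obtain ⟨j, q, h⟩ := hR.exists_of_ne i hi
    exact ⟨q, (Nat.lt_add_of_pos_right (hℓ.pos j)).trans_le (hℓ.add_le h)⟩
  have : Nonempty ι := ⟨z⟩
  obtain ⟨k, hk⟩ := Finite.exists_max ℓ
  obtain rfl : k = z := by
    by_contra hkz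
    obtain ⟨q, hq⟩ := step hkz
    exact absurd (hk q) hq.not_ge
  obtain ⟨q, hq⟩ := step hi
  exact hq.trans_le (hk q)

theorem IsBracketTable.reindex (hR : IsBracketTable R z) {σ : Equiv.Perm ι} (hσ : σ z = z) :
    IsBracketTable (fun i j q ↦ R (σ i) (σ j) (σ q)) z where
  symm h := hR.symm h
  unique h h' := σ.injective (hR.unique h h')
  not_central j q h := hR.not_central (σ j) (σ q) (hσ ▸ h)
  exists_of_ne i hi := by
    obtain ⟨j, q, h⟩ := hR.exists_of_ne (σ i) fun h ↦ hi (σ.injective (h.trans hσ.symm))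
    exact ⟨σ.symm j, σ.symm q, by simpa using h⟩
  jacobi h h' := by
    obtain ⟨k, hk⟩ | ⟨k, hk⟩ := hR.jacobi h h'
    · exact .inl ⟨σ.symm k, by simpa using hk⟩
    · exact .inr ⟨σ.symm k, by simpa using hk⟩

theorem IsLevel.reindex {ℓ : ι → ℕ} (hℓ : IsLevel R ℓ) (σ : Equiv.Perm (ι)) :
    IsLevel (fun i j q ↦ R (σ i) (σ j) (σ q)) (ℓ ∘ σ) where
  pos i := hℓ.pos (σ i)
  add_le h := hℓ.add_le h
  exists_of_one_lt q hq := by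
    obtain ⟨i, j, h⟩ := hℓ.exists_of_one_lt (σ q) hq
    exact ⟨σ.symm i, σ.symm j, by simpa using h⟩

theorem IsRigid.reindex (hR : IsRigid R) (σ : Equiv.Perm (ι)) :
    IsRigid fun i j q ↦ R (σ i) (σ j) (σ q) := by
  intro w hw
  have := hR (w ∘ σ.symm) fun i j q h ↦ hw _ _ _ (by simpa using h)
  exact funext fun i ↦ by simpa using congrFun this (σ i)

end Level

section FourSummands

variable {R : Fin 4 → Fin 4 → Fin 4 → Prop}

theorem IsLevel.eq_of_monotone (hR : IsBracketTable R 3) {ℓ : Fin 4 → ℕ} (hℓ : IsLevel R ℓ)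
    (hmono : Monotone ℓ) :
    ℓ = ![1, 1, 1, 2] ∨ ℓ = ![1, 1, 2, 3] ∨ ℓ = ![1, 2, 3, 4] := by
  have h12 : ℓ 1 ≤ ℓ 2 := hmono (by decide)
  have h23 : ℓ 2 < ℓ 3 := hR.level_lt_central hℓ (by decide)
  have zero_le (i) : ℓ 0 ≤ ℓ i := hmono (Fin.zero_le i)
  have le_three (i) : ℓ i ≤ ℓ 3 := hmono (Fin.le_last i)
  have h0 : ℓ 0 = 1 := by
    by_contra hne
    have := hℓ.pos 0
    obtain ⟨i, -, -, hi, -⟩ := hℓ.exists_of_one_lt 0 (by omega)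
    have := zero_le i
    omega
  have step (q) (hq : 1 < ℓ q) : ℓ q = 2 ∨ ℓ q = ℓ 1 + 1 ∨ ℓ q = ℓ 2 + 1 := by
    obtain ⟨i, j, -, -, hj⟩ := hℓ.exists_of_one_lt q hq
    have := le_three q
    obtain rfl | rfl | rfl | rfl : j = 0 ∨ j = 1 ∨ j = 2 ∨ j = 3 := by fin_cases j <;> simp
    all_goals omega
  have h1 : ℓ 1 = 1 ∨ ℓ 1 = 2 := by have := step 1; have := hℓ.pos 1; omega
  have h2 : ℓ 2 = ℓ 1 ∨ ℓ 2 = ℓ 1 + 1 := by have := step 2; omega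
  have h3 : ℓ 3 = ℓ 2 + 1 := by have := step 3; omega
  -- At most one summand of depth two is hit by `[V 0, V 0]`.
  have hne : ¬ (ℓ 1 = 2 ∧ ℓ 2 = 2) := by
    rintro ⟨h1, h2⟩
    have eq_zero {i} (hi : ℓ i = 1) : i = 0 := by
      obtain rfl | rfl | rfl | rfl : i = 0 ∨ i = 1 ∨ i = 2 ∨ i = 3 := by fin_cases i <;> simp
      all_goals first | rfl | omega
    obtain ⟨i, j, h, hi, hj⟩ := hℓ.exists_of_one_lt 1 (by omega)
    obtain ⟨i', j', h', hi', hj'⟩ := hℓ.exists_of_one_lt 2 (by omega)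
    rw [eq_zero hi, eq_zero (show ℓ j = 1 by omega)] at h
    rw [eq_zero hi', eq_zero (show ℓ j' = 1 by omega)] at h'
    exact absurd (hR.unique h h') (by decide)
  have : (ℓ 1 = 1 ∧ ℓ 2 = 1 ∧ ℓ 3 = 2) ∨ (ℓ 1 = 1 ∧ ℓ 2 = 2 ∧ ℓ 3 = 3) ∨
      (ℓ 1 = 2 ∧ ℓ 2 = 3 ∧ ℓ 3 = 4) := by omega
  simpa [funext_iff, Fin.forall_fin_succ, h0] using this

theorem IsLevel.additive_of_two_step (hℓ : IsLevel R ![1, 1, 1, 2]) (i j q : Fin 4)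
    (h : R i j q) : (![1, 1, 1, 2] : Fin 4 → ℕ) i + ![1, 1, 1, 2] j = ![1, 1, 1, 2] q := by
  have hle := hℓ.add_le h
  clear h
  revert i j q
  decide

theorem IsLevel.additive_of_four_step (hR : IsBracketTable R 3) (hℓ : IsLevel R ![1, 2, 3, 4])
    (i j q : Fin 4) (h : R i j q) :
    (![1, 2, 3, 4] : Fin 4 → ℕ) i + ![1, 2, 3, 4] j = ![1, 2, 3, 4] q := by
  have index_eq : ∀ i j : Fin 4, (![1, 2, 3, 4] : Fin 4 → ℕ) i = ![1, 2, 3, 4] j → i = j := by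
    decide
  have h001 : R 0 0 1 := by
    obtain ⟨i, j, h, hi, hj⟩ := hℓ.exists_of_one_lt 1 (by decide)
    rwa [index_eq i 0 hi, index_eq j 0 (Nat.succ_injective hj)] at h
  have h012 : R 0 1 2 := by
    obtain ⟨i, j, h, hi, hj⟩ := hℓ.exists_of_one_lt 2 (by decide)
    rwa [index_eq i 0 hi, index_eq j 1 (Nat.succ_injective hj)] at h
  have eq_of_zero_zero {q} (h : R 0 0 q) : q = 1 := hR.unique h h001
  have eq_of_zero_one {q} (h : R 0 1 q) : q = 2 := hR.unique h h012
  have eq_of_one_zero {q} (h : R 1 0 q) : q = 2 := eq_of_zero_one (hR.symm h)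
  have hle := hℓ.add_le h
  have key : ∀ i j q : Fin 4, ((![1, 2, 3, 4] : Fin 4 → ℕ) i + ![1, 2, 3, 4] j ≤ ![1, 2, 3, 4] q) →
      (i = 0 → j = 0 → q = 1) → (i = 0 → j = 1 → q = 2) → (i = 1 → j = 0 → q = 2) →
      (![1, 2, 3, 4] : Fin 4 → ℕ) i + ![1, 2, 3, 4] j = ![1, 2, 3, 4] q := by
    decide
  refine key i j q hle ?_ ?_ ?_ <;> rintro rfl rfl
  exacts [eq_of_zero_zero h, eq_of_zero_one h, eq_of_one_zero h]

theorem IsLevel.eq_of_isRigid (hR : IsBracketTable R 3) (hrigid : IsRigid R) {ℓ : Fin 4 → ℕ}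
    (hℓ : IsLevel R ℓ) (hmono : Monotone ℓ) : ℓ = ![1, 1, 2, 3] := by
  have not_additive : ¬ ∀ i j q, R i j q → ℓ i + ℓ j = ℓ q := fun h ↦
    (hℓ.pos 0).ne' (congrFun (hrigid ℓ h) 0)
  obtain rfl | h | rfl := hℓ.eq_of_monotone hR hmono
  · exact absurd hℓ.additive_of_two_step not_additive
  · exact h
  · exact absurd (hℓ.additive_of_four_step hR) not_additive

/-- The three shapes a rigid table on four summands can take, in the order in which `V 0` and
`V 1` generate and `V 2`, `V 3` have levels `2`, `3`. -/
def IsExceptional (R : Fin 4 → Fin 4 → Fin 4 → Prop) : Prop :=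
  R 0 2 3 ∧ R 1 1 3 ∧
    (R 0 1 2 ∧ R 1 2 3 ∨ R 0 1 2 ∧ (∀ q, ¬ R 1 2 q) ∧ (R 0 0 2 ∨ R 0 0 3) ∨ R 0 0 2 ∧ R 0 1 3)

section ThreeStep

variable (hR : IsBracketTable R 3) (hℓ : IsLevel R ![1, 1, 2, 3])
include hR hℓ

theorem exists_bracket_eq_two : R 0 0 2 ∨ R 0 1 2 ∨ R 1 1 2 := by
  obtain ⟨i, j, h, hi, hj⟩ := hℓ.exists_of_one_lt 2 (by decide)
  have : ∀ i j : Fin 4, (![1, 1, 2, 3] : Fin 4 → ℕ) i = 1 → ![1, 1, 2, 3] j + 1 = 2 →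
      (i = 0 ∧ j = 0) ∨ (i = 0 ∧ j = 1) ∨ (i = 1 ∧ j = 0) ∨ (i = 1 ∧ j = 1) := by decide
  obtain ⟨rfl, rfl⟩ | ⟨rfl, rfl⟩ | ⟨rfl, rfl⟩ | ⟨rfl, rfl⟩ := this i j hi hj
  exacts [.inl h, .inr (.inl h), .inr (.inl (hR.symm h)), .inr (.inr h)]

omit hR in
theorem exists_bracket_two_eq_three : R 0 2 3 ∨ R 1 2 3 := by
  obtain ⟨i, j, h, hi, hj⟩ := hℓ.exists_of_one_lt 3 (by decide)
  have : ∀ i j : Fin 4, (![1, 1, 2, 3] : Fin 4 → ℕ) i = 1 → ![1, 1, 2, 3] j + 1 = 3 →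
      (i = 0 ∧ j = 2) ∨ (i = 1 ∧ j = 2) := by decide
  obtain ⟨rfl, rfl⟩ | ⟨rfl, rfl⟩ := this i j hi hj
  exacts [.inl h, .inr h]

theorem bracket_of_square {i j : Fin 4} (hi : R i i 2) (hj : R j 2 3) : R j i 2 ∧ R i 2 3 := by
  obtain ⟨k, hk, hk'⟩ : ∃ k, R j i k ∧ R i k 3 := (hR.jacobi hi hj).elim id id
  have : ∀ i j k : Fin 4, (![1, 1, 2, 3] : Fin 4 → ℕ) j + ![1, 1, 2, 3] i ≤ ![1, 1, 2, 3] k →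
      ![1, 1, 2, 3] i + ![1, 1, 2, 3] k ≤ (![1, 1, 2, 3] : Fin 4 → ℕ) 3 → k = 2 := by decide
  obtain rfl := this i j k (hℓ.add_le hk) (hℓ.add_le hk')
  exact ⟨hk, hk'⟩

theorem additive_iff (w : Fin 4 → ℕ) : (∀ i j q, R i j q → w i + w j = w q) ↔
    (R 0 0 2 → w 0 + w 0 = w 2) ∧ (R 0 0 3 → w 0 + w 0 = w 3) ∧
    (R 0 1 2 → w 0 + w 1 = w 2) ∧ (R 0 1 3 → w 0 + w 1 = w 3) ∧
    (R 1 1 2 → w 1 + w 1 = w 2) ∧ (R 1 1 3 → w 1 + w 1 = w 3) ∧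
    (R 0 2 3 → w 0 + w 2 = w 3) ∧ (R 1 2 3 → w 1 + w 2 = w 3) := by
  refine ⟨fun h ↦ ⟨h _ _ _, h _ _ _, h _ _ _, h _ _ _, h _ _ _, h _ _ _, h _ _ _, h _ _ _⟩,
    fun h i j q hijq ↦ ?_⟩
  have hle := hℓ.add_le hijq
  have hsymm := hR.symm hijq
  fin_cases i <;> fin_cases j <;> fin_cases q <;> first | exact absurd hle (by decide) | grind

omit hℓ in
theorem not_bracket_two_and_three {i j : Fin 4} (h₂ : R i j 2) : ¬ R i j 3 := fun h₃ ↦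
  absurd (hR.unique h₂ h₃) (by decide)

theorem bracket_zero_one_and_exists_square (hrigid : IsRigid R) (h023 : R 0 2 3) (h123 : R 1 2 3) :
    R 0 1 2 ∧ (R 0 0 3 ∨ R 1 1 3) := by
  have h012 : R 0 1 2 := by
    obtain h | h | h := exists_bracket_eq_two hR hℓ
    · exact hR.symm (bracket_of_square hR hℓ h h123).1
    · exact h
    · exact (bracket_of_square hR hℓ h h023).1
  have h013 := not_bracket_two_and_three hR h012
  refine ⟨h012, ?_⟩
  by_contra! h
  have hw := (additive_iff hR hℓ ![1, 1, 2, 3]).2 (by simp [h, h013])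
  exact absurd (hrigid _ hw) (by decide)

theorem isExceptional_of_not_bracket (hrigid : IsRigid R) (h023 : R 0 2 3) (h123 : ¬ R 1 2 3) :
    IsExceptional R := by
  have not_additive (w : Fin 4 → ℕ) (hw : w ≠ 0) := mt (hrigid w) hw
  simp only [additive_iff hR hℓ] at not_additive
  have h112 : ¬ R 1 1 2 := fun h ↦ h123 (bracket_of_square hR hℓ h h023).2
  have h12 (q) : ¬ R 1 2 q := fun h ↦ by
    have : ∀ q : Fin 4, (![1, 1, 2, 3] : Fin 4 → ℕ) 1 + ![1, 1, 2, 3] 2 ≤ ![1, 1, 2, 3] q →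
        q = 3 := by decide
    exact h123 (this q (hℓ.add_le h) ▸ h)
  have h00 := not_bracket_two_and_three hR (i := 0) (j := 0)
  have h01 := not_bracket_two_and_three hR (i := 0) (j := 1)
  by_cases h012 : R 0 1 2
  · have h013 := h01 h012
    have h113 : R 1 1 3 := by
      by_contra h113
      by_cases h003 : R 0 0 3
      · have h002 : ¬ R 0 0 2 := fun h ↦ h00 h h003
        exact not_additive ![1, 0, 1, 2] (by decide) (by simp [*])
      · exact not_additive ![1, 1, 2, 3] (by decide) (by simp [*])
    have : R 0 0 2 ∨ R 0 0 3 := by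
      by_contra! h
      exact not_additive ![1, 2, 3, 4] (by decide) (by simp [h, h013, h112, h123])
    exact ⟨h023, h113, .inr (.inl ⟨h012, h12, this⟩)⟩
  · have h002 : R 0 0 2 := by
      obtain h | h | h := exists_bracket_eq_two hR hℓ
      exacts [h, absurd h h012, absurd h h112]
    have h113 : R 1 1 3 := by
      by_contra h113
      exact not_additive ![1, 2, 2, 3] (by decide) (by simp [*])
    have h013 : R 0 1 3 := by
      by_contra h013
      exact not_additive ![2, 3, 4, 6] (by decide) (by simp [*])
    exact ⟨h023, h113, .inr (.inr ⟨h002, h013⟩)⟩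

theorem isExceptional_or_reindex_swap (hrigid : IsRigid R) : IsExceptional R ∨
    IsExceptional fun i j q ↦ R (Equiv.swap 0 1 i) (Equiv.swap 0 1 j) (Equiv.swap 0 1 q) := by
  have hR' := hR.reindex (σ := Equiv.swap 0 1) (by decide)
  have hℓ' := hℓ.reindex (Equiv.swap 0 1)
  rw [show ![1, 1, 2, 3] ∘ Equiv.swap (0 : Fin 4) 1 = ![1, 1, 2, 3] by decide] at hℓ'
  by_cases h023 : R 0 2 3 <;> by_cases h123 : R 1 2 3
  · obtain ⟨h012, h003 | h113⟩ := bracket_zero_one_and_exists_square hR hℓ hrigid h023 h123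
    · exact .inr ⟨h123, h003, .inl ⟨hR.symm h012, h023⟩⟩
    · exact .inl ⟨h023, h113, .inl ⟨h012, h123⟩⟩
  · exact .inl (isExceptional_of_not_bracket hR hℓ hrigid h023 h123)
  · exact .inr (isExceptional_of_not_bracket hR' hℓ' (hrigid.reindex _) h123 h023)
  · exact ((exists_bracket_two_eq_three hℓ).elim h023 h123).elim

end ThreeStep

theorem IsBracketTable.exists_reindex_isExceptional (hR : IsBracketTable R 3) (hrigid : IsRigid R)
    (hnil : ∃ t, ∀ q, ¬ HasDepth R t q) :
    ∃ σ : Equiv.Perm (Fin 4), σ 3 = 3 ∧ IsLevel (fun i j q ↦ R (σ i) (σ j) (σ q)) ![1, 1, 2, 3] ∧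
      IsExceptional fun i j q ↦ R (σ i) (σ j) (σ q) := by
  obtain ⟨ℓ, hℓ⟩ := hR.exists_isLevel hnil
  obtain ⟨σ, hmono⟩ : ∃ σ : Equiv.Perm (Fin 4), Monotone (ℓ ∘ σ) := ⟨_, Tuple.monotone_sort ℓ⟩
  have hσ : σ 3 = 3 := by
    by_contra hne
    have := hmono (Fin.le_last (σ.symm 3))
    simp only [Function.comp_apply, Equiv.apply_symm_apply] at this
    exact this.not_gt (hR.level_lt_central hℓ hne)
  have hR' := hR.reindex hσ
  have hrigid' := hrigid.reindex σ
  have hℓ' := hℓ.reindex σ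
  rw [hℓ'.eq_of_isRigid hR' hrigid' hmono] at hℓ'
  obtain h | h := isExceptional_or_reindex_swap hR' hℓ' hrigid'
  · exact ⟨σ, hσ, hℓ', h⟩
  · refine ⟨σ * Equiv.swap 0 1, hσ, ?_, h⟩
    have hswap := hℓ'.reindex (Equiv.swap 0 1)
    rwa [show ![1, 1, 2, 3] ∘ Equiv.swap (0 : Fin 4) 1 = ![1, 1, 2, 3] by decide] at hswap

end FourSummands

/-! ### Arithmetic of the highest weights

In the three alternatives of `IsExceptional`, `n, m, p, k` are the highest weights of
`V 0, V 1, V 2, V 3`, and each `rᵢ` is the order of the transvectant realizing a bracket. -/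

section Weights

variable {n m p k r₀ r₁ r₂ r₃ : ℕ}

theorem weights_false_first (hdim : n + m + p + k ≤ 17) (hmk : m ≠ k) (hnk : p ≠ 0 → n ≠ k)
    (h₀ : m + m = k + 2 * r₀) (hodd : Odd r₀)
    (h₁ : n + m = p + 2 * r₁)
    (h₂ : m + p = k + 2 * r₂) (hr₂p : r₂ ≤ p)
    (h₃ : n + p = k + 2 * r₃)
    (hmul : r₁ + r₂ ≤ n + 1 → (r₁ + r₂) * (n + 1 - (r₁ + r₂)) = 2 * r₂ * (p + 1 - r₂))
    (heven : n ≤ r₁ + r₂ → Even (r₁ + r₂ - n)) : False := by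
  obtain ⟨s, rfl⟩ := hodd
  obtain rfl : r₁ = (n + m - p) / 2 := by omega
  obtain rfl : r₂ = (m + p - k) / 2 := by omega
  have hk : k = 2 ∨ k = 6 := by omega
  have hm4 : m = 4 ∨ m = 6 ∨ m = 8 := by omega
  have hn : n ≤ 9 := by omega
  obtain ⟨hp, hp'⟩ : 1 ≤ p ∧ p ≤ 9 := by omega
  rcases hk with rfl | rfl <;> rcases hm4 with rfl | rfl | rfl
  all_goals interval_cases p <;> try omega
  all_goals interval_cases n <;> try omega
  all_goals revert hmul heven; decide

theorem weights_false_second (hdim : n + m + p + k ≤ 17) (hmk : m ≠ k) (hnk : p ≠ 0 → n ≠ k)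
    (h₀ : m + m = k + 2 * r₀) (hodd : Odd r₀)
    (h₁ : n + m = p + 2 * r₁) (hr₁n : r₁ ≤ n)
    (h₃ : n + p = k + 2 * r₃) (hr₃p : r₃ ≤ p)
    (h₂ : n + n = p + 2 * r₂ ∨ n + n = k + 2 * r₂) (hodd₂ : Odd r₂)
    (hmul : r₁ + r₃ ≤ m + 1 → (r₁ + r₃) * (m + 1 - (r₁ + r₃)) = 2 * r₃ * (p + 1 - r₃))
    (heven : m ≤ r₁ + r₃ → Even (r₁ + r₃ - m)) : False := by
  obtain ⟨s, rfl⟩ := hodd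
  obtain ⟨s₂, rfl⟩ := hodd₂
  have hk : k = 2 ∨ k = 6 := by omega
  obtain ⟨t, rfl⟩ : Even n := by grind
  obtain rfl : r₁ = (t + t + m - p) / 2 := by omega
  obtain rfl : r₃ = (t + t + p - k) / 2 := by omega
  have hm4 : m = 4 ∨ m = 6 ∨ m = 8 := by omega
  have ht : t ≤ 4 := by omega
  have hp : p ≤ 9 := by omega
  rcases hk with rfl | rfl <;> rcases hm4 with rfl | rfl | rfl
  all_goals interval_cases p <;> try omega
  all_goals interval_cases t <;> try omega
  all_goals revert hmul heven; decide

theorem weights_false_third (hdim : n + m + p + k ≤ 17)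
    (hnk : p ≠ 0 → n ≠ k) (h₀ : m + m = k + 2 * r₀) (hodd : Odd r₀)
    (h₁ : n + n = p + 2 * r₁) (hodd₁ : Odd r₁)
    (h₂ : n + m = k + 2 * r₂) (hr₂m : r₂ ≤ m)
    (h₃ : n + p = k + 2 * r₃) (hr₃p : r₃ ≤ p)
    (hne : 1 < r₁ → r₃ ≠ 0) (heven : Even n → n ≤ r₁ + r₃ → Even (r₁ + r₃ - n)) : False := by
  obtain ⟨s, rfl⟩ := hodd
  obtain ⟨t, rfl⟩ := hodd₁
  have hn : n = 4 := by omega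
  have hs : p = 2 ∧ k = 2 ∨ p = 6 ∧ k = 2 ∨ p = 2 ∧ k = 6 := by omega
  subst hn
  have := heven (by decide)
  grind

end Weights

/-! ### Ideals acting nilpotently -/

section NilpotentAction

variable {K L M : Type*} [Field K] [LieRing L] [LieAlgebra K L] {I : LieIdeal K L}
  [AddCommGroup M] [Module K M] [LieRingModule L M] [LieModule K L M]

theorem le_lie_top_of_isCompl (hL : ⁅(⊤ : LieIdeal K L), (⊤ : LieIdeal K L)⁆ = ⊤)
    {s : LieSubalgebra K L} (hs : IsCompl s.toSubmodule I.toSubmodule) :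
    I ≤ ⁅(⊤ : LieIdeal K L), I⁆ := by
  have mem_lie {x y} (hy : y ∈ I) : ⁅x, y⁆ ∈ ⁅(⊤ : LieIdeal K L), I⁆ :=
    LieSubmodule.lie_mem_lie (LieSubmodule.mem_top x) hy
  have top_le : (⊤ : Submodule K L) ≤ s.toSubmodule ⊔ (⁅(⊤ : LieIdeal K L), I⁆).toSubmodule := by
    rw [← (congrArg LieSubmodule.toSubmodule hL).trans LieSubmodule.top_toSubmodule,
      LieSubmodule.lieIdeal_oper_eq_linear_span', Submodule.span_le]
    rintro _ ⟨x, -, y, -, rfl⟩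
    obtain ⟨a, ha, r, hr, rfl⟩ :=
      Submodule.mem_sup.1 (hs.sup_eq_top.ge (Submodule.mem_top (x := x)))
    obtain ⟨b, hb, t, ht, rfl⟩ :=
      Submodule.mem_sup.1 (hs.sup_eq_top.ge (Submodule.mem_top (x := y)))
    rw [lie_add, add_lie, add_assoc, ← lie_skew r b]
    exact Submodule.add_mem_sup (s.lie_mem ha hb) (add_mem (neg_mem (mem_lie hr)) (mem_lie ht))
  intro x hx
  obtain ⟨a, ha, y, hy, rfl⟩ := Submodule.mem_sup.1 (top_le (Submodule.mem_top (x := x)))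
  have haI : a ∈ I := (add_mem_cancel_right (LieSubmodule.lie_le_right I ⊤ hy)).1 hx
  rw [Submodule.disjoint_def.1 hs.disjoint a ha haI, zero_add]
  exact hy

section FiniteDimensional

variable [IsAlgClosed K] [CharZero K] [FiniteDimensional K M] [LieAlgebra.IsSolvable I]

-- By Lie's theorem `I` has a common eigenvector, whose eigenvalue vanishes on commutators.
theorem exists_ne_zero_forall_lie_eq_zero [Nontrivial M] (hI : I ≤ ⁅(⊤ : LieIdeal K L), I⁆) :
    ∃ m : M, m ≠ 0 ∧ ∀ x ∈ I, ⁅x, m⁆ = 0 := by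
  obtain ⟨χ, hχ⟩ : ∃ χ : Dual K I, Nontrivial (LieModule.weightSpace M χ) :=
    LieModule.exists_nontrivial_weightSpace_of_isSolvable K I M
  let N : LieSubmodule K L M := LieModule.weightSpaceOfIsLieTower K M χ
  have lie_eq {m} (hm : m ∈ N) {y} (hy : y ∈ I) : ⁅y, m⁆ = χ ⟨y, hy⟩ • m :=
    (LieModule.mem_weightSpace (χ := χ) m).1 hm ⟨y, hy⟩
  obtain ⟨⟨m, hm⟩, hm₀⟩ := exists_ne (0 : LieModule.weightSpace M χ)
  replace hm : m ∈ N := hm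
  refine ⟨m, fun h ↦ hm₀ (Subtype.ext h), fun x hx ↦ ?_⟩
  have hx' : x ∈ (⁅(⊤ : LieIdeal K L), I⁆).toSubmodule := hI hx
  rw [LieSubmodule.lieIdeal_oper_eq_linear_span'] at hx'
  refine Submodule.span_induction (p := fun x _ ↦ ⁅x, m⁆ = 0) ?_ (zero_lie m)
    (fun x y _ _ hx hy ↦ by rw [add_lie, hx, hy, add_zero])
    (fun c x _ hx ↦ by rw [smul_lie, hx, smul_zero]) hx'
  rintro _ ⟨x, -, y, hy, rfl⟩
  rw [lie_lie, lie_eq (N.lie_mem hm) hy, lie_eq hm hy, lie_smul, sub_self]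

theorem eq_bot_of_le_lie (hI : I ≤ ⁅(⊤ : LieIdeal K L), I⁆) {N : LieSubmodule K L M}
    (hN : N ≤ ⁅I, N⁆) : N = ⊥ := by
  by_contra hne
  have : Nontrivial N := (LieSubmodule.nontrivial_iff_ne_bot K L M).2 hne
  obtain ⟨φ, hφ₀, hφ⟩ := exists_ne_zero_forall_lie_eq_zero (M := Dual K N) hI
  have le_map : N.toSubmodule ≤ (LinearMap.ker φ).map N.toSubmodule.subtype := by
    refine le_trans (show N.toSubmodule ≤ (⁅I, N⁆).toSubmodule from hN) ?_
    rw [LieSubmodule.lieIdeal_oper_eq_linear_span', Submodule.span_le]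
    rintro _ ⟨x, hx, m, hm, rfl⟩
    exact ⟨(⁅x, (⟨m, hm⟩ : N)⁆ : N), neg_eq_zero.1 (LinearMap.congr_fun (hφ x hx) ⟨m, hm⟩), rfl⟩
  refine hφ₀ (LinearMap.ext fun m ↦ ?_)
  obtain ⟨m', hm', h⟩ := le_map m.2
  rwa [← Subtype.ext h]

theorem exists_lcs_eq_bot (hI : I ≤ ⁅(⊤ : LieIdeal K L), I⁆) : ∃ k, I.lcs M k = ⊥ := by
  have hanti : Antitone (I.lcs M) := antitone_nat_of_succ_le fun k ↦ by
    rw [LieIdeal.lcs_succ]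
    exact LieSubmodule.lie_le_right _ I
  have : WellFoundedGT (LieSubmodule K L M)ᵒᵈ :=
    LieSubmodule.wellFoundedLT_of_isArtinian K L M
  obtain ⟨k, hk⟩ := WellFoundedGT.monotone_chain_condition (α := (LieSubmodule K L M)ᵒᵈ)
    ⟨fun k ↦ OrderDual.toDual (I.lcs M k), hanti⟩
  have hk' : I.lcs M k = I.lcs M (k + 1) := hk (k + 1) k.le_succ
  exact ⟨k, eq_bot_of_le_lie hI (hk'.trans (LieIdeal.lcs_succ I M k)).le⟩

theorem eq_zero_or_eq_zero_of_lie_eq_smul (hI : I ≤ ⁅(⊤ : LieIdeal K L), I⁆) {x : L} (hx : x ∈ I)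
    {m : M} {c : K} (h : ⁅x, m⁆ = c • m) : c = 0 ∨ m = 0 := by
  refine or_iff_not_imp_left.2 fun hc ↦ ?_
  obtain ⟨k, hk⟩ := exists_lcs_eq_bot (M := M) hI
  have hmem (k) : m ∈ I.lcs M k := by
    induction k with
    | zero => exact LieSubmodule.mem_top m
    | succ k ih =>
      rw [LieIdeal.lcs_succ, ← inv_smul_smul₀ hc m, ← h]
      exact SMulMemClass.smul_mem _ (LieSubmodule.lie_mem_lie hx ih)
  exact (LieSubmodule.mem_bot m).1 (hk ▸ hmem k)

end FiniteDimensional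

end NilpotentAction

/-! ### The bracket table of a decomposition of the radical -/

section Decomposition

variable {g : Type*} [LieRing g] [LieAlgebra ℂ g]

section LieSpan

variable {A B C : Submodule ℂ g}

theorem lie_mem_lieSpan2 {x y : g} (hx : x ∈ A) (hy : y ∈ B) : ⁅x, y⁆ ∈ lieSpan2 g A B :=
  Submodule.subset_span ⟨x, hx, y, hy, rfl⟩

theorem lieSpan2_le_iff : lieSpan2 g A B ≤ C ↔ ∀ x ∈ A, ∀ y ∈ B, ⁅x, y⁆ ∈ C := by
  refine ⟨fun h x hx y hy ↦ h (lie_mem_lieSpan2 hx hy), fun h ↦ Submodule.span_le.2 ?_⟩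
  rintro _ ⟨x, hx, y, hy, rfl⟩
  exact h x hx y hy

theorem lieSpan2_comm (A B : Submodule ℂ g) : lieSpan2 g A B = lieSpan2 g B A := by
  have le (A B : Submodule ℂ g) : lieSpan2 g A B ≤ lieSpan2 g B A :=
    lieSpan2_le_iff.2 fun x hx y hy ↦ by
      rw [← lie_skew]
      exact neg_mem (lie_mem_lieSpan2 hy hx)
  exact le_antisymm (le A B) (le B A)

theorem lieSpan2_lieSpan2_le (A B C : Submodule ℂ g) :
    lieSpan2 g A (lieSpan2 g B C) ≤
      lieSpan2 g B (lieSpan2 g A C) ⊔ lieSpan2 g C (lieSpan2 g A B) := by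
  refine lieSpan2_le_iff.2 fun x hx w hw ↦ ?_
  have jacobi : lieSpan2 g B C ≤ (lieSpan2 g B (lieSpan2 g A C) ⊔
      lieSpan2 g C (lieSpan2 g A B)).comap (LieModule.toEnd ℂ g g x) :=
    lieSpan2_le_iff.2 fun y hy z hz ↦ by
      rw [Submodule.mem_comap, LieModule.toEnd_apply_apply, leibniz_lie, add_comm,
        ← lie_skew ⁅x, y⁆]
      exact add_mem
        (Submodule.mem_sup_left (lie_mem_lieSpan2 hy (lie_mem_lieSpan2 hx hz)))
        (neg_mem (Submodule.mem_sup_right (lie_mem_lieSpan2 hz (lie_mem_lieSpan2 hx hy))))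
  exact jacobi hw

end LieSpan

/-- The bracket table of a family of subspaces: `bracketTable V i j q` means `[V i, V j] = V q`. -/
def bracketTable {k : ℕ} (V : Fin k → Submodule ℂ g) (i j q : Fin k) : Prop :=
  lieSpan2 g (V i) (V j) = V q

variable {k : ℕ} {s : LieSubalgebra ℂ g} {V : Fin k → Submodule ℂ g} {i j q z : Fin k}

theorem lie_mem_of_bracketTable (h : bracketTable V i j q) {x y : g} (hx : x ∈ V i)
    (hy : y ∈ V j) : ⁅x, y⁆ ∈ V q :=
  h.le (lie_mem_lieSpan2 hx hy)

namespace Convention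

theorem lieSpan2_le_iSup (hconv : Convention g V) {p : Fin k → Prop}
    (h : ∀ q, bracketTable V i j q → p q) : lieSpan2 g (V i) (V j) ≤ ⨆ (q) (_ : p q), V q := by
  by_cases hbot : lieSpan2 g (V i) (V j) = ⊥
  · exact hbot.trans_le bot_le
  · obtain ⟨q, hq, -⟩ := hconv i j hbot
    exact hq.trans_le (le_iSup₂_of_le q (h q hq) le_rfl)

theorem lie_eq_zero (hconv : Convention g V) (h : ∀ q, ¬ bracketTable V i j q) {x y : g}
    (hx : x ∈ V i) (hy : y ∈ V j) : ⁅x, y⁆ = 0 := by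
  simpa using hconv.lieSpan2_le_iSup (p := fun _ ↦ False) h (lie_mem_lieSpan2 hx hy)

end Convention

namespace IsDecomp

theorem le_radical (hV : IsDecomp g s V) (i : Fin k) :
    V i ≤ (LieAlgebra.radical ℂ g).toSubmodule :=
  hV.2.2 ▸ le_iSup V i

theorem not_le_iSup_ne (hV : IsDecomp g s V) (q : Fin k) : ¬ V q ≤ ⨆ (j) (_ : j ≠ q), V j :=
  fun h ↦ (hV.1 q).1 ((hV.2.1 q).eq_bot_of_le h)

theorem eq_of_le (hV : IsDecomp g s V) (h : V i ≤ V j) : i = j := by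
  by_contra hij
  exact hV.not_le_iSup_ne i (h.trans (le_iSup₂_of_le j (Ne.symm hij) le_rfl))

theorem exists_lie_ne_zero (hV : IsDecomp g s V) (h : bracketTable V i j q) :
    ∃ x ∈ V i, ∃ y ∈ V j, ⁅x, y⁆ ≠ 0 := by
  by_contra! h₀
  exact (hV.1 q).1 (le_bot_iff.1 (h.ge.trans (lieSpan2_le_iff.2 h₀)))

theorem lie_eq_zero_of_mem_center (hV : IsDecomp g s V) (hz : centerRad g = V z) {x y : g}
    (hx : x ∈ V j) (hy : y ∈ V z) : ⁅x, y⁆ = 0 := by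
  rw [← hz] at hy
  rw [← lie_skew, hy.2 x (hV.le_radical j hx), neg_zero]

theorem exists_bracketTable_of_ne (hV : IsDecomp g s V) (hconv : Convention g V)
    (hz : centerRad g = V z) (hi : i ≠ z) : ∃ j q, bracketTable V i j q := by
  by_contra! h
  refine hi (hV.eq_of_le fun x hx ↦ hz ▸ ⟨hV.le_radical i hx, fun y hy ↦ ?_⟩)
  have le_ker : ⨆ j, V j ≤ LinearMap.ker (LieModule.toEnd ℂ g g x) :=
    iSup_le fun j y hy ↦ hconv.lie_eq_zero (h j) hx hy
  exact le_ker (hV.2.2.ge hy)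

theorem isBracketTable (hV : IsDecomp g s V) (hconv : Convention g V) (hz : centerRad g = V z) :
    IsBracketTable (bracketTable V) z where
  symm h := (lieSpan2_comm _ _).trans h
  unique h h' := hV.eq_of_le (h.symm.trans h').le
  not_central j q h := by
    obtain ⟨x, hx, y, hy, hne⟩ := hV.exists_lie_ne_zero h
    exact hne (by rw [← lie_skew, hV.lie_eq_zero_of_mem_center hz hy hx, neg_zero])
  exists_of_ne i hi := hV.exists_bracketTable_of_ne hconv hz hi
  jacobi {i j l m q} hlm hij := by
    have le_of {a b c : Fin k} (h : ∀ r, bracketTable V b c r → ¬ bracketTable V a r q) :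
        lieSpan2 g (V a) (lieSpan2 g (V b) (V c)) ≤ ⨆ (r) (_ : r ≠ q), V r := by
      by_cases hbc : lieSpan2 g (V b) (V c) = ⊥
      · rw [hbc]
        exact lieSpan2_le_iff.2 fun x _ y hy ↦ by simp [(Submodule.mem_bot ℂ).1 hy]
      · obtain ⟨r, hr, -⟩ := hconv b c hbc
        rw [hr]
        exact hconv.lieSpan2_le_iSup fun t ht htq ↦ h r hr (htq ▸ ht)
    by_contra! h
    refine hV.not_le_iSup_ne q ?_
    calc V q = lieSpan2 g (V i) (lieSpan2 g (V l) (V m)) := (hlm.symm ▸ hij : _ = _).symm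
      _ ≤ _ := lieSpan2_lieSpan2_le _ _ _
      _ ≤ _ := sup_le (le_of h.1) (le_of h.2)

theorem le_lcs_of_hasDepth (hV : IsDecomp g s V) {t : ℕ} (h : HasDepth (bracketTable V) t q) :
    V q ≤ ((LieAlgebra.radical ℂ g).lcs g t).toSubmodule := by
  induction h with
  | zero q => exact fun x _ ↦ LieSubmodule.mem_top x
  | @succ i j q t h _ ih =>
    refine h.ge.trans (lieSpan2_le_iff.2 fun x hx y hy ↦ ?_)
    rw [LieIdeal.lcs_succ]
    exact LieSubmodule.lie_mem_lie (hV.le_radical i hx) (ih hy)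

theorem exists_forall_not_hasDepth [FiniteDimensional ℂ g] (hV : IsDecomp g s V)
    (hrad : LieAlgebra.radical ℂ g ≤ ⁅(⊤ : LieIdeal ℂ g), LieAlgebra.radical ℂ g⁆) :
    ∃ t, ∀ q, ¬ HasDepth (bracketTable V) t q := by
  obtain ⟨t, ht⟩ := exists_lcs_eq_bot (M := g) hrad
  refine ⟨t, fun q h ↦ (hV.1 q).1 (le_bot_iff.1 ((hV.le_lcs_of_hasDepth h).trans ?_))⟩
  rw [ht, LieSubmodule.bot_toSubmodule]

end IsDecomp

namespace IsIrreducibleSMod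

variable {s : LieSubalgebra ℂ g} {W : Submodule ℂ g}

theorem exists_isSl2String [FiniteDimensional ℂ g] (hW : IsIrreducibleSMod g s W) {h e f : s}
    {t : IsSl2Triple h e f} (ht : t.toLieSubalgebra ℂ = ⊤) :
    ∃ (n : ℕ) (v : ℕ → g), IsSl2String ℂ h e f n v ∧ Submodule.span ℂ (Set.range v) = W := by
  obtain ⟨hne, hinv, hirr⟩ := hW
  let N : LieSubmodule ℂ s g := { W with lie_mem := fun {x m} hm ↦ hinv x x.2 m hm }
  have : Nontrivial N := (Submodule.nontrivial_iff_ne_bot (p := W)).2 hne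
  obtain ⟨n, v, hv⟩ := IsSl2String.exists_of_nontrivial (K := ℂ) (M := N) t
  have hv' := hv.map N.injective_incl
  refine ⟨n, _, hv', (hirr _ ?_ fun x hx y hy ↦ hv'.lie_mem_span_range ht ⟨x, hx⟩ hy).resolve_left
    fun hbot ↦ ?_⟩
  · rw [Submodule.span_le]
    rintro _ ⟨i, rfl⟩
    exact (v i).2
  · exact hv'.ne_zero 0 n.zero_le (Submodule.span_eq_bot.1 hbot _ ⟨0, rfl⟩)

theorem eq_span_singleton (hW : IsIrreducibleSMod g s W) {x : g} (hx : x ∈ W) (hx₀ : x ≠ 0)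
    (hs : ∀ a ∈ s, ⁅a, x⁆ = 0) : W = Submodule.span ℂ {x} := by
  refine ((hW.2.2 _ ((Submodule.span_singleton_le_iff_mem _ _).2 hx) fun a ha y hy ↦ ?_)
    |>.resolve_left (by simpa using hx₀)).symm
  obtain ⟨c, rfl⟩ := Submodule.mem_span_singleton.1 hy
  rw [lie_smul, hs a ha, smul_zero]
  exact zero_mem _

end IsIrreducibleSMod

/-- Highest weights `w i` and string bases `v i` of the members `V i` of a family of simple
`sl₂`-modules. -/
structure IsStringBasis {s : LieSubalgebra ℂ g} (h e f : s) {k : ℕ} (V : Fin k → Submodule ℂ g)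
    (w : Fin k → ℕ) (v : Fin k → ℕ → g) : Prop where
  isSl2String : ∀ i, IsSl2String ℂ h e f (w i) (v i)
  span_eq : ∀ i, Submodule.span ℂ (Set.range (v i)) = V i

section Derivations

variable {w : Fin k → ℕ} {v : Fin k → ℕ → g} {h e f : s}

theorem IsStringBasis.mem (hv : IsStringBasis h e f V w v) (i : Fin k) (j : ℕ) : v i j ∈ V i :=
  hv.span_eq i ▸ Submodule.subset_span ⟨j, rfl⟩

theorem IsStringBasis.finrank_eq (hv : IsStringBasis h e f V w v) (i : Fin k) :
    finrank ℂ (V i) = w i + 1 := by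
  rw [← hv.span_eq i, (hv.isSl2String i).finrank_span]

theorem mem_of_forall_lie_eq_zero_of_isCompl {I : LieIdeal ℂ g}
    (hs : IsCompl s.toSubmodule I.toSubmodule) {t : IsSl2Triple h e f}
    (ht : t.toLieSubalgebra ℂ = ⊤) {x : g} (hx : ∀ a ∈ s, ⁅a, x⁆ = 0) : x ∈ I := by
  obtain ⟨a, ha, y, hy, rfl⟩ :=
    Submodule.mem_sup.1 (hs.sup_eq_top ▸ Submodule.mem_top : x ∈ s.toSubmodule ⊔ I.toSubmodule)
  have lie_a (b : g) (hb : b ∈ s) : ⁅b, a⁆ = 0 := by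
    refine Submodule.disjoint_def.1 hs.disjoint _ (s.lie_mem hb ha) ?_
    rw [eq_neg_of_add_eq_zero_left ((lie_add b a y).symm.trans (hx b hb))]
    exact neg_mem (lie_mem_right ℂ g I b y hy)
  have ha₀ : a = 0 := congrArg Subtype.val <|
    eq_zero_of_forall_lie_eq_zero ht (x := ⟨a, ha⟩) fun b ↦ Subtype.ext (lie_a b b.2)
  rwa [ha₀, zero_add]

namespace IsDecomp

theorem exists_isStringBasis [FiniteDimensional ℂ g] (hV : IsDecomp g s V)
    {t : IsSl2Triple h e f} (ht : t.toLieSubalgebra ℂ = ⊤) :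
    ∃ w v, IsStringBasis h e f V w v := by
  choose w v hv using fun i ↦ (hV.1 i).exists_isSl2String ht
  exact ⟨w, v, fun i ↦ (hv i).1, fun i ↦ (hv i).2⟩

theorem finrank_add_sum [FiniteDimensional ℂ g] (hV : IsDecomp g s V)
    (hs : IsCompl s.toSubmodule (LieAlgebra.radical ℂ g).toSubmodule)
    (hv : IsStringBasis h e f V w v) :
    finrank ℂ s + ∑ i, (w i + 1) = finrank ℂ g := by
  rw [← Submodule.finrank_add_eq_of_isCompl hs, ← hV.2.2, finrank_iSup_of_iSupIndep hV.2.1]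
  simp only [hv.finrank_eq]
  rfl

theorem weight_eq_zero_of_forall_lie_eq_zero (hV : IsDecomp g s V)
    (hv : IsStringBasis h e f V w v) {x : g} (hx : x ∈ V i) (hx₀ : x ≠ 0)
    (hs : ∀ a ∈ s, ⁅a, x⁆ = 0) : w i = 0 := by
  have := hv.finrank_eq i
  rw [(hV.1 i).eq_span_singleton hx hx₀ hs, finrank_span_singleton hx₀] at this
  omega

theorem mem_of_forall_lie_eq_zero (hV : IsDecomp g s V) (hv : IsStringBasis h e f V w v) {x : g}
    (hx : x ∈ LieAlgebra.radical ℂ g) (hs : ∀ a ∈ s, ⁅a, x⁆ = 0) (hw : ∀ i ≠ q, w i ≠ 0) :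
    x ∈ V q := by
  obtain ⟨y, hy, rfl⟩ := (Submodule.mem_iSup_iff_exists_finsupp V x).1 (hV.2.2.ge hx)
  have lie_y (a : g) (ha : a ∈ s) : ∀ i ∈ y.support, ⁅a, y i⁆ = 0 :=
    (iSupIndep_iff_finsetSum_eq_zero_imp_eq_zero V).1 hV.2.1 y.support (fun i ↦ ⁅a, y i⁆)
      (fun i _ ↦ (hV.1 i).2.1 a ha _ (hy i)) (by rw [← lie_sum]; exact hs a ha)
  refine sum_mem fun i hi ↦ ?_
  obtain rfl | hiq := eq_or_ne i q
  · exact hy i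
  · exact absurd (hV.weight_eq_zero_of_forall_lie_eq_zero hv (hy i) (Finsupp.mem_support_iff.1 hi)
      fun a ha ↦ lie_y a ha i hi) (hw i hiq)

theorem exists_lieDerivation (hV : IsDecomp g s V)
    (hs : IsCompl s.toSubmodule (LieAlgebra.radical ℂ g).toSubmodule) {E : g →ₗ[ℂ] g}
    (h₀ : ∀ a ∈ s, E a = 0) (hE : ∀ a ∈ s, ∀ i, ∀ y ∈ V i, E ⁅a, y⁆ = ⁅a, E y⁆)
    (hleib : ∀ i j, ∀ x ∈ V i, ∀ y ∈ V j, E ⁅x, y⁆ = ⁅x, E y⁆ - ⁅y, E x⁆) :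
    ∃ D : LieDerivation ℂ g g, ∀ y, D y = E y := by
  let Q (x : g) : Submodule ℂ g := LinearMap.eqLocus (E ∘ₗ LieModule.toEnd ℂ g g x)
    (LieModule.toEnd ℂ g g x ∘ₗ E + LieModule.toEnd ℂ g g (E x))
  have mem_Q {x y : g} : y ∈ Q x ↔ E ⁅x, y⁆ = ⁅x, E y⁆ - ⁅y, E x⁆ := by
    rw [sub_eq_add_neg, lie_skew]
    rfl
  have mem_comm {x y : g} (h : y ∈ Q x) : x ∈ Q y := by
    rw [mem_Q] at h ⊢
    rw [← lie_skew, map_neg, h, neg_sub]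
  have rad_le {x : g} (h : ∀ i, V i ≤ Q x) : (LieAlgebra.radical ℂ g).toSubmodule ≤ Q x :=
    hV.2.2 ▸ iSup_le h
  have mem_of_mem_s {x y : g} (hx : x ∈ s) (hy : y ∈ LieAlgebra.radical ℂ g) : y ∈ Q x :=
    rad_le (fun i y hy ↦ mem_Q.2 (by rw [hE x hx i y hy, h₀ x hx, lie_zero, sub_zero])) hy
  have mem_of_mem_rad {x y : g} (hx : x ∈ LieAlgebra.radical ℂ g)
      (hy : y ∈ LieAlgebra.radical ℂ g) : y ∈ Q x :=
    rad_le (fun i y hy ↦ mem_comm (rad_le (fun j x hx ↦ mem_Q.2 (hleib i j y hy x hx)) hx)) hy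
  have eq_top {x : g} (h : ∀ a ∈ s, a ∈ Q x) (h' : ∀ y ∈ LieAlgebra.radical ℂ g, y ∈ Q x) :
      Q x = ⊤ :=
    top_unique (hs.sup_eq_top.symm.trans_le (sup_le h h'))
  have Q_eq_top (x : g) : Q x = ⊤ := by
    refine eq_top (fun a ha ↦ mem_comm ?_) fun y hy ↦ mem_comm ?_
    · refine (eq_top (fun b hb ↦ mem_Q.2 ?_) fun y hy ↦ mem_of_mem_s ha hy).ge trivial
      rw [h₀ _ (s.lie_mem ha hb), h₀ a ha, h₀ b hb, lie_zero, lie_zero, sub_zero]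
    · exact (eq_top (fun b hb ↦ mem_comm (mem_of_mem_s hb hy)) fun x ↦ mem_of_mem_rad hy).ge trivial
  exact ⟨⟨E, fun x y ↦ mem_Q.1 (Q_eq_top x ▸ Submodule.mem_top)⟩, fun _ ↦ rfl⟩

theorem exists_mem_radical_forall_lie_eq (hV : IsDecomp g s V) (hconv : Convention g V)
    (hs : IsCompl s.toSubmodule (LieAlgebra.radical ℂ g).toSubmodule) {t : IsSl2Triple h e f}
    (ht : t.toLieSubalgebra ℂ = ⊤) (hD : ∀ D : LieDerivation ℂ g g, IsInnerDer D)
    {φ : Fin k → g →ₗ[ℂ] g} (hφ : ∀ i, ∀ a ∈ s, ∀ y ∈ V i, φ i ⁅a, y⁆ = ⁅a, φ i y⁆)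
    (hzero : ∀ i j, (∀ q, ¬ bracketTable V i j q) → ∀ x ∈ V i, ∀ y ∈ V j,
      ⁅x, φ j y⁆ = ⁅y, φ i x⁆)
    (hleib : ∀ i j q, bracketTable V i j q → ∀ x ∈ V i, ∀ y ∈ V j,
      φ q ⁅x, y⁆ = ⁅x, φ j y⁆ - ⁅y, φ i x⁆) :
    ∃ x ∈ LieAlgebra.radical ℂ g, (∀ a ∈ s, ⁅a, x⁆ = 0) ∧ ∀ i, ∀ y ∈ V i, ⁅x, y⁆ = φ i y := by
  obtain ⟨E₀, hE₀⟩ := exists_linearMap_of_iSupIndep hV.2.1 φ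
  let E : g →ₗ[ℂ] g :=
    LinearMap.ofIsCompl hs 0 (E₀ ∘ₗ (LieAlgebra.radical ℂ g).toSubmodule.subtype)
  have hEs (a : g) (ha : a ∈ s) : E a = 0 := LinearMap.ofIsCompl_apply_left hs ⟨a, ha⟩
  have hEV (i : Fin k) (y : g) (hy : y ∈ V i) : E y = φ i y :=
    (LinearMap.ofIsCompl_apply_right hs ⟨y, hV.le_radical i hy⟩).trans (hE₀ i y hy)
  obtain ⟨D, hDE⟩ := hV.exists_lieDerivation hs hEs
    (fun a ha i y hy ↦ by rw [hEV i _ ((hV.1 i).2.1 a ha y hy), hEV i y hy, hφ i a ha y hy])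
    fun i j x hx y hy ↦ by
      rw [hEV i x hx, hEV j y hy]
      by_cases hij : ∃ q, bracketTable V i j q
      · obtain ⟨q, hq⟩ := hij
        rw [hEV q _ (lie_mem_of_bracketTable hq hx hy), hleib i j q hq x hx y hy]
      · push Not at hij
        rw [hconv.lie_eq_zero hij hx hy, map_zero, hzero i j hij x hx y hy, sub_self]
  obtain ⟨x, hx⟩ := hD D
  have hsx (a : g) (ha : a ∈ s) : ⁅a, x⁆ = 0 := by
    rw [← lie_skew, ← hx, hDE, hEs a ha, neg_zero]
  exact ⟨x, mem_of_forall_lie_eq_zero_of_isCompl hs ht hsx, hsx,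
    fun i y hy ↦ by rw [← hx, hDE, hEV i y hy]⟩

theorem isRigid [FiniteDimensional ℂ g] (hV : IsDecomp g s V) (hconv : Convention g V)
    (hs : IsCompl s.toSubmodule (LieAlgebra.radical ℂ g).toSubmodule) {t : IsSl2Triple h e f}
    (ht : t.toLieSubalgebra ℂ = ⊤) (hD : ∀ D : LieDerivation ℂ g g, IsInnerDer D)
    (hrad : LieAlgebra.radical ℂ g ≤ ⁅(⊤ : LieIdeal ℂ g), LieAlgebra.radical ℂ g⁆) :
    IsRigid (bracketTable V) := by
  intro d hd
  obtain ⟨x, hx, -, hxV⟩ := hV.exists_mem_radical_forall_lie_eq hconv hs ht hD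
    (φ := fun i ↦ (d i : ℂ) • LinearMap.id) (fun i a _ y _ ↦ by simp)
    (fun i j hij x hx y hy ↦ by
      have hyx : ⁅y, x⁆ = 0 := by rw [← lie_skew, hconv.lie_eq_zero hij hx hy, neg_zero]
      simp [hconv.lie_eq_zero hij hx hy, hyx])
    fun i j q hq x _ y _ ↦ by
      simp only [LinearMap.smul_apply, LinearMap.id_apply, lie_smul, ← hd i j q hq, Nat.cast_add]
      rw [← lie_skew x y]
      module
  funext i
  obtain ⟨y, hy, hy₀⟩ := (Submodule.ne_bot_iff _).1 (hV.1 i).1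
  exact_mod_cast (eq_zero_or_eq_zero_of_lie_eq_smul hrad hx (hxV i y hy)).resolve_right hy₀

theorem weight_ne_zero_of_forall_not_bracketTable (hV : IsDecomp g s V) (hconv : Convention g V)
    (hs : IsCompl s.toSubmodule (LieAlgebra.radical ℂ g).toSubmodule) {t : IsSl2Triple h e f}
    (ht : t.toLieSubalgebra ℂ = ⊤) (hv : IsStringBasis h e f V w v)
    (hrad : LieAlgebra.radical ℂ g ≤ ⁅(⊤ : LieIdeal ℂ g), LieAlgebra.radical ℂ g⁆)
    (hq : ∀ i j, ¬ bracketTable V i j q) : w q ≠ 0 := by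
  intro hw
  refine hV.not_le_iSup_ne q ((hV.le_radical q).trans (le_trans hrad ?_))
  rw [LieSubmodule.lieIdeal_oper_eq_linear_span', Submodule.span_le]
  rintro _ ⟨x, -, y, hy, rfl⟩
  suffices h : (LieAlgebra.radical ℂ g).toSubmodule ≤
      (⨆ (j) (_ : j ≠ q), V j).comap (LieModule.toEnd ℂ g g x) from h hy
  rw [← hV.2.2]
  refine iSup_le fun i y hy ↦ ?_
  suffices h : s.toSubmodule ⊔ (LieAlgebra.radical ℂ g).toSubmodule ≤
      (⨆ (j) (_ : j ≠ q), V j).comap ((LieModule.toEnd ℂ g g : g →ₗ[ℂ] End ℂ g).flip y) from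
    h (hs.sup_eq_top ▸ Submodule.mem_top)
  rw [← hV.2.2]
  refine sup_le (fun a ha ↦ ?_) (iSup_le fun j x hx ↦ ?_)
  · obtain rfl | hi := eq_or_ne i q
    · have hstring := hv.isSl2String i
      rw [hw] at hstring
      have lie_y : ⁅a, y⁆ = 0 := hstring.lie_eq_zero ht ⟨a, ha⟩ (hv.span_eq i ▸ hy)
      simp [lie_y]
    · exact le_iSup₂_of_le (f := fun j (_ : j ≠ q) ↦ V j) i hi le_rfl ((hV.1 i).2.1 a ha y hy)
  · exact hconv.lieSpan2_le_iSup (p := (· ≠ q)) (fun r hr hrq ↦ hq j i (hrq ▸ hr))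
      (lie_mem_lieSpan2 hx hy)

theorem exists_lie_eq_zero_of_weight_eq (hV : IsDecomp g s V) (hconv : Convention g V)
    (hs : IsCompl s.toSubmodule (LieAlgebra.radical ℂ g).toSubmodule) {t : IsSl2Triple h e f}
    (ht : t.toLieSubalgebra ℂ = ⊤) (hD : ∀ D : LieDerivation ℂ g g, IsInnerDer D)
    (hv : IsStringBasis h e f V w v) (hz : centerRad g = V z)
    (hq : ∀ i j, ¬ bracketTable V i j q) (hw : w q = w z) :
    ∃ x ∈ LieAlgebra.radical ℂ g, x ≠ 0 ∧ (∀ a ∈ s, ⁅a, x⁆ = 0) ∧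
      ∀ i ≠ q, ∀ y ∈ V i, ⁅x, y⁆ = 0 := by
  obtain ⟨θ, hθ, hθs⟩ := (hv.isSl2String q).exists_linearMap (hw ▸ hv.isSl2String z) ht
  rw [hv.span_eq] at hθs
  have hθV (y : g) (hy : y ∈ V q) : θ y ∈ V z := by
    suffices V q ≤ (V z).comap θ from this hy
    rw [← hv.span_eq q, Submodule.span_le]
    rintro _ ⟨i, rfl⟩
    rw [SetLike.mem_coe, Submodule.mem_comap, hθ]
    exact hv.mem z i
  let φ : Fin k → g →ₗ[ℂ] g := fun i ↦ if i = q then θ else 0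
  have lie_φ {i j : Fin k} {x y : g} (hx : x ∈ V i) (hy : y ∈ V j) : ⁅x, φ j y⁆ = 0 := by
    obtain rfl | hj := eq_or_ne j q
    · simpa [φ] using hV.lie_eq_zero_of_mem_center hz hx (hθV y hy)
    · simp [φ, hj]
  obtain ⟨x, hx, hxs, hxV⟩ := hV.exists_mem_radical_forall_lie_eq hconv hs ht hD (φ := φ)
    (fun i a ha y hy ↦ by
      obtain rfl | hi := eq_or_ne i q
      · simpa [φ] using hθs ⟨a, ha⟩ y hy
      · simp [φ, hi])
    (fun i j _ x hx y hy ↦ by rw [lie_φ hx hy, lie_φ hy hx])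
    fun i j r hr x hx y hy ↦ by
      have hrq : r ≠ q := fun h ↦ hq i j (h ▸ hr)
      simp [lie_φ hx hy, lie_φ hy hx, φ, hrq]
  refine ⟨x, hx, fun hx₀ ↦ ?_, hxs, fun i hi y hy ↦ by simp [hxV i y hy, φ, hi]⟩
  have := hxV q _ (hv.mem q 0)
  refine (hv.isSl2String z).ne_zero 0 (Nat.zero_le _) ?_
  simpa [φ, hx₀, hθ] using this.symm

end IsDecomp
end Derivations

/-! ### Excluding the exceptional tables -/

section Exceptional

variable {w : Fin k → ℕ} {v : Fin k → ℕ → g} {h e f : s}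

theorem isEquivariant_ad : IsEquivariant s (LieAlgebra.ad ℂ g : g →ₗ[ℂ] g →ₗ[ℂ] g) :=
  fun a x y ↦ leibniz_lie (a : g) x y

namespace IsDecomp

theorem exists_isTransvectant (hV : IsDecomp g s V) (hv : IsStringBasis h e f V w v)
    (hq : bracketTable V i j q) :
    ∃ r c, IsTransvectant (LieAlgebra.ad ℂ g : g →ₗ[ℂ] g →ₗ[ℂ] g) (v i) (v j) (v q)
      (w i) (w j) (w q) r c := by
  refine isEquivariant_ad.exists_isTransvectant (hv.isSl2String i) (hv.isSl2String j)
    (hv.isSl2String q) (fun a b ↦ ?_) ?_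
  · rw [hv.span_eq]
    exact lie_mem_of_bracketTable hq (hv.mem i a) (hv.mem j b)
  · by_contra! h₀
    obtain ⟨x, hx, y, hy, hxy⟩ := hV.exists_lie_ne_zero hq
    rw [← hv.span_eq] at hx hy
    refine hxy (LinearMap.BilinMap.apply_apply_mem_of_mem_span ⊥ _ _
      (LieAlgebra.ad ℂ g : g →ₗ[ℂ] g →ₗ[ℂ] g) ?_ x y hx hy)
    rintro _ ⟨a, rfl⟩ _ ⟨b, rfl⟩
    exact h₀ a b

theorem weight_eq_zero_and_not_bracketTable (hV : IsDecomp g s V) (hconv : Convention g V)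
    (hs : IsCompl s.toSubmodule (LieAlgebra.radical ℂ g).toSubmodule) {t : IsSl2Triple h e f}
    (ht : t.toLieSubalgebra ℂ = ⊤) (hD : ∀ D : LieDerivation ℂ g g, IsInnerDer D)
    (hv : IsStringBasis h e f V w v) (hz : centerRad g = V z)
    (hq : ∀ i j, ¬ bracketTable V i j q) (hqz : w q = w z) {r : Fin k} (hw : ∀ i ≠ r, w i ≠ 0) :
    w r = 0 ∧ ∀ i ≠ q, ∀ l, ¬ bracketTable V i r l := by
  obtain ⟨x, hx, hx₀, hxs, hxV⟩ := hV.exists_lie_eq_zero_of_weight_eq hconv hs ht hD hv hz hq hqz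
  have hxr := hV.mem_of_forall_lie_eq_zero hv hx hxs hw
  refine ⟨hV.weight_eq_zero_of_forall_lie_eq_zero hv hxr hx₀ hxs, fun i hi l hl ↦ ?_⟩
  obtain ⟨y, hy, u, hu, hyu⟩ := hV.exists_lie_ne_zero hl
  rw [(hV.1 r).eq_span_singleton hxr hx₀ hxs, Submodule.mem_span_singleton] at hu
  obtain ⟨c, rfl⟩ := hu
  exact hyu (by rw [lie_smul, ← lie_skew, hxV i hi y hy, neg_zero, smul_zero])

end IsDecomp

end Exceptional

section FourSummands

variable {V : Fin 4 → Submodule ℂ g} {w : Fin 4 → ℕ} {v : Fin 4 → ℕ → g} {h e f : s}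

namespace IsDecomp

section

variable (hV : IsDecomp g s V) (hv : IsStringBasis h e f V w v)
  (hdim : w 0 + w 1 + w 2 + w 3 ≤ 17) (hw₀₃ : w 2 ≠ 0 → w 0 ≠ w 3)
  (h₀₂ : bracketTable V 0 2 3) (h₁₁ : bracketTable V 1 1 3)

include hV hv hdim hw₀₃ h₀₂ h₁₁

theorem false_of_bracketTable_one_two (hz : centerRad g = V 3) (hw₁₃ : w 1 ≠ w 3)
    (h₀₁ : bracketTable V 0 1 2) (h₁₂ : bracketTable V 1 2 3) : False := by
  obtain ⟨r₀, c₀, hr₀⟩ := hV.exists_isTransvectant hv h₁₁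
  obtain ⟨r₁, c₁, hr₁⟩ := hV.exists_isTransvectant hv ((lieSpan2_comm _ _).trans h₀₁)
  obtain ⟨r₂, c₂, hr₂⟩ := hV.exists_isTransvectant hv h₁₂
  obtain ⟨r₃, c₃, hr₃⟩ := hV.exists_isTransvectant hv h₀₂
  have top_ne := (hv.isSl2String 3).ne_zero 0 (Nat.zero_le _)
  have hcomm (i j l : ℕ) : ⁅v 1 i, ⁅v 1 j, v 0 l⁆⁆ = ⁅v 1 j, ⁅v 1 i, v 0 l⁆⁆ := by
    have hmem := lie_mem_of_bracketTable h₁₁ (hv.mem 1 i) (hv.mem 1 j)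
    refine lie_lie_comm_of_lie_lie_eq_zero ?_
    rw [← lie_skew, hV.lie_eq_zero_of_mem_center hz (hv.mem 0 l) hmem, neg_zero]
  exact weights_false_first hdim hw₁₃ hw₀₃ hr₀.weight_eq
    (hr₀.odd_of_skew top_ne fun y z ↦ (lie_skew y z).symm)
    ((add_comm _ _).trans hr₁.weight_eq) hr₂.weight_eq hr₂.le_right hr₃.weight_eq
    (hr₁.mul_eq_mul_of_comm hr₂ top_ne hcomm) (hr₁.even_of_comm hr₂ top_ne hcomm)

theorem false_of_not_bracketTable_one_two (hconv : Convention g V) (hz : centerRad g = V 3)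
    (hw₁₃ : w 1 ≠ w 3) (h₀₁ : bracketTable V 0 1 2) (h₁₂ : ∀ q, ¬ bracketTable V 1 2 q)
    (h₀₀ : bracketTable V 0 0 2 ∨ bracketTable V 0 0 3) : False := by
  obtain ⟨r₀, c₀, hr₀⟩ := hV.exists_isTransvectant hv h₁₁
  obtain ⟨r₁, c₁, hr₁⟩ := hV.exists_isTransvectant hv h₀₁
  obtain ⟨r₃, c₃, hr₃⟩ := hV.exists_isTransvectant hv h₀₂
  have skew (y z : g) : ⁅y, z⁆ = -⁅z, y⁆ := (lie_skew y z).symm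
  have top_ne (i : Fin 4) := (hv.isSl2String i).ne_zero 0 (Nat.zero_le _)
  have hweight : ∃ r, Odd r ∧ (w 0 + w 0 = w 2 + 2 * r ∨ w 0 + w 0 = w 3 + 2 * r) := by
    rcases h₀₀ with h₀₀ | h₀₀ <;> obtain ⟨r, c, hr⟩ := hV.exists_isTransvectant hv h₀₀
    · exact ⟨r, hr.odd_of_skew (top_ne 2) skew, .inl hr.weight_eq⟩
    · exact ⟨r, hr.odd_of_skew (top_ne 3) skew, .inr hr.weight_eq⟩
  obtain ⟨r, hr, hweight⟩ := hweight
  have hcomm (i j l : ℕ) : ⁅v 0 i, ⁅v 0 j, v 1 l⁆⁆ = ⁅v 0 j, ⁅v 0 i, v 1 l⁆⁆ := by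
    refine lie_lie_comm_of_lie_lie_eq_zero ?_
    rw [← lie_skew, neg_eq_zero]
    rcases h₀₀ with h₀₀ | h₀₀ <;>
      have hmem := lie_mem_of_bracketTable h₀₀ (hv.mem 0 i) (hv.mem 0 j)
    · exact hconv.lie_eq_zero h₁₂ (hv.mem 1 l) hmem
    · exact hV.lie_eq_zero_of_mem_center hz (hv.mem 1 l) hmem
  exact weights_false_second hdim hw₁₃ hw₀₃ hr₀.weight_eq (hr₀.odd_of_skew (top_ne 3) skew)
    hr₁.weight_eq hr₁.le_left hr₃.weight_eq hr₃.le_right hweight hr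
    (hr₁.mul_eq_mul_of_comm hr₃ (top_ne 3) hcomm) (hr₁.even_of_comm hr₃ (top_ne 3) hcomm)

theorem false_of_bracketTable_zero_zero (h₀₀ : bracketTable V 0 0 2) (h₀₁ : bracketTable V 0 1 3) :
    False := by
  obtain ⟨r₀, c₀, hr₀⟩ := hV.exists_isTransvectant hv h₁₁
  obtain ⟨r₁, c₁, hr₁⟩ := hV.exists_isTransvectant hv h₀₀
  obtain ⟨r₂, c₂, hr₂⟩ := hV.exists_isTransvectant hv h₀₁
  obtain ⟨r₃, c₃, hr₃⟩ := hV.exists_isTransvectant hv h₀₂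
  have skew (y z : g) : ⁅y, z⁆ = -⁅z, y⁆ := (lie_skew y z).symm
  have top_ne (i : Fin 4) := (hv.isSl2String i).ne_zero 0 (Nat.zero_le _)
  have hcyc (i j l : ℕ) :
      ⁅v 0 i, ⁅v 0 j, v 0 l⁆⁆ + ⁅v 0 j, ⁅v 0 l, v 0 i⁆⁆ + ⁅v 0 l, ⁅v 0 i, v 0 j⁆⁆ = 0 :=
    lie_jacobi _ _ _
  exact weights_false_third hdim hw₀₃ hr₀.weight_eq (hr₀.odd_of_skew (top_ne 3) skew)
    hr₁.weight_eq (hr₁.odd_of_skew (top_ne 2) skew) hr₂.weight_eq hr₂.le_right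
    hr₃.weight_eq hr₃.le_right
    (hr₁.ne_zero_of_cyclic hr₃ (top_ne 3) hcyc) (hr₁.even_of_cyclic hr₃ (top_ne 3) hcyc skew)

end

theorem not_isExceptional [FiniteDimensional ℂ g] (hV : IsDecomp g s V) (hconv : Convention g V)
    (hs : IsCompl s.toSubmodule (LieAlgebra.radical ℂ g).toSubmodule) {t : IsSl2Triple h e f}
    (ht : t.toLieSubalgebra ℂ = ⊤) (hD : ∀ D : LieDerivation ℂ g g, IsInnerDer D)
    (hrad : LieAlgebra.radical ℂ g ≤ ⁅(⊤ : LieIdeal ℂ g), LieAlgebra.radical ℂ g⁆)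
    (hz : centerRad g = V 3) (hdim : finrank ℂ g < 25)
    (hlevel : IsLevel (bracketTable V) ![1, 1, 2, 3]) : ¬ IsExceptional (bracketTable V) := by
  rintro ⟨h₀₂, h₁₁, hcases⟩
  obtain ⟨w, v, hv⟩ := hV.exists_isStringBasis ht
  have not_table (q : Fin 4) (hq : (![1, 1, 2, 3] : Fin 4 → ℕ) q = 1) (i j : Fin 4) :
      ¬ bracketTable V i j q := fun h ↦ by
    have := hlevel.add_le h
    have := hlevel.pos i
    have := hlevel.pos j
    omega
  have hw₀ := hV.weight_ne_zero_of_forall_not_bracketTable hconv hs ht hv hrad (not_table 0 rfl)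
  have hw₁ := hV.weight_ne_zero_of_forall_not_bracketTable hconv hs ht hv hrad (not_table 1 rfl)
  have hw₁₃ (h : w 1 = w 3) : False :=
    (hV.weight_eq_zero_and_not_bracketTable hconv hs ht hD hv hz (not_table 1 rfl) h (r := 2)
      (by simp [Fin.forall_fin_succ, hw₀, hw₁, ← h])).2 0 (by decide) 3 h₀₂
  have hw₀₃ (hw₂ : w 2 ≠ 0) (h : w 0 = w 3) : False :=
    hw₂ (hV.weight_eq_zero_and_not_bracketTable hconv hs ht hD hv hz (not_table 0 rfl) h (r := 2)
      (by simp [Fin.forall_fin_succ, hw₀, hw₁, ← h])).1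
  have hsum : w 0 + w 1 + w 2 + w 3 ≤ 17 := by
    have h₃ := three_le_finrank_of_isSl2Triple (K := ℂ) t
    have := hV.finrank_add_sum hs hv
    simp only [Fin.sum_univ_four] at this
    omega
  rcases hcases with ⟨h₀₁, h₁₂⟩ | ⟨h₀₁, h₁₂, h₀₀⟩ | ⟨h₀₀, h₀₁⟩
  · exact hV.false_of_bracketTable_one_two hv hsum hw₀₃ h₀₂ h₁₁ hz hw₁₃ h₀₁ h₁₂
  · exact hV.false_of_not_bracketTable_one_two hv hsum hw₀₃ h₀₂ h₁₁ hconv hz hw₁₃ h₀₁ h₁₂ h₀₀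
  · exact hV.false_of_bracketTable_zero_zero hv hsum hw₀₃ h₀₂ h₁₁ h₀₀ h₀₁

end IsDecomp

end FourSummands

theorem Convention.comp_perm (hconv : Convention g V) (σ : Equiv.Perm (Fin k)) :
    Convention g (V ∘ σ) := by
  intro i j hij
  obtain ⟨q, hq, hq'⟩ := hconv (σ i) (σ j) hij
  exact ⟨σ.symm q, by simpa using hq, fun r hr ↦ σ.eq_symm_apply.2 (hq' _ hr)⟩

theorem IsDecomp.comp_perm (hV : IsDecomp g s V) (σ : Equiv.Perm (Fin k)) :
    IsDecomp g s (V ∘ σ) :=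
  ⟨fun i ↦ hV.1 (σ i), hV.2.1.comp σ.injective, (σ.iSup_comp (g := V)).trans hV.2.2⟩

end Decomposition

end Symp

/-- a perfect centreless Lie algebra with Levi subalgebra `sl₂(ℂ)`, radical
decomposing into 4 simple modules satisfying the convention with `Z(h) = V_k` (here `V 3`),
and dimension < 25 is not sympathetic. -/
theorem stmt18 (g : Type*) [LieRing g] [LieAlgebra ℂ g] [FiniteDimensional ℂ g]
    (hperf : Symp.IsPerfectLie g)
    (hZg : LieAlgebra.center ℂ g = ⊥)
    (s : LieSubalgebra ℂ g) (hs : Symp.IsSl2Levi g s)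
    (V : Fin 4 → Submodule ℂ g) (hdec : Symp.IsDecomp g s V)
    (hconv : Symp.Convention g V)
    (hZ : Symp.centerRad g = V 3)
    (hdim : Module.finrank ℂ g < 25) :
    ¬ Symp.IsSympathetic g := by
  rintro ⟨-, -, hD⟩
  obtain ⟨⟨φ⟩, hcompl⟩ := hs
  obtain ⟨h, e, f, t, ht⟩ := Symp.exists_isSl2Triple_toLieSubalgebra_eq_top φ
  have hrad := Symp.le_lie_top_of_isCompl hperf hcompl
  obtain ⟨σ, hσ, hlevel, hexc⟩ :=
    (hdec.isBracketTable hconv hZ).exists_reindex_isExceptional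
      (hdec.isRigid hconv hcompl ht hD hrad) (hdec.exists_forall_not_hasDepth hrad)
  have hZσ : Symp.centerRad g = (V ∘ σ) 3 := hZ.trans (congrArg V hσ.symm)
  exact (hdec.comp_perm σ).not_isExceptional (hconv.comp_perm σ) hcompl ht hD hrad hZσ hdim
    hlevel hexc
end

section
/- There exists a complex Lie algebra g of dimension 25 that is sympathetic but not semisimple; that is, Z(g) = 0, [g,g] = g, every derivation of g is inner, and the radical of g is nonzero. -/
/-!
Let `S, Y, P, Q, X` be the spaces of binary forms of degrees `2, 4, 6, 6, 2`. Under the first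
transvectant `S` is a copy of `sl₂` acting on all five spaces, and higher transvectants give
equivariant products `Y × Y → X`, `Y × P → X`, `P × P → Q` and `P × Q → X`. Together they make the
sum `S ⊕ Y ⊕ P ⊕ Q ⊕ X` a Lie algebra: the only component of the Jacobi identity that is not formal
is a trilinear identity on `P`, which is checked on powers of linear forms because these span `P`.

The Casimir operator of `S` acts on forms of degree `n` by a multiple of `n (n + 2) ≠ 0`, so it is
invertible. Hence the centre is trivial, the algebra is perfect, and every derivation differs by an
inner one from a derivation that vanishes on `S`. The latter commutes with `S`, so by Schur's lemma
it is given by scalars; the products give `d_X = 2 d_Y = d_Y + d_P = d_P + d_Q` and `d_Q = 2 d_P`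
for the diagonal ones, whence `2 d_P = 3 d_P = d_X`, and all of them vanish, as do the off-diagonal
ones.
The component `X` is a nonzero abelian ideal.
-/

section Sl2Casimir

variable {L M : Type*} [LieRing L] [AddCommGroup M] [LieRingModule L M] {h e f : L}

/-- Twice the Casimir element `h² / 2 + e f + f e` of an `sl₂`-triple, acting on a Lie module;
it splits cocycles of `sl₂` where it is invertible. The factor two avoids inverting `2`. -/
def sl2Casimir (h e f : L) (m : M) : M :=
  ⁅h, ⁅h, m⁆⁆ + 2 • (⁅e, ⁅f, m⁆⁆ + ⁅f, ⁅e, m⁆⁆)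

lemma sl2Casimir_symm (h e f : L) (m : M) : sl2Casimir (-h) f e m = sl2Casimir h e f m := by
  simp [sl2Casimir, add_comm]

lemma lie_e_sl2Casimir (t : IsSl2Triple h e f) (m : M) :
    ⁅e, sl2Casimir h e f m⁆ = sl2Casimir h e f ⁅e, m⁆ := by
  have lie_h_lie_e (m : M) : ⁅h, ⁅e, m⁆⁆ = ⁅e, ⁅h, m⁆⁆ + 2 • ⁅e, m⁆ := by
    rw [leibniz_lie h e, t.lie_h_e_nsmul, nsmul_lie, add_comm]
  have lie_e_lie_f (m : M) : ⁅e, ⁅f, m⁆⁆ = ⁅f, ⁅e, m⁆⁆ + ⁅h, m⁆ := by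
    rw [leibniz_lie e f, t.lie_e_f, add_comm]
  simp only [sl2Casimir, lie_h_lie_e, lie_e_lie_f, lie_add, lie_nsmul]
  module

lemma lie_f_sl2Casimir (t : IsSl2Triple h e f) (m : M) :
    ⁅f, sl2Casimir h e f m⁆ = sl2Casimir h e f ⁅f, m⁆ := by
  simpa only [sl2Casimir_symm] using lie_e_sl2Casimir t.symm m

end Sl2Casimir

section Sl2Cohomology

variable {R L M : Type*} [CommRing R] [LieRing L] [LieAlgebra R L]
  [AddCommGroup M] [Module R M] [LieRingModule L M] [LieModule R L M] {h e f : L}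

lemma lie_e_eq_sl2Casimir_derivation (t : IsSl2Triple h e f) (D : LieDerivation R L M) :
    ⁅e, ⁅h, D h⁆ + 2 • (⁅e, D f⁆ + ⁅f, D e⁆)⁆ = sl2Casimir h e f (D e) := by
  have apply_h : D h = ⁅e, D f⁆ - ⁅f, D e⁆ := by rw [← t.lie_e_f, D.apply_lie_eq_sub]
  have apply_lie_h_e : 2 • D e = ⁅h, D e⁆ - ⁅e, D h⁆ := by
    rw [← map_nsmul, ← t.lie_h_e_nsmul, D.apply_lie_eq_sub]
  have lie_e_lie_h (m : M) : ⁅e, ⁅h, m⁆⁆ = ⁅h, ⁅e, m⁆⁆ - 2 • ⁅e, m⁆ := by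
    rw [leibniz_lie h e, t.lie_h_e_nsmul, nsmul_lie, add_sub_cancel_left]
  have lie_e_lie_f (m : M) : ⁅e, ⁅f, m⁆⁆ = ⁅f, ⁅e, m⁆⁆ + ⁅h, m⁆ := by
    rw [leibniz_lie e f, t.lie_e_f, add_comm]
  have lie_e_apply_h : ⁅e, D h⁆ = ⁅h, D e⁆ - 2 • D e := by rw [apply_lie_h_e, sub_sub_cancel]
  have lie_e_lie_e_apply_f : ⁅e, ⁅e, D f⁆⁆ = ⁅e, D h⁆ + ⁅e, ⁅f, D e⁆⁆ := by
    rw [← lie_add, apply_h, sub_add_cancel]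
  simp only [sl2Casimir, lie_add, lie_nsmul, lie_e_lie_e_apply_f, lie_e_lie_h, lie_e_lie_f,
    lie_e_apply_h, lie_sub]
  module

lemma lie_f_eq_sl2Casimir_derivation (t : IsSl2Triple h e f) (D : LieDerivation R L M) :
    ⁅f, ⁅h, D h⁆ + 2 • (⁅e, D f⁆ + ⁅f, D e⁆)⁆ = sl2Casimir h e f (D f) := by
  simpa [sl2Casimir_symm, add_comm] using lie_e_eq_sl2Casimir_derivation t.symm D

lemma exists_derivation_eq_lie_of_bijective_sl2Casimir (t : IsSl2Triple h e f)
    (hC : Function.Bijective (sl2Casimir h e f : M → M)) (D : LieDerivation R L M) :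
    ∃ m, D e = ⁅e, m⁆ ∧ D f = ⁅f, m⁆ := by
  obtain ⟨m, hm⟩ := hC.surjective (⁅h, D h⁆ + 2 • (⁅e, D f⁆ + ⁅f, D e⁆))
  refine ⟨m, hC.injective ?_, hC.injective ?_⟩
  · rw [← lie_e_eq_sl2Casimir_derivation t, ← hm, lie_e_sl2Casimir t]
  · rw [← lie_f_eq_sl2Casimir_derivation t, ← hm, lie_f_sl2Casimir t]

variable (R)

lemma center_eq_bot_of_injective_sl2Casimir
    (hC : Function.Injective (sl2Casimir h e f : L → L)) : LieAlgebra.center R L = ⊥ := by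
  refine (LieSubmodule.eq_bot_iff _).2 fun z hz => hC ?_
  have lie_z (x : L) : ⁅x, z⁆ = 0 := hz x
  simp [sl2Casimir, lie_z]

lemma lie_top_eq_top_of_surjective_sl2Casimir
    (hC : Function.Surjective (sl2Casimir h e f : L → L)) :
    ⁅(⊤ : LieIdeal R L), (⊤ : LieIdeal R L)⁆ = ⊤ := by
  have lie_mem (x y : L) : ⁅x, y⁆ ∈ ⁅(⊤ : LieIdeal R L), (⊤ : LieIdeal R L)⁆ :=
    LieSubmodule.lie_mem_lie (LieSubmodule.mem_top x) (LieSubmodule.mem_top y)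
  refine eq_top_iff.2 fun x _ => ?_
  obtain ⟨y, rfl⟩ := hC x
  exact add_mem (lie_mem _ _) (nsmul_mem (add_mem (lie_mem _ _) (lie_mem _ _)) 2)

end Sl2Cohomology

open MvPolynomial

section Transvectant

variable {R : Type*} [CommRing R]

lemma pderiv_pderiv_comm {σ : Type*} (i j : σ) (p : MvPolynomial σ R) :
    pderiv i (pderiv j p) = pderiv j (pderiv i p) := by
  classical
  have commutator_eq_zero :
      ⁅(pderiv i : Derivation R (MvPolynomial σ R) (MvPolynomial σ R)), pderiv j⁆ = 0 :=
    derivation_ext fun k => by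
      rw [Derivation.commutator_apply]
      simp [pderiv_X, Pi.single_apply, apply_ite]
  rw [← sub_eq_zero, ← Derivation.commutator_apply, commutator_eq_zero, Derivation.zero_apply]

/-- The `k`-th transvectant `∑ i, (-1) ^ i * choose k i * ∂₀^(k-i) ∂₁^i p * ∂₀^i ∂₁^(k-i) q` of two
binary polynomials, without the customary factorial normalisation: the `sl₂`-equivariant pairings
from which the Lie bracket below is assembled. -/
noncomputable def transvectant :
    ℕ → MvPolynomial (Fin 2) R →ₗ[R] MvPolynomial (Fin 2) R →ₗ[R] MvPolynomial (Fin 2) R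
  | 0 => LinearMap.mul R _
  | k + 1 =>
    (transvectant k).compl₁₂ (pderiv 0).toLinearMap (pderiv 1).toLinearMap -
      (transvectant k).compl₁₂ (pderiv 1).toLinearMap (pderiv 0).toLinearMap

variable (k m n : ℕ) (p q : MvPolynomial (Fin 2) R)

lemma transvectant_zero : transvectant 0 p q = p * q := rfl

lemma transvectant_succ :
    transvectant (k + 1) p q =
      transvectant k (pderiv 0 p) (pderiv 1 q) - transvectant k (pderiv 1 p) (pderiv 0 q) := rfl

lemma transvectant_one :
    transvectant 1 p q = pderiv 0 p * pderiv 1 q - pderiv 1 p * pderiv 0 q := rfl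

lemma transvectant_swap : transvectant k q p = (-1 : R) ^ k • transvectant k p q := by
  induction k generalizing p q with
  | zero => simp [transvectant_zero, mul_comm]
  | succ k ih =>
    rw [transvectant_succ, transvectant_succ, ih (pderiv 1 p), ih (pderiv 0 p)]
    module

lemma pderiv_transvectant (i : Fin 2) :
    pderiv i (transvectant k p q) =
      transvectant k (pderiv i p) q + transvectant k p (pderiv i q) := by
  induction k generalizing p q with
  | zero => simp only [transvectant_zero, pderiv_mul]
  | succ k ih =>
    simp only [transvectant_succ, map_sub, ih, pderiv_pderiv_comm i]
    abel

attribute [irreducible] transvectant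

variable {k m n p q}

lemma isHomogeneous_transvectant (hp : p.IsHomogeneous (m + k))
    (hq : q.IsHomogeneous (n + k)) :
    (transvectant k p q).IsHomogeneous (m + n) := by
  induction k generalizing p q with
  | zero => exact transvectant_zero p q ▸ hp.mul hq
  | succ k ih =>
    rw [transvectant_succ]
    exact (ih hp.pderiv hq.pderiv).sub (ih hp.pderiv hq.pderiv)

lemma exists_pderiv_eq_C {σ : Type*} {p : MvPolynomial σ R} (hp : p.IsHomogeneous 1) (i : σ) :
    ∃ c, pderiv i p = C c :=
  ⟨_, totalDegree_eq_zero_iff_eq_C.1 ((totalDegree_zero_iff_isHomogeneous σ).2 hp.pderiv)⟩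

variable (k) in
/-- The induction closes because the second derivatives of `a` are constants, so that the
transvectant with a derivative of `a` is a linear combination of `∂₀` and `∂₁`. -/
lemma transvectant_one_transvectant {a : MvPolynomial (Fin 2) R} (ha : a.IsHomogeneous 2)
    (p q : MvPolynomial (Fin 2) R) :
    transvectant 1 a (transvectant k p q) =
      transvectant k (transvectant 1 a p) q + transvectant k p (transvectant 1 a q) := by
  induction k generalizing p q with
  | zero =>
    simp only [transvectant_zero, transvectant_one, pderiv_mul]
    ring
  | succ k ih =>
    obtain ⟨c₀₀, h₀₀⟩ := exists_pderiv_eq_C (ha.pderiv (i := 0)) 0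
    obtain ⟨c₀₁, h₀₁⟩ := exists_pderiv_eq_C (ha.pderiv (i := 1)) 0
    obtain ⟨c₁₁, h₁₁⟩ := exists_pderiv_eq_C (ha.pderiv (i := 1)) 1
    have h₁₀ : pderiv 1 (pderiv 0 a) = C c₀₁ := by rw [pderiv_pderiv_comm, h₀₁]
    have transvectant_pderiv_zero (p) :
        transvectant 1 (pderiv 0 a) p = c₀₀ • pderiv 1 p - c₀₁ • pderiv 0 p := by
      rw [transvectant_one, h₀₀, h₁₀, C_mul', C_mul']
    have transvectant_pderiv_one (p) :
        transvectant 1 (pderiv 1 a) p = c₀₁ • pderiv 1 p - c₁₁ • pderiv 0 p := by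
      rw [transvectant_one, h₀₁, h₁₁, C_mul', C_mul']
    simp only [transvectant_succ k, map_sub, ih, pderiv_transvectant, transvectant_pderiv_zero,
      transvectant_pderiv_one, map_add, map_smul, LinearMap.add_apply, LinearMap.sub_apply,
      LinearMap.smul_apply]
    module

lemma transvectant_succ_pow_left {l : MvPolynomial (Fin 2) R} (hl : l.IsHomogeneous 1)
    (k m : ℕ) (q : MvPolynomial (Fin 2) R) :
    transvectant (k + 1) (l ^ (m + 1)) q =
      (m + 1) • transvectant k (l ^ m) (transvectant 1 l q) := by
  obtain ⟨c₀, h₀⟩ := exists_pderiv_eq_C hl 0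
  obtain ⟨c₁, h₁⟩ := exists_pderiv_eq_C hl 1
  have pderiv_pow_l {i c} (h : pderiv i l = C c) :
      pderiv i (l ^ (m + 1)) = (m + 1) • c • l ^ m := by
    rw [pderiv_pow, h, add_tsub_cancel_right, smul_eq_C_mul, nsmul_eq_mul]
    ring
  have transvectant_l : transvectant 1 l q = c₀ • pderiv 1 q - c₁ • pderiv 0 q := by
    rw [transvectant_one, h₀, h₁, C_mul', C_mul']
  rw [transvectant_succ, pderiv_pow_l h₀, pderiv_pow_l h₁, transvectant_l]
  simp only [map_nsmul, map_smul, map_sub, LinearMap.smul_apply]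
  module

end Transvectant

section BinaryForms

variable {R : Type*} [CommRing R] {n : ℕ}

lemma homogeneousSubmodule_le_iff {W : Submodule R (MvPolynomial (Fin 2) R)} :
    homogeneousSubmodule (Fin 2) R n ≤ W ↔
      ∀ i j, i + j = n → (X 0 ^ i * X 1 ^ j : MvPolynomial (Fin 2) R) ∈ W := by
  refine ⟨fun h i j hij => h (hij ▸ (isHomogeneous_X_pow 0 i).mul (isHomogeneous_X_pow 1 j)),
    fun h => ?_⟩
  rw [homogeneousSubmodule_eq_finsupp_supported, AddMonoidAlgebra.supported_eq_span_single,
    Submodule.span_le]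
  rintro _ ⟨d, hd, rfl⟩
  have monomial_mem := h (d 0) (d 1) (by simpa [Finsupp.degree_eq_sum] using hd)
  simpa [single_eq_monomial, monomial_eq, Finsupp.prod_fintype] using monomial_mem

lemma finrank_homogeneousSubmodule_fin_two (R : Type*) [CommRing R] [Nontrivial R] (n : ℕ) :
    Module.finrank R (homogeneousSubmodule (Fin 2) R n) = n + 1 := by
  let e : {d : Fin 2 →₀ ℕ | d.degree = n} ≃ Finset.univ.finsuppAntidiag n :=
    Equiv.subtypeEquivRight fun d => by simp [Finsupp.degree_eq_sum, Finset.mem_finsuppAntidiag]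
  rw [homogeneousSubmodule_eq_finsupp_supported,
    ((AddMonoidAlgebra.supportedEquivFinsupp _).trans (Finsupp.domLCongr e)).finrank_eq,
    Module.finrank_finsupp_self, Fintype.card_coe, Finset.card_finsuppAntidiag_nat_eq_choose,
    Finset.card_univ, Fintype.card_fin, Nat.add_comm 2, Nat.add_sub_cancel (m := 1),
    Nat.choose_succ_self_right]

/-- The linear form `X₀ + t X₁`, whose powers span the binary forms of each degree; multilinear
identities between binary forms need only be checked on such powers. -/
noncomputable def linearForm (t : R) : MvPolynomial (Fin 2) R := X 0 + C t * X 1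

lemma isHomogeneous_linearForm (t : R) : (linearForm t).IsHomogeneous 1 :=
  (isHomogeneous_X R 0).add (isHomogeneous_C_mul_X t 1)

lemma transvectant_linearForm (s t : R) :
    transvectant 1 (linearForm s) (linearForm t) = C (t - s) := by
  simp [transvectant_one, linearForm, pderiv_X, sub_eq_add_neg]

lemma transvectant_linearForm_pow_mul_pow (r s t : R) (i j : ℕ) :
    transvectant 1 (linearForm r) (linearForm s ^ i * linearForm t ^ j) =
      (i * (s - r)) • (linearForm s ^ (i - 1) * linearForm t ^ j) +
        (j * (t - r)) • (linearForm s ^ i * linearForm t ^ (j - 1)) := by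
  simp only [smul_eq_C_mul, C_mul, ← transvectant_linearForm, map_natCast]
  simp only [transvectant_one, pderiv_mul, pderiv_pow]
  ring

lemma transvectant_three_linearForm_pow (s t : R) :
    transvectant 3 (linearForm s ^ 6) (linearForm t ^ 6) =
      (14400 * (t - s) ^ 3) • (linearForm s ^ 3 * linearForm t ^ 3) := by
  rw [← one_mul (linearForm t ^ 6), ← pow_zero (linearForm t)]
  simp only [transvectant_succ_pow_left (isHomogeneous_linearForm _),
    transvectant_linearForm_pow_mul_pow, transvectant_zero, Nat.reduceSub, map_add, map_smul]
  simp only [smul_eq_C_mul, nsmul_eq_mul, map_mul, map_natCast, map_pow, map_ofNat]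
  push_cast
  ring

lemma transvectant_five_linearForm_pow (r s t : R) :
    transvectant 5 (linearForm r ^ 6) (linearForm s ^ 3 * linearForm t ^ 3) =
      (720 * 360 * (s - r) ^ 2 * (t - r) ^ 2) •
        (linearForm r * ((t - r) • linearForm s + (s - r) • linearForm t)) := by
  simp only [transvectant_succ_pow_left (isHomogeneous_linearForm _),
    transvectant_linearForm_pow_mul_pow, transvectant_zero, Nat.reduceSub, map_add, map_smul]
  simp only [smul_eq_C_mul, nsmul_eq_mul, map_mul, map_natCast, map_pow, map_ofNat]
  push_cast
  ring

open scoped Nat in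
lemma transvectant_X_pow (k m n : ℕ) :
    transvectant k (X 0 ^ (m + k)) (X 0 ^ n * X 1 ^ k : MvPolynomial (Fin 2) R) =
      ((m + k).descFactorial k * k !) • X 0 ^ (m + n) := by
  induction k with
  | zero => simp [transvectant_zero, pow_add]
  | succ k ih =>
    have transvectant_X : transvectant 1 (X 0) (X 0 ^ n * X 1 ^ (k + 1)) =
        (k + 1) • (X 0 ^ n * X 1 ^ k : MvPolynomial (Fin 2) R) := by
      simp [transvectant_one, pderiv_X]
      ring
    rw [← add_assoc, transvectant_succ_pow_left (isHomogeneous_X R 0), transvectant_X, map_nsmul,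
      ih, smul_smul, smul_smul, Nat.succ_descFactorial_succ, Nat.factorial_succ]
    congr 1
    ring

lemma exists_transvectant_ne_zero [IsDomain R] [CharZero R] (k m n : ℕ) :
    ∃ p q : MvPolynomial (Fin 2) R, p.IsHomogeneous (m + k) ∧ q.IsHomogeneous (n + k) ∧
      transvectant k p q ≠ 0 := by
  refine ⟨X 0 ^ (m + k), X 0 ^ n * X 1 ^ k, isHomogeneous_X_pow 0 _,
    (isHomogeneous_X_pow 0 n).mul (isHomogeneous_X_pow 1 k), ?_⟩
  rw [transvectant_X_pow]
  simp [Nat.factorial_ne_zero, Nat.descFactorial_eq_zero_iff_lt, X_ne_zero]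

end BinaryForms

section FormsOverFields

lemma mem_of_forall_sum_pow_smul_mem {K M : Type*} [Field K] [Infinite K] [AddCommGroup M]
    [Module K M] (W : Submodule K M) {s : Finset ℕ} {v : ℕ → M}
    (hv : ∀ t : K, ∑ i ∈ s, t ^ i • v i ∈ W) {j : ℕ} (hj : j ∈ s) : v j ∈ W := by
  by_contra v_notMem
  obtain ⟨φ, φ_ne_zero, W_le_ker⟩ := W.exists_le_ker_of_notMem v_notMem
  have poly_eq_zero : ∑ i ∈ s, Polynomial.C (φ (v i)) * Polynomial.X ^ i = 0 := by
    refine Polynomial.funext fun t => ?_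
    have sum_mem_ker : φ (∑ i ∈ s, t ^ i • v i) = 0 := W_le_ker (hv t)
    simpa only [map_sum, map_smul, smul_eq_mul, Polynomial.eval_finsetSum, Polynomial.eval_mul,
      Polynomial.eval_C, Polynomial.eval_pow, Polynomial.eval_X, Polynomial.eval_zero,
      mul_comm] using sum_mem_ker
  have coeff_j_eq_zero : φ (v j) = 0 := by
    simpa [Polynomial.coeff_C_mul, Polynomial.coeff_X_pow, hj] using
      congrArg (Polynomial.coeff · j) poly_eq_zero
  exact φ_ne_zero coeff_j_eq_zero

variable {K : Type*} [Field K] [CharZero K]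

lemma homogeneousSubmodule_le_span_linearForm_pow (n : ℕ) :
    homogeneousSubmodule (Fin 2) K n ≤
      Submodule.span K (Set.range fun t : K => linearForm t ^ n) := by
  refine homogeneousSubmodule_le_iff.2 fun i j hij => ?_
  have expand (t : K) : linearForm t ^ n =
      ∑ k ∈ Finset.range (n + 1), t ^ k • (n.choose k • (X 0 ^ (n - k) * X 1 ^ k)) := by
    rw [linearForm, add_comm, add_pow]
    refine Finset.sum_congr rfl fun k _ => ?_
    rw [mul_pow, ← C_pow, smul_eq_C_mul, nsmul_eq_mul]
    ring
  have hj : j ≤ n := hij ▸ Nat.le_add_left j i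
  have choose_smul_mem : n.choose j • (X 0 ^ (n - j) * X 1 ^ j) ∈
      Submodule.span K (Set.range fun t : K => linearForm t ^ n) :=
    mem_of_forall_sum_pow_smul_mem (v := fun k => n.choose k • (X 0 ^ (n - k) * X 1 ^ k)) _
      (fun t => expand t ▸ Submodule.subset_span (Set.mem_range_self t))
      (Finset.mem_range_succ_iff.2 hj)
  have choose_ne_zero : (n.choose j : K) ≠ 0 := mod_cast (Nat.choose_pos hj).ne'
  rwa [← Nat.cast_smul_eq_nsmul K, Submodule.smul_mem_iff _ choose_ne_zero, ← hij,
    Nat.add_sub_cancel, hij] at choose_smul_mem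

lemma eq_zero_of_forall_linearForm_pow {M : Type*} [AddCommGroup M] [Module K M] {n : ℕ}
    {φ : MvPolynomial (Fin 2) K →ₗ[K] M} (hφ : ∀ t, φ (linearForm t ^ n) = 0)
    {p : MvPolynomial (Fin 2) K} (hp : p.IsHomogeneous n) : φ p = 0 :=
  (Submodule.span_le (p := LinearMap.ker φ)).2 (Set.range_subset_iff.2 hφ)
    (homogeneousSubmodule_le_span_linearForm_pow n hp)

lemma transvectant_five_three_cyclic {p q r : MvPolynomial (Fin 2) K} (hp : p.IsHomogeneous 6)
    (hq : q.IsHomogeneous 6) (hr : r.IsHomogeneous 6) :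
    transvectant 5 p (transvectant 3 q r) + transvectant 5 q (transvectant 3 r p) +
      transvectant 5 r (transvectant 3 p q) = 0 := by
  let jacobiator (p q r : MvPolynomial (Fin 2) K) := transvectant 5 p (transvectant 3 q r) +
    transvectant 5 q (transvectant 3 r p) + transvectant 5 r (transvectant 3 p q)
  have jacobiator_rotate (p q r) : jacobiator p q r = jacobiator q r p := by
    simp only [jacobiator]
    abel
  have jacobiator_eq_zero {q r} (h : ∀ t, jacobiator (linearForm t ^ 6) q r = 0)
      {p} (hp : p.IsHomogeneous 6) : jacobiator p q r = 0 :=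
    eq_zero_of_forall_linearForm_pow (φ := (transvectant 5).flip (transvectant 3 q r) +
      transvectant 5 q ∘ₗ transvectant 3 r + transvectant 5 r ∘ₗ (transvectant 3).flip q) h hp
  refine jacobiator_eq_zero (fun s => ?_) hp
  rw [jacobiator_rotate]
  refine jacobiator_eq_zero (fun t => ?_) hq
  rw [jacobiator_rotate]
  refine jacobiator_eq_zero (fun u => ?_) hr
  simp only [jacobiator, transvectant_three_linearForm_pow, map_smul,
    transvectant_five_linearForm_pow]
  simp only [smul_eq_C_mul, map_mul, map_sub, map_pow, map_ofNat]
  ring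

end FormsOverFields

section Sl2Forms

/-- The binary forms of degree `n`. -/
abbrev BinaryForm (K : Type*) [CommRing K] (n : ℕ) : Submodule K (MvPolynomial (Fin 2) K) :=
  homogeneousSubmodule (Fin 2) K n

/-- The action of a quadratic form on the forms of degree `n` by the first transvectant. -/
noncomputable def quadAct {K : Type*} [CommRing K] {n : ℕ} (a : BinaryForm K 2) :
    BinaryForm K n →ₗ[K] BinaryForm K n :=
  (transvectant 1 (a : MvPolynomial (Fin 2) K)).restrict fun p hp => by
    cases n with
    | zero =>
      rw [totalDegree_eq_zero_iff_eq_C.1 ((totalDegree_zero_iff_isHomogeneous _).2 hp)]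
      simp [transvectant_one]
    | succ n => exact Nat.add_comm 1 n ▸ isHomogeneous_transvectant (m := 1) a.2 hp

lemma coe_quadAct {K : Type*} [CommRing K] {n : ℕ} (a : BinaryForm K 2) (p : BinaryForm K n) :
    (quadAct a p : MvPolynomial (Fin 2) K) = transvectant 1 a p := rfl

variable (K : Type*) [Field K]

/-- The raising element of the `sl₂`-triple of quadratic forms: the first transvectant with it is
`X₀ ∂₁`. -/
noncomputable def quadE : BinaryForm K 2 :=
  ⟨C 2⁻¹ * X 0 ^ 2, isHomogeneous_C_mul_X_pow _ 0 2⟩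

/-- The semisimple element of the `sl₂`-triple of quadratic forms: the first transvectant with it
is `X₀ ∂₀ - X₁ ∂₁`. -/
noncomputable def quadH : BinaryForm K 2 :=
  ⟨-(X 0 * X 1), ((isHomogeneous_X K 0).mul (isHomogeneous_X K 1)).neg⟩

/-- The lowering element of the `sl₂`-triple of quadratic forms: the first transvectant with it is
`X₁ ∂₀`. -/
noncomputable def quadF : BinaryForm K 2 :=
  ⟨-(C 2⁻¹ * X 1 ^ 2), (isHomogeneous_C_mul_X_pow _ 1 2).neg⟩

variable {K} {n : ℕ}

lemma quadH_ne_zero : quadH K ≠ 0 := fun h =>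
  neg_ne_zero.2 (mul_ne_zero (X_ne_zero 0) (X_ne_zero 1)) (congrArg Subtype.val h)

lemma transvectant_quadH (p : MvPolynomial (Fin 2) K) :
    transvectant 1 (quadH K) p = X 0 * pderiv 0 p - X 1 * pderiv 1 p := by
  simp [transvectant_one, quadH, pderiv_X]

variable [CharZero K]

lemma pderiv_C_inv_two_mul_X_sq (i : Fin 2) :
    pderiv i (C 2⁻¹ * X i ^ 2 : MvPolynomial (Fin 2) K) = X i := by
  rw [pderiv_C_mul, pderiv_pow, pderiv_X_self, Nat.cast_two, pow_one, mul_one, ← mul_assoc,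
    ← map_ofNat C, ← C_mul, inv_mul_cancel₀ two_ne_zero, C_1, one_mul]

lemma transvectant_quadE (p : MvPolynomial (Fin 2) K) :
    transvectant 1 (quadE K) p = X 0 * pderiv 1 p := by
  rw [transvectant_one, quadE, pderiv_C_inv_two_mul_X_sq]
  simp [pderiv_X]

lemma transvectant_quadF (p : MvPolynomial (Fin 2) K) :
    transvectant 1 (quadF K) p = X 1 * pderiv 0 p := by
  rw [transvectant_one, quadF, map_neg, map_neg, pderiv_C_inv_two_mul_X_sq]
  simp [pderiv_X]

lemma quadAct_casimir (p : BinaryForm K n) :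
    quadAct (quadH K) (quadAct (quadH K) p) +
      2 • (quadAct (quadE K) (quadAct (quadF K) p) + quadAct (quadF K) (quadAct (quadE K) p)) =
        (n * (n + 2)) • p := by
  obtain ⟨p, hp⟩ := p
  have euler : X 0 * pderiv 0 p + X 1 * pderiv 1 p = n • p := by
    simpa using hp.sum_X_mul_pderiv
  have pderiv_one_X : pderiv 1 (X 0 : MvPolynomial (Fin 2) K) = 0 := pderiv_X_of_ne zero_ne_one
  have pderiv_zero_X : pderiv 0 (X 1 : MvPolynomial (Fin 2) K) = 0 := pderiv_X_of_ne one_ne_zero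
  have euler₀ := congrArg (pderiv 0) euler
  have euler₁ := congrArg (pderiv 1) euler
  refine Subtype.ext ?_
  simp only [map_add, pderiv_mul, pderiv_X_self, pderiv_one_X, pderiv_zero_X,
    Derivation.map_natCast, nsmul_eq_mul] at euler euler₀ euler₁
  simp only [Submodule.coe_add, AddSubmonoidClass.coe_nsmul, coe_quadAct, transvectant_quadE,
    transvectant_quadH, transvectant_quadF, map_sub, pderiv_mul, pderiv_X_self, pderiv_one_X,
    pderiv_zero_X, nsmul_eq_mul]
  push_cast
  linear_combination X 0 * euler₀ + X 1 * euler₁ + (n + 2) * euler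

lemma exists_eq_smul_X_pow_of_pderiv_eq_zero {p : MvPolynomial (Fin 2) K} (hp : p.IsHomogeneous n)
    (h : pderiv 1 p = 0) : ∃ c : K, p = c • X 0 ^ n := by
  induction n generalizing p with
  | zero =>
    exact ⟨_, by simpa [smul_eq_C_mul] using
      totalDegree_eq_zero_iff_eq_C.1 ((totalDegree_zero_iff_isHomogeneous _).2 hp)⟩
  | succ n ih =>
    obtain ⟨c, hc⟩ := ih hp.pderiv (p := pderiv 0 p) (by rw [pderiv_pderiv_comm, h, map_zero])
    have euler : X 0 * pderiv 0 p = (n + 1 : K) • p := by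
      simpa [h, ← Nat.cast_smul_eq_nsmul K] using hp.sum_X_mul_pderiv
    refine ⟨(n + 1 : K)⁻¹ * c, ?_⟩
    rw [mul_smul, eq_inv_smul_iff₀ n.cast_add_one_ne_zero, ← euler, hc, pow_succ', mul_smul_comm]

lemma pderiv_one_eq_zero_of_quadAct_quadE {p : BinaryForm K n} (hE : quadAct (quadE K) p = 0) :
    pderiv 1 (p : MvPolynomial (Fin 2) K) = 0 := by
  rw [Subtype.ext_iff, coe_quadAct, transvectant_quadE] at hE
  exact (mul_eq_zero.1 hE).resolve_left (X_ne_zero 0)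

lemma quadAct_quadH_eq_nsmul {p : BinaryForm K n} (hE : quadAct (quadE K) p = 0) :
    quadAct (quadH K) p = n • p := by
  have euler : X 0 * pderiv 0 (p : MvPolynomial (Fin 2) K) = n • (p : MvPolynomial (Fin 2) K) := by
    simpa [pderiv_one_eq_zero_of_quadAct_quadE hE] using IsHomogeneous.sum_X_mul_pderiv p.2
  refine Subtype.ext ?_
  rw [coe_quadAct, transvectant_quadH, pderiv_one_eq_zero_of_quadAct_quadE hE, mul_zero, sub_zero,
    euler, AddSubmonoidClass.coe_nsmul]

lemma quadAct_quadE_quadF : quadAct (quadE K) (quadF K) = quadH K := by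
  refine Subtype.ext ?_
  rw [coe_quadAct, transvectant_quadE, quadF, map_neg, pderiv_C_inv_two_mul_X_sq, mul_neg, quadH]

lemma quadAct_quadH_quadE : quadAct (quadH K) (quadE K) = 2 • quadE K :=
  quadAct_quadH_eq_nsmul <| Subtype.ext <| by
    rw [coe_quadAct, transvectant_one, mul_comm, sub_self, Submodule.coe_zero]

lemma quadAct_quadH_quadF : quadAct (quadH K) (quadF K) = -(2 • quadF K) := by
  have two_mul_C : (2 : MvPolynomial (Fin 2) K) * C 2⁻¹ = 1 := by
    rw [← map_ofNat C, ← C_mul, mul_inv_cancel₀ two_ne_zero, C_1]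
  have pderiv_zero_quadF : pderiv 0 (quadF K : MvPolynomial (Fin 2) K) = 0 := by
    simp [quadF, pderiv_X]
  refine Subtype.ext ?_
  rw [coe_quadAct, transvectant_quadH, pderiv_zero_quadF, quadF, map_neg,
    pderiv_C_inv_two_mul_X_sq]
  simp only [Submodule.coe_neg, AddSubmonoidClass.coe_nsmul, nsmul_eq_mul, Nat.cast_ofNat]
  linear_combination -X 1 ^ 2 * two_mul_C

/-- The power `X₀ ^ n`, the highest weight vector of the binary forms of degree `n`. -/
noncomputable def highestForm (K : Type*) [CommRing K] (n : ℕ) : BinaryForm K n :=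
  ⟨X 0 ^ n, isHomogeneous_X_pow 0 n⟩

lemma quadAct_quadE_highestForm : quadAct (quadE K) (highestForm K n) = 0 := by
  refine Subtype.ext ?_
  simp [coe_quadAct, transvectant_quadE, highestForm, pderiv_X]

lemma eq_top_of_quadAct_quadF_mem {W : Submodule K (BinaryForm K n)} (hX : highestForm K n ∈ W)
    (hW : ∀ p ∈ W, quadAct (quadF K) p ∈ W) : W = ⊤ := by
  suffices h : BinaryForm K n ≤ W.map (BinaryForm K n).subtype from
    eq_top_iff.2 fun p _ => by simpa using h p.2
  refine homogeneousSubmodule_le_iff.2 fun i j hij => ?_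
  induction j generalizing i with
  | zero => exact ⟨_, hX, by simp [highestForm, ← hij]⟩
  | succ j ih =>
    obtain ⟨p, hp, coe_p⟩ := ih (i + 1) (by omega)
    have lower : (quadAct (quadF K) p : MvPolynomial (Fin 2) K) =
        (i + 1 : K) • (X 0 ^ i * X 1 ^ (j + 1)) := by
      rw [coe_quadAct, transvectant_quadF, ← Submodule.subtype_apply, coe_p, pderiv_mul,
        pderiv_pow, pderiv_pow, pderiv_X_self, pderiv_X_of_ne one_ne_zero, smul_eq_C_mul]
      push_cast
      simp only [map_add, map_natCast, map_one]
      ring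
    have lower_mem := Submodule.mem_map_of_mem (f := (BinaryForm K n).subtype) (hW p hp)
    rwa [Submodule.subtype_apply, lower, Submodule.smul_mem_iff _ i.cast_add_one_ne_zero]
      at lower_mem

/-- Schur's lemma for binary forms: `φ` is determined by the image of the highest weight vector. -/
lemma exists_eq_smul_of_quadAct_comm {m n : ℕ} {φ : BinaryForm K m →ₗ[K] BinaryForm K n}
    (hφ : ∀ a p, φ (quadAct a p) = quadAct a (φ p)) :
    ∃ c : K, (m ≠ n → c = 0) ∧
      ∀ p, (φ p : MvPolynomial (Fin 2) K) = c • (p : MvPolynomial (Fin 2) K) := by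
  have highest : quadAct (quadE K) (φ (highestForm K m)) = 0 := by
    rw [← hφ, quadAct_quadE_highestForm, map_zero]
  have weight : n • φ (highestForm K m) = m • φ (highestForm K m) := by
    rw [← quadAct_quadH_eq_nsmul highest, ← hφ, ← map_nsmul,
      quadAct_quadH_eq_nsmul quadAct_quadE_highestForm]
  obtain ⟨c, hc, apply_highest⟩ : ∃ c : K, (m ≠ n → c = 0) ∧
      (φ (highestForm K m) : MvPolynomial (Fin 2) K) = c • X 0 ^ m := by
    by_cases hmn : m = n
    · subst hmn
      obtain ⟨c, hc⟩ := exists_eq_smul_X_pow_of_pderiv_eq_zero (φ (highestForm K m)).2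
        (pderiv_one_eq_zero_of_quadAct_quadE highest)
      exact ⟨c, fun h => (h rfl).elim, hc⟩
    · have apply_highest : φ (highestForm K m) = 0 := by
        rw [← Nat.cast_smul_eq_nsmul K, ← Nat.cast_smul_eq_nsmul K] at weight
        exact by_contra fun h => hmn (Nat.cast_injective (smul_left_injective K h weight)).symm
      exact ⟨0, fun _ => rfl, by simp [apply_highest]⟩
  refine ⟨c, hc, LinearMap.congr_fun (LinearMap.eqLocus_eq_top.1 (eq_top_of_quadAct_quadF_mem ?_ ?_)
    : (BinaryForm K n).subtype ∘ₗ φ = c • (BinaryForm K m).subtype)⟩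
  · exact apply_highest
  · intro p hp
    have hp : (φ p : MvPolynomial (Fin 2) K) = c • (p : MvPolynomial (Fin 2) K) := hp
    change (φ (quadAct (quadF K) p) : MvPolynomial (Fin 2) K) =
      c • (quadAct (quadF K) p : MvPolynomial (Fin 2) K)
    rw [hφ, coe_quadAct, coe_quadAct, hp, map_smul]

end Sl2Forms

section FormBracket

open LinearMap (funLeft)

/-- The degrees of the components `S, Y, P, Q, X` of `FormAlgebra`. -/
def formDegree : Fin 5 → ℕ := ![2, 4, 6, 6, 2]

variable (K : Type*) [CommRing K]

/-- The products of the nilpotent part of `FormAlgebra`, on families `Y, P, Q, X` indexed by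
`Fin 4`: they are `P × P → Q`, `Y × Y → X`, `Y × P → X` and `P × Q → X`. -/
noncomputable def formProduct : (Fin 4 → MvPolynomial (Fin 2) K) →ₗ[K]
    (Fin 4 → MvPolynomial (Fin 2) K) →ₗ[K] (Fin 4 → MvPolynomial (Fin 2) K) :=
  LinearMap.mk₂ K (fun x y =>
    ![0, 0, transvectant 3 (x 1) (y 1),
      transvectant 3 (x 0) (y 0) + (transvectant 4 (x 0) (y 1) - transvectant 4 (y 0) (x 1)) +
        (transvectant 5 (x 1) (y 2) - transvectant 5 (y 1) (x 2))])
    (fun x x' y => by ext1 i; fin_cases i <;> simp; module)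
    (fun c x y => by ext1 i; fin_cases i <;> simp; module)
    (fun x y y' => by ext1 i; fin_cases i <;> simp; module)
    (fun c x y => by ext1 i; fin_cases i <;> simp; module)

/-- The action of quadratic forms on the nilpotent part of `FormAlgebra`. -/
noncomputable def formAct : MvPolynomial (Fin 2) K →ₗ[K]
    (Fin 4 → MvPolynomial (Fin 2) K) →ₗ[K] (Fin 4 → MvPolynomial (Fin 2) K) :=
  LinearMap.mk₂ K (fun a x i => transvectant 1 a (x i))
    (fun a b x => by ext1 i; simp)
    (fun c a x => by ext1 i; simp)
    (fun a x y => by ext1 i; simp)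
    (fun c a x => by ext1 i; simp)

/-- The Lie bracket of `FormAlgebra`, defined on all families of polynomials. It is that of a
semidirect product, of the quadratic forms in component `0` under the first transvectant with the
nilpotent part formed by the other components. -/
noncomputable def formBracket : (Fin 5 → MvPolynomial (Fin 2) K) →ₗ[K]
    (Fin 5 → MvPolynomial (Fin 2) K) →ₗ[K] (Fin 5 → MvPolynomial (Fin 2) K) :=
  LinearMap.mk₂ K (fun u v =>
    Fin.cons (transvectant 1 (u 0) (v 0))
      (formAct K (u 0) (funLeft K _ Fin.succ v) - formAct K (v 0) (funLeft K _ Fin.succ u) +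
        formProduct K (funLeft K _ Fin.succ u) (funLeft K _ Fin.succ v)))
    (fun u u' v => by ext1 i; refine Fin.cases ?_ (fun i => ?_) i <;> simp; module)
    (fun c u v => by ext1 i; refine Fin.cases ?_ (fun i => ?_) i <;> simp; module)
    (fun u v v' => by ext1 i; refine Fin.cases ?_ (fun i => ?_) i <;> simp; module)
    (fun c u v => by ext1 i; refine Fin.cases ?_ (fun i => ?_) i <;> simp; module)

variable {K}

lemma formProduct_apply (x y : Fin 4 → MvPolynomial (Fin 2) K) :
    formProduct K x y =
      ![0, 0, transvectant 3 (x 1) (y 1),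
        transvectant 3 (x 0) (y 0) + (transvectant 4 (x 0) (y 1) - transvectant 4 (y 0) (x 1)) +
          (transvectant 5 (x 1) (y 2) - transvectant 5 (y 1) (x 2))] := rfl

lemma formAct_apply (a : MvPolynomial (Fin 2) K) (x : Fin 4 → MvPolynomial (Fin 2) K)
    (i : Fin 4) : formAct K a x i = transvectant 1 a (x i) := rfl

lemma formBracket_apply (u v : Fin 5 → MvPolynomial (Fin 2) K) :
    formBracket K u v =
      ![transvectant 1 (u 0) (v 0),
        transvectant 1 (u 0) (v 1) - transvectant 1 (v 0) (u 1),
        transvectant 1 (u 0) (v 2) - transvectant 1 (v 0) (u 2),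
        transvectant 1 (u 0) (v 3) - transvectant 1 (v 0) (u 3) + transvectant 3 (u 2) (v 2),
        transvectant 1 (u 0) (v 4) - transvectant 1 (v 0) (u 4) +
          (transvectant 3 (u 1) (v 1) + (transvectant 4 (u 1) (v 2) - transvectant 4 (v 1) (u 2)) +
            (transvectant 5 (u 2) (v 3) - transvectant 5 (v 2) (u 3)))] := by
  ext1 i
  match i with
  | 1 => exact add_zero _
  | 2 => exact add_zero _
  | 0 => rfl
  | 3 => rfl
  | 4 => rfl

lemma formBracket_zero (u v : Fin 5 → MvPolynomial (Fin 2) K) :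
    formBracket K u v 0 = transvectant 1 (u 0) (v 0) := rfl

lemma funLeft_succ_formBracket (u v : Fin 5 → MvPolynomial (Fin 2) K) :
    funLeft K _ Fin.succ (formBracket K u v) =
      formAct K (u 0) (funLeft K _ Fin.succ v) - formAct K (v 0) (funLeft K _ Fin.succ u) +
        formProduct K (funLeft K _ Fin.succ u) (funLeft K _ Fin.succ v) := rfl

lemma transvectant_swap_of_odd {k : ℕ} (hk : Odd k) (p q : MvPolynomial (Fin 2) K) :
    transvectant k q p = -transvectant k p q := by
  rw [transvectant_swap, hk.neg_one_pow, neg_one_smul]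

lemma formProduct_swap (x y : Fin 4 → MvPolynomial (Fin 2) K) :
    formProduct K y x = -formProduct K x y := by
  have swap (p q : MvPolynomial (Fin 2) K) : transvectant 3 q p = -transvectant 3 p q :=
    transvectant_swap_of_odd (by decide) p q
  ext1 i
  fin_cases i
  · simp [formProduct_apply]
  · simp [formProduct_apply]
  · simp [formProduct_apply, swap (x 1)]
  · simp [formProduct_apply, swap (x 0)]
    abel

lemma formProduct_cyclic {K : Type*} [Field K] [CharZero K]
    {x y z : Fin 4 → MvPolynomial (Fin 2) K} (hx : (x 1).IsHomogeneous 6)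
    (hy : (y 1).IsHomogeneous 6) (hz : (z 1).IsHomogeneous 6) :
    formProduct K x (formProduct K y z) + formProduct K y (formProduct K z x) +
      formProduct K z (formProduct K x y) = 0 := by
  ext1 i
  fin_cases i <;> simp [formProduct_apply, transvectant_five_three_cyclic hx hy hz]

lemma formAct_formAct {a : MvPolynomial (Fin 2) K} (ha : a.IsHomogeneous 2)
    (b : MvPolynomial (Fin 2) K) (x : Fin 4 → MvPolynomial (Fin 2) K) :
    formAct K a (formAct K b x) = formAct K (transvectant 1 a b) x + formAct K b (formAct K a x) :=
  funext fun i => transvectant_one_transvectant 1 ha b (x i)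

lemma formAct_formProduct {a : MvPolynomial (Fin 2) K} (ha : a.IsHomogeneous 2)
    (x y : Fin 4 → MvPolynomial (Fin 2) K) :
    formAct K a (formProduct K x y) =
      formProduct K (formAct K a x) y + formProduct K x (formAct K a y) := by
  ext1 i
  fin_cases i <;> simp [formProduct_apply, formAct_apply, transvectant_one_transvectant _ ha]
  abel

lemma formBracket_ext {u v : Fin 5 → MvPolynomial (Fin 2) K} (h₀ : u 0 = v 0)
    (h : funLeft K _ Fin.succ u = funLeft K _ Fin.succ v) : u = v :=
  funext (Fin.cases h₀ (congrFun h))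

lemma formBracket_swap (u v : Fin 5 → MvPolynomial (Fin 2) K) :
    formBracket K v u = -formBracket K u v := by
  refine formBracket_ext (transvectant_swap_of_odd odd_one (u 0) (v 0)) ?_
  rw [map_neg, funLeft_succ_formBracket, funLeft_succ_formBracket, formProduct_swap]
  abel

lemma formBracket_leibniz {K : Type*} [Field K] [CharZero K]
    {u v w : Fin 5 → MvPolynomial (Fin 2) K} (hu : ∀ i, (u i).IsHomogeneous (formDegree i))
    (hv : ∀ i, (v i).IsHomogeneous (formDegree i)) (hw : ∀ i, (w i).IsHomogeneous (formDegree i)) :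
    formBracket K u (formBracket K v w) =
      formBracket K (formBracket K u v) w + formBracket K v (formBracket K u w) := by
  refine formBracket_ext (transvectant_one_transvectant 1 (hu 0) (v 0) (w 0)) ?_
  have cyclic := formProduct_cyclic (x := funLeft K _ Fin.succ u) (y := funLeft K _ Fin.succ v)
    (z := funLeft K _ Fin.succ w) (hu 2) (hv 2) (hw 2)
  rw [map_add]
  simp only [funLeft_succ_formBracket, formBracket_zero]
  generalize funLeft K _ Fin.succ u = x at *
  generalize funLeft K _ Fin.succ v = y at *
  generalize funLeft K _ Fin.succ w = z at *
  simp only [map_add, map_sub, LinearMap.add_apply, LinearMap.sub_apply,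
    formAct_formAct (hu 0) (v 0) z, formAct_formAct (hu 0) (w 0) y, formAct_formAct (hv 0) (w 0) x,
    formAct_formProduct (hu 0), formAct_formProduct (hv 0), formAct_formProduct (hw 0)]
  rw [formProduct_swap x z, map_neg] at cyclic
  rw [formProduct_swap y (formAct K (w 0) x), formProduct_swap z (formProduct K x y)]
  linear_combination (norm := module) cyclic

lemma formBracket_single_one_one (p q : MvPolynomial (Fin 2) K) :
    formBracket K (Pi.single 1 p) (Pi.single 1 q) = Pi.single 4 (transvectant 3 p q) := by
  ext1 i
  fin_cases i <;> simp [formBracket_apply]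

lemma formBracket_single_one_two (p q : MvPolynomial (Fin 2) K) :
    formBracket K (Pi.single 1 p) (Pi.single 2 q) = Pi.single 4 (transvectant 4 p q) := by
  ext1 i
  fin_cases i <;> simp [formBracket_apply]

lemma formBracket_single_two_two (p q : MvPolynomial (Fin 2) K) :
    formBracket K (Pi.single 2 p) (Pi.single 2 q) = Pi.single 3 (transvectant 3 p q) := by
  ext1 i
  fin_cases i <;> simp [formBracket_apply]

lemma formBracket_single_two_three (p q : MvPolynomial (Fin 2) K) :
    formBracket K (Pi.single 2 p) (Pi.single 3 q) = Pi.single 4 (transvectant 5 p q) := by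
  ext1 i
  fin_cases i <;> simp [formBracket_apply]

lemma isHomogeneous_formBracket {u v : Fin 5 → MvPolynomial (Fin 2) K}
    (hu : ∀ i, (u i).IsHomogeneous (formDegree i)) (hv : ∀ i, (v i).IsHomogeneous (formDegree i))
    (i : Fin 5) : (formBracket K u v i).IsHomogeneous (formDegree i) := by
  have act {u v : Fin 5 → MvPolynomial (Fin 2) K}
      (hu : ∀ i, (u i).IsHomogeneous (formDegree i))
      (hv : ∀ i, (v i).IsHomogeneous (formDegree i)) {i n} (hi : formDegree i = n + 1) :
      (transvectant 1 (u 0) (v i)).IsHomogeneous (1 + n) :=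
    isHomogeneous_transvectant (hu 0) (hi ▸ hv i)
  rw [formBracket_apply]
  match i with
  | 0 => exact act hu hv (n := 1) rfl
  | 1 => exact (act hu hv (n := 3) rfl).sub (act hv hu (n := 3) rfl)
  | 2 => exact (act hu hv (n := 5) rfl).sub (act hv hu (n := 5) rfl)
  | 3 =>
    exact ((act hu hv (n := 5) rfl).sub (act hv hu (n := 5) rfl)).add
      (isHomogeneous_transvectant (m := 3) (n := 3) (hu 2) (hv 2))
  | 4 =>
    have product_Y_Y := isHomogeneous_transvectant (k := 3) (m := 1) (n := 1) (hu 1) (hv 1)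
    have product_Y_P {u v : Fin 5 → MvPolynomial (Fin 2) K}
        (hu : ∀ i, (u i).IsHomogeneous (formDegree i))
        (hv : ∀ i, (v i).IsHomogeneous (formDegree i)) :=
      isHomogeneous_transvectant (k := 4) (m := 0) (n := 2) (hu 1) (hv 2)
    have product_P_Q {u v : Fin 5 → MvPolynomial (Fin 2) K}
        (hu : ∀ i, (u i).IsHomogeneous (formDegree i))
        (hv : ∀ i, (v i).IsHomogeneous (formDegree i)) :=
      isHomogeneous_transvectant (k := 5) (m := 1) (n := 1) (hu 2) (hv 3)
    exact ((act hu hv (n := 1) rfl).sub (act hv hu (n := 1) rfl)).add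
      ((product_Y_Y.add ((product_Y_P hu hv).sub (product_Y_P hv hu))).add
        ((product_P_Q hu hv).sub (product_P_Q hv hu)))

end FormBracket

section FormAlgebra

/-- The underlying space of a semidirect product of `sl₂`, realised as the quadratic forms, with a
nilpotent Lie algebra of binary forms: it is the sum of spaces of binary forms denoted
`S, Y, P, Q, X`, of degrees `2, 4, 6, 6, 2`. -/
def FormAlgebra (K : Type*) [CommRing K] : Type _ := (i : Fin 5) → BinaryForm K (formDegree i)

namespace FormAlgebra

section CommRing

variable {K : Type*} [CommRing K]

noncomputable instance : AddCommGroup (FormAlgebra K) :=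
  inferInstanceAs (AddCommGroup ((i : Fin 5) → BinaryForm K (formDegree i)))

noncomputable instance : Module K (FormAlgebra K) :=
  inferInstanceAs (Module K ((i : Fin 5) → BinaryForm K (formDegree i)))

/-- The inclusion of `FormAlgebra` in the families of polynomials. -/
noncomputable def toPoly : FormAlgebra K →ₗ[K] (Fin 5 → MvPolynomial (Fin 2) K) :=
  LinearMap.pi fun i => (BinaryForm K (formDegree i)).subtype ∘ₗ LinearMap.proj i

/-- The inclusion of a component of `FormAlgebra`. -/
noncomputable def single (i : Fin 5) : BinaryForm K (formDegree i) →ₗ[K] FormAlgebra K :=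
  LinearMap.single K (fun i => BinaryForm K (formDegree i)) i

lemma toPoly_apply (u : FormAlgebra K) (i : Fin 5) : toPoly u i = u i := rfl

lemma isHomogeneous_toPoly (u : FormAlgebra K) (i : Fin 5) :
    (toPoly u i).IsHomogeneous (formDegree i) := (u i).2

lemma toPoly_injective : Function.Injective (toPoly (K := K)) :=
  fun _ _ h => funext fun i => Subtype.ext (congrFun h i)

lemma toPoly_single (i : Fin 5) (p : BinaryForm K (formDegree i)) :
    toPoly (single i p) = Pi.single i (p : MvPolynomial (Fin 2) K) :=
  funext fun j => by
    rcases eq_or_ne j i with rfl | h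
    · rw [Pi.single_eq_same]
      exact congrArg Subtype.val (Pi.single_eq_same (M := fun i => BinaryForm K (formDegree i)) j p)
    · rw [Pi.single_eq_of_ne h]
      exact congrArg Subtype.val
        (Pi.single_eq_of_ne (M := fun i => BinaryForm K (formDegree i)) h p)

lemma single_injective (i : Fin 5) : Function.Injective (single (K := K) i) :=
  Pi.single_injective (M := fun i => BinaryForm K (formDegree i)) i

/-- The inclusion of the quadratic forms as the component `S`. It is `single 0`, with a domain that
does not mention `formDegree`. -/
noncomputable def quad : BinaryForm K 2 →ₗ[K] FormAlgebra K := single 0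

lemma toPoly_quad (a : BinaryForm K 2) :
    toPoly (quad a) = Pi.single 0 (a : MvPolynomial (Fin 2) K) := toPoly_single 0 a

lemma linearMap_ext {M : Type*} [AddCommGroup M] [Module K M] {φ ψ : FormAlgebra K →ₗ[K] M}
    (h : ∀ i p, φ (single i p) = ψ (single i p)) : φ = ψ :=
  LinearMap.pi_ext' (φ := fun i => BinaryForm K (formDegree i)) fun i => LinearMap.ext (h i)

instance [IsNoetherianRing K] : Module.Finite K (FormAlgebra K) :=
  have (n : ℕ) : Module.Finite K (BinaryForm K n) :=
    Module.Finite.iff_fg.2 (homogeneousSubmodule_fg (Fin 2) K n)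
  inferInstanceAs (Module.Finite K ((i : Fin 5) → BinaryForm K (formDegree i)))

noncomputable instance : Bracket (FormAlgebra K) (FormAlgebra K) :=
  ⟨fun u v i => ⟨formBracket K (toPoly u) (toPoly v) i,
    isHomogeneous_formBracket (isHomogeneous_toPoly u) (isHomogeneous_toPoly v) i⟩⟩

lemma toPoly_lie (u v : FormAlgebra K) :
    toPoly ⁅u, v⁆ = formBracket K (toPoly u) (toPoly v) := rfl

lemma quad_lie (a : BinaryForm K 2) (u : FormAlgebra K) :
    ⁅quad a, u⁆ = fun i => quadAct a (u i) := by
  refine toPoly_injective (formBracket_ext ?_ ?_)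
  · rw [toPoly_lie, formBracket_zero, toPoly_quad, Pi.single_eq_same]
    rfl
  · have funLeft_quad : LinearMap.funLeft K _ Fin.succ (toPoly (quad a)) = 0 := by
      rw [toPoly_quad]
      exact funext fun i => Pi.single_eq_of_ne i.succ_ne_zero (a : MvPolynomial (Fin 2) K)
    rw [toPoly_lie, funLeft_succ_formBracket, funLeft_quad, map_zero, map_zero,
      LinearMap.zero_apply, sub_zero, add_zero, toPoly_quad, Pi.single_eq_same]
    rfl

lemma quad_lie_apply (a : BinaryForm K 2) (u : FormAlgebra K) (i : Fin 5) :
    ⁅quad a, u⁆ i = quadAct a (u i) := congrFun (quad_lie a u) i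

lemma quad_lie_single (a : BinaryForm K 2) (i : Fin 5) (p : BinaryForm K (formDegree i)) :
    ⁅quad a, single i p⁆ = single i (quadAct a p) := by
  rw [quad_lie]
  exact funext fun j => Pi.apply_single (fun _ => quadAct a) (fun _ => map_zero _) i p j

lemma quad_lie_quad (a b : BinaryForm K 2) : ⁅quad a, quad b⁆ = quad (quadAct a b) :=
  quad_lie_single a 0 b

lemma lie_single_four (u : FormAlgebra K) (p : BinaryForm K (formDegree 4)) :
    ⁅u, single 4 p⁆ = single 4 (quadAct (u 0) p) := by
  refine toPoly_injective ?_
  rw [toPoly_lie, toPoly_single, toPoly_single]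
  change formBracket K (toPoly u) (Pi.single 4 ↑p) = Pi.single 4 (transvectant 1 (toPoly u 0) ↑p)
  ext1 i
  fin_cases i <;> simp [formBracket_apply]

end CommRing

variable {K : Type*} [Field K]

lemma finrank_eq : Module.finrank K (FormAlgebra K) = 25 := by
  have (n : ℕ) : Module.Finite K (BinaryForm K n) :=
    Module.Finite.iff_fg.2 (homogeneousSubmodule_fg (Fin 2) K n)
  have finrank_pi : Module.finrank K (FormAlgebra K) =
      ∑ i, Module.finrank K (BinaryForm K (formDegree i)) := Module.finrank_pi_fintype K
  simp only [finrank_pi, finrank_homogeneousSubmodule_fin_two]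
  rfl

variable [CharZero K]

noncomputable instance : LieRing (FormAlgebra K) where
  add_lie u v w := toPoly_injective (by simp [toPoly_lie])
  lie_add u v w := toPoly_injective (by simp [toPoly_lie])
  lie_self u := toPoly_injective <| by
    rw [toPoly_lie, map_zero]
    exact self_eq_neg.1 (formBracket_swap _ _)
  leibniz_lie u v w := toPoly_injective <| by
    simpa only [map_add, toPoly_lie] using formBracket_leibniz (isHomogeneous_toPoly u)
      (isHomogeneous_toPoly v) (isHomogeneous_toPoly w)

noncomputable instance : LieAlgebra K (FormAlgebra K) where
  lie_smul c u v := toPoly_injective (by simp [toPoly_lie])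

lemma isSl2Triple_quad : IsSl2Triple (quad (quadH K)) (quad (quadE K)) (quad (quadF K)) where
  h_ne_zero := (map_ne_zero_iff _ (single_injective 0)).2 quadH_ne_zero
  lie_e_f := by rw [quad_lie_quad, quadAct_quadE_quadF]
  lie_h_e_nsmul := by rw [quad_lie_quad, quadAct_quadH_quadE, map_nsmul]
  lie_h_f_nsmul := by rw [quad_lie_quad, quadAct_quadH_quadF, map_neg, map_nsmul]

lemma sl2Casimir_quad_apply (u : FormAlgebra K) (i : Fin 5) :
    sl2Casimir (quad (quadH K)) (quad (quadE K)) (quad (quadF K)) u i =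
      (formDegree i * (formDegree i + 2)) • u i := by
  rw [← quadAct_casimir]
  simp only [← quad_lie_apply]
  rfl

lemma bijective_sl2Casimir_quad : Function.Bijective
    (sl2Casimir (quad (quadH K)) (quad (quadE K)) (quad (quadF K)) :
      FormAlgebra K → FormAlgebra K) := by
  have eigenvalue_ne_zero (i : Fin 5) : ((formDegree i * (formDegree i + 2) : ℕ) : K) ≠ 0 :=
    Nat.cast_ne_zero.2 (by fin_cases i <;> decide)
  refine ⟨fun u v huv => funext fun i => ?_, fun u => ?_⟩
  · have huv_i := congrFun huv i
    rw [sl2Casimir_quad_apply, sl2Casimir_quad_apply, ← Nat.cast_smul_eq_nsmul K,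
      ← Nat.cast_smul_eq_nsmul K] at huv_i
    exact smul_right_injective _ (eigenvalue_ne_zero i) huv_i
  · refine ⟨fun i => ((formDegree i * (formDegree i + 2) : ℕ) : K)⁻¹ • u i, funext fun i => ?_⟩
    refine (sl2Casimir_quad_apply _ i).trans ?_
    rw [← Nat.cast_smul_eq_nsmul K]
    exact smul_inv_smul₀ (eigenvalue_ne_zero i) (u i)

lemma center_eq_bot : LieAlgebra.center K (FormAlgebra K) = ⊥ :=
  center_eq_bot_of_injective_sl2Casimir K bijective_sl2Casimir_quad.injective

lemma lie_top_eq_top :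
    ⁅(⊤ : LieIdeal K (FormAlgebra K)), (⊤ : LieIdeal K (FormAlgebra K))⁆ = ⊤ :=
  lie_top_eq_top_of_surjective_sl2Casimir K bijective_sl2Casimir_quad.surjective

variable {D : LieDerivation K (FormAlgebra K) (FormAlgebra K)}

lemma derivation_quad_eq_zero (hE : D (quad (quadE K)) = 0) (hF : D (quad (quadF K)) = 0)
    (a : BinaryForm K 2) : D (quad a) = 0 := by
  have ker_eq_top : LinearMap.ker ((D : FormAlgebra K →ₗ[K] FormAlgebra K) ∘ₗ quad) = ⊤ := by
    refine eq_top_of_quadAct_quadF_mem ?_ fun p hp => ?_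
    · have highest : highestForm K 2 = (2 : K) • quadE K := by
        refine Subtype.ext ?_
        rw [highestForm, quadE, Submodule.coe_smul, smul_eq_C_mul, ← mul_assoc, ← C_mul,
          mul_inv_cancel₀ two_ne_zero, C_1, one_mul]
      rw [highest]
      exact Submodule.smul_mem _ _ hE
    · have hp : D (quad p) = 0 := hp
      change D (quad (quadAct (quadF K) p)) = 0
      rw [← quad_lie_quad, D.apply_lie_eq_add, hF, hp, lie_zero, zero_lie, add_zero]
  exact LinearMap.congr_fun (LinearMap.ker_eq_top.1 ker_eq_top) a

/-- The linear map `φ` is given by the `5 × 5` matrix `c` of scalars: from component `i` to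
component `j` of `FormAlgebra` it is multiplication by `c i j`, which vanishes when these components
consist of forms of different degrees. -/
structure IsScalarMatrix (φ : FormAlgebra K →ₗ[K] FormAlgebra K) (c : Fin 5 → Fin 5 → K) :
    Prop where
  eq_zero_of_ne : ∀ i j, formDegree i ≠ formDegree j → c i j = 0
  apply_single : ∀ i p, toPoly (φ (single i p)) = fun j => c i j • (p : MvPolynomial (Fin 2) K)

namespace IsScalarMatrix

variable {c : Fin 5 → Fin 5 → K}

lemma smul_eq_of_formBracket_single (hD : IsScalarMatrix D.toLinearMap c)
    {i j k : Fin 5} {p q r : MvPolynomial (Fin 2) K} (hp : p.IsHomogeneous (formDegree i))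
    (hq : q.IsHomogeneous (formDegree j))
    (hr : formBracket K (Pi.single i p) (Pi.single j q) = Pi.single k r) :
    (fun l => c k l • r) =
      formBracket K (Pi.single i p) (fun l => c j l • q) +
        formBracket K (fun l => c i l • p) (Pi.single j q) := by
  let p' : BinaryForm K (formDegree i) := ⟨p, hp⟩
  let q' : BinaryForm K (formDegree j) := ⟨q, hq⟩
  have toPoly_bracket : toPoly ⁅single i p', single j q'⁆ = Pi.single k r := by
    rw [toPoly_lie, toPoly_single, toPoly_single, hr]
  have coe_bracket :
      ((⁅single i p', single j q'⁆ : FormAlgebra K) k : MvPolynomial (Fin 2) K) = r := by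
    rw [← toPoly_apply, toPoly_bracket, Pi.single_eq_same]
  have bracket_eq : ⁅single i p', single j q'⁆ = single k (⁅single i p', single j q'⁆ k) :=
    toPoly_injective (by rw [toPoly_single, coe_bracket, toPoly_bracket])
  have hD_apply (i p) : toPoly (D (single i p)) = fun j => c i j • (p : MvPolynomial (Fin 2) K) :=
    hD.apply_single i p
  have leibniz := congrArg toPoly (D.apply_lie_eq_add (single i p') (single j q'))
  rwa [bracket_eq, hD_apply, coe_bracket, map_add, toPoly_lie, toPoly_lie, hD_apply, hD_apply,
    toPoly_single, toPoly_single] at leibniz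

lemma entry_four_zero_eq_zero (hD : IsScalarMatrix D.toLinearMap c) : c 4 0 = 0 := by
  obtain ⟨p, q, hp, hq, hpq⟩ := exists_transvectant_ne_zero (R := K) 3 1 1
  have relation := hD.smul_eq_of_formBracket_single hp hq (formBracket_single_one_one p q)
  have relation_S := congrFun relation 0
  have c10 : c 1 0 = 0 := hD.eq_zero_of_ne 1 0 (by decide)
  simpa [formBracket_apply, c10, hpq] using relation_S

lemma entry_four_four_eq_one_one_add_one_one (hD : IsScalarMatrix D.toLinearMap c) :
    c 4 4 = c 1 1 + c 1 1 := by
  obtain ⟨p, q, hp, hq, hpq⟩ := exists_transvectant_ne_zero (R := K) 3 1 1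
  have relation := hD.smul_eq_of_formBracket_single hp hq (formBracket_single_one_one p q)
  have relation_X := congrFun relation 4
  have c12 : c 1 2 = 0 := hD.eq_zero_of_ne 1 2 (by decide)
  simpa [formBracket_apply, c12, hpq, ← add_smul] using relation_X

lemma entry_four_four_eq_one_one_add_two_two (hD : IsScalarMatrix D.toLinearMap c) :
    c 4 4 = c 1 1 + c 2 2 := by
  obtain ⟨p, q, hp, hq, hpq⟩ := exists_transvectant_ne_zero (R := K) 4 0 2
  have relation := hD.smul_eq_of_formBracket_single hp hq (formBracket_single_one_two p q)
  have relation_X := congrFun relation 4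
  have c13 : c 1 3 = 0 := hD.eq_zero_of_ne 1 3 (by decide)
  have c21 : c 2 1 = 0 := hD.eq_zero_of_ne 2 1 (by decide)
  simpa [formBracket_apply, c13, c21, hpq, ← add_smul, add_comm] using relation_X

lemma entry_three_two_eq_zero (hD : IsScalarMatrix D.toLinearMap c) : c 3 2 = 0 := by
  obtain ⟨p, q, hp, hq, hpq⟩ := exists_transvectant_ne_zero (R := K) 3 3 3
  have relation := hD.smul_eq_of_formBracket_single hp hq (formBracket_single_two_two p q)
  have relation_P := congrFun relation 2
  have c20 : c 2 0 = 0 := hD.eq_zero_of_ne 2 0 (by decide)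
  simpa [formBracket_apply, c20, hpq] using relation_P

lemma entry_three_three_eq_two_two_add_two_two (hD : IsScalarMatrix D.toLinearMap c) :
    c 3 3 = c 2 2 + c 2 2 := by
  obtain ⟨p, q, hp, hq, hpq⟩ := exists_transvectant_ne_zero (R := K) 3 3 3
  have relation := hD.smul_eq_of_formBracket_single hp hq (formBracket_single_two_two p q)
  have relation_Q := congrFun relation 3
  simpa [formBracket_apply, hpq, ← add_smul] using relation_Q

lemma entry_two_three_eq_zero (hD : IsScalarMatrix D.toLinearMap c) : c 2 3 = 0 := by
  obtain ⟨p, q, hp, hq, hpq⟩ := exists_transvectant_ne_zero (R := K) 5 1 1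
  have relation := hD.smul_eq_of_formBracket_single hp hq (formBracket_single_two_two p q)
  have relation_X := congrFun relation 4
  have c21 : c 2 1 = 0 := hD.eq_zero_of_ne 2 1 (by decide)
  have c34 : c 3 4 = 0 := hD.eq_zero_of_ne 3 4 (by decide)
  have swap : transvectant 5 q p = -transvectant 5 p q := transvectant_swap_of_odd (by decide) p q
  simpa [formBracket_apply, c21, c34, swap, hpq, ← add_smul] using relation_X.symm

lemma entry_four_four_eq_two_two_add_three_three (hD : IsScalarMatrix D.toLinearMap c) :
    c 4 4 = c 2 2 + c 3 3 := by
  obtain ⟨p, q, hp, hq, hpq⟩ := exists_transvectant_ne_zero (R := K) 5 1 1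
  have relation := hD.smul_eq_of_formBracket_single hp hq (formBracket_single_two_three p q)
  have relation_X := congrFun relation 4
  have c31 : c 3 1 = 0 := hD.eq_zero_of_ne 3 1 (by decide)
  simpa [formBracket_apply, c31, hpq, ← add_smul, add_comm] using relation_X

lemma entry_eq_zero (hD : IsScalarMatrix D.toLinearMap c) {i : Fin 5} (hi : i ≠ 0) (j : Fin 5) :
    c i j = 0 := by
  have c40 := hD.entry_four_zero_eq_zero
  have c32 := hD.entry_three_two_eq_zero
  have c23 := hD.entry_two_three_eq_zero
  have c33 := hD.entry_three_three_eq_two_two_add_two_two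
  have c44 := hD.entry_four_four_eq_one_one_add_one_one
  have c44_Y_P := hD.entry_four_four_eq_one_one_add_two_two
  have c44_P_Q := hD.entry_four_four_eq_two_two_add_three_three
  have c22 : c 2 2 = 0 := by linear_combination 2 * c44_Y_P - c44 - c44_P_Q - c33
  have c11 : c 1 1 = 0 := by linear_combination c44_Y_P - c44 + c22
  rw [c11, add_zero] at c44
  rw [c22, add_zero] at c33
  by_cases hij : formDegree i = formDegree j
  · fin_cases i <;> fin_cases j <;>
      first | assumption | exact absurd rfl hi | exact absurd hij (by decide)
  · exact hD.eq_zero_of_ne i j hij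

lemma eq_zero (hD : IsScalarMatrix D.toLinearMap c) (hD_quad : ∀ a, D (quad a) = 0) :
    D = 0 := by
  have D_eq_zero : D.toLinearMap = 0 := by
    refine linearMap_ext fun i p => ?_
    rcases eq_or_ne i 0 with rfl | hi
    · exact hD_quad p
    · refine toPoly_injective ((hD.apply_single i p).trans (funext fun j => ?_))
      rw [hD.entry_eq_zero hi, zero_smul]
      rfl
  exact LieDerivation.ext (LinearMap.congr_fun D_eq_zero)

end IsScalarMatrix

lemma exists_isScalarMatrix (hD : ∀ a, D (quad a) = 0) :
    ∃ c, IsScalarMatrix D.toLinearMap c := by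
  let φ (i j) : BinaryForm K (formDegree i) →ₗ[K] BinaryForm K (formDegree j) :=
    LinearMap.proj (φ := fun j => BinaryForm K (formDegree j)) j ∘ₗ D.toLinearMap ∘ₗ single i
  have φ_quadAct (i j a p) : φ i j (quadAct a p) = quadAct a (φ i j p) := by
    change D (single i (quadAct a p)) j = quadAct a (D (single i p) j)
    rw [← quad_lie_single, D.apply_lie_eq_add, hD, zero_lie, add_zero, quad_lie_apply]
  choose c c_eq_zero φ_eq_smul using fun i j => exists_eq_smul_of_quadAct_comm (φ_quadAct i j)
  exact ⟨c, c_eq_zero, fun i p => funext fun j => φ_eq_smul i j p⟩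

lemma exists_derivation_eq_lie (D : LieDerivation K (FormAlgebra K) (FormAlgebra K)) :
    ∃ u : FormAlgebra K, ∀ v, D v = ⁅u, v⁆ := by
  obtain ⟨m, hE, hF⟩ := exists_derivation_eq_lie_of_bijective_sl2Casimir isSl2Triple_quad
    bijective_sl2Casimir_quad D
  let D' := D - LieDerivation.inner K (FormAlgebra K) (FormAlgebra K) m
  have D'_quad : ∀ a, D' (quad a) = 0 :=
    derivation_quad_eq_zero (sub_eq_zero.2 hE) (sub_eq_zero.2 hF)
  obtain ⟨c, hc⟩ := exists_isScalarMatrix D'_quad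
  have D_eq_inner : D = LieDerivation.inner K (FormAlgebra K) (FormAlgebra K) m :=
    sub_eq_zero.1 (hc.eq_zero D'_quad)
  refine ⟨-m, fun v => ?_⟩
  rw [D_eq_inner, LieDerivation.inner_apply_apply]
  exact ((neg_lie m v).trans (lie_skew v m)).symm

/-- The component `X` as an ideal; it is abelian, hence contained in the radical. -/
noncomputable def idealX (K : Type*) [Field K] [CharZero K] : LieIdeal K (FormAlgebra K) where
  __ := LinearMap.range (single 4 : BinaryForm K (formDegree 4) →ₗ[K] FormAlgebra K)
  lie_mem := by
    rintro u _ ⟨p, rfl⟩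
    exact ⟨quadAct (u 0) p, (lie_single_four u p).symm⟩

lemma isLieAbelian_idealX : IsLieAbelian (idealX K) := by
  refine ⟨?_⟩
  rintro ⟨_, p, rfl⟩ ⟨_, q, rfl⟩
  refine Subtype.ext ?_
  have quadAct_zero : quadAct (0 : BinaryForm K 2) q = 0 :=
    Subtype.ext (LinearMap.map_zero₂ (transvectant 1) (q : MvPolynomial (Fin 2) K))
  exact (lie_single_four _ q).trans ((congrArg (single 4) quadAct_zero).trans (map_zero _))

lemma idealX_ne_bot : idealX K ≠ ⊥ := by
  intro h
  have quadH_mem : single 4 (quadH K) ∈ idealX K := ⟨quadH K, rfl⟩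
  rw [h, LieSubmodule.mem_bot] at quadH_mem
  exact quadH_ne_zero ((map_eq_zero_iff _ (single_injective 4)).1 quadH_mem)

lemma radical_ne_bot : LieAlgebra.radical K (FormAlgebra K) ≠ ⊥ := fun h =>
  idealX_ne_bot ((LieAlgebra.hasTrivialRadical_iff_no_abelian_ideals K (FormAlgebra K)).1 ⟨h⟩ _
    isLieAbelian_idealX)

end FormAlgebra

end FormAlgebra

theorem stmt19_general.{u} (K : Type u) [Field K] [CharZero K] :
    ∃ (g : Type u) (_ : LieRing g) (_ : LieAlgebra K g) (_ : FiniteDimensional K g),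
      Module.finrank K g = 25 ∧
        (LieAlgebra.center K g = ⊥ ∧ ⁅(⊤ : LieIdeal K g), (⊤ : LieIdeal K g)⁆ = ⊤ ∧
          ∀ D : LieDerivation K g g, ∃ x : g, ∀ y, D y = ⁅x, y⁆) ∧
        LieAlgebra.radical K g ≠ ⊥ :=
  ⟨FormAlgebra K, inferInstance, inferInstance, inferInstance, FormAlgebra.finrank_eq,
    ⟨FormAlgebra.center_eq_bot, FormAlgebra.lie_top_eq_top,
      FormAlgebra.exists_derivation_eq_lie⟩,
    FormAlgebra.radical_ne_bot⟩

/-- there exists a 25-dimensional complex Lie algebra that is sympathetic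
but not semisimple. -/
theorem stmt19 :
    ∃ (g : Type) (_ : LieRing g) (_ : LieAlgebra ℂ g) (_ : FiniteDimensional ℂ g),
      Module.finrank ℂ g = 25 ∧ Symp.IsSympathetic g ∧ LieAlgebra.radical ℂ g ≠ ⊥ :=
  stmt19_general ℂ
end
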